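/- arXiv:2504.18976 — 2 statements merged into one kernel-verified Lean document; each statement's English description precedes it below -/
import Mathlib

section
/- Let n ≥ 1, let 0 < ε < 1, 0 < α < 1 − ε and T > 1 + α − ε. There exists a constant C > 0 such that every classical solution u of the wave equation on [0,T]×closure(Ω), where Ω is the open unit ball of ℝⁿ, with Dirichlet boundary conditions and initial data supported in the closed ball of radius α, satisfies ∫_Ω ( |∇ₓu(0,x)|² + (∂ₜu(0,x))² ) dx ≤ C ∫_0^T ∫_{1−ε<|x|<1} (∂ₜu(t,x))² dx dt. -/
open MeasureTheory

/-- Partial derivative in time of a function of (time, space). -/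
noncomputable def pdt {n : ℕ} (u : ℝ → EuclideanSpace ℝ (Fin n) → ℝ) :
    ℝ → EuclideanSpace ℝ (Fin n) → ℝ := fun t x => deriv (fun s => u s x) t

/-- The Euclidean Laplacian of `f` at `x`, as the sum of the second derivatives
along the coordinate directions. -/
noncomputable def lap {n : ℕ} (f : EuclideanSpace ℝ (Fin n) → ℝ)
    (x : EuclideanSpace ℝ (Fin n)) : ℝ :=
  ∑ i, iteratedFDeriv ℝ 2 f x ![EuclideanSpace.single i 1, EuclideanSpace.single i 1]

/-!
Pair `v_tt = Δv` with the multiplier `φ (x · ∇v + ½(n - 1)v)`, where the cutoff `φ` equals `1` on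
the ball of radius `1 - ε` and is supported in a slightly larger ball of radius `b < 1`. Let `E` be
the conserved quantity `∫ (v_t² + |∇v|²)`. The virial identity bounds `½ T E` by two kinds of terms.
Those at the times `0` and `T` are at most `½ α E` and `½ b E`, up to multiples of integrals of `v²`
over the annulus, since `∇v(0)` is supported in the ball of radius `α` and `φ` in that of radius
`b`. The others live in the annulus, where equipartition bounds `∫ |∇v|²` by `∫ (v_t² + v²)`, and
`v(0) = 0` bounds `∫ v²` by `C ∫ v_t²`. As `T > α + b` once `b` is close to `1 - ε`, the energy
terms can be absorbed.
-/

namespace WaveObservability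

open Metric Set Filter Topology
open scoped InnerProductSpace NNReal

section ConvexBody

variable {V : Type*} [NormedAddCommGroup V] [NormedSpace ℝ V] {s : Set V}

lemma exists_mem_segment_inter_frontier (hs : IsClosed s) {x y : V} (hx : x ∈ s) (hy : y ∉ s) :
    (segment ℝ x y ∩ frontier s).Nonempty := by
  by_contra hempty
  have hcover : segment ℝ x y ⊆ interior s ∪ sᶜ := fun z hz => by
    by_contra hz'
    simp only [mem_union, mem_compl_iff, not_or, not_not] at hz'
    exact hempty ⟨z, hz, hs.frontier_eq ▸ ⟨hz'.2, hz'.1⟩⟩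
  have hxi : x ∈ interior s := (hcover (left_mem_segment ℝ x y)).resolve_right (not_not.2 hx)
  obtain ⟨z, -, hzi, hzc⟩ := (convex_segment x y).isPreconnected _ _ isOpen_interior
    hs.isOpen_compl hcover ⟨x, left_mem_segment ℝ x y, hxi⟩ ⟨y, right_mem_segment ℝ x y, hy⟩
  exact hzc (interior_subset hzi)

lemma lipschitzWith_indicator {F : Type*} [SeminormedAddCommGroup F] {f : V → F} {C : ℝ≥0}
    (hs : IsClosed s) (hf : LipschitzOnWith C f s) (h0 : ∀ x ∈ frontier s, f x = 0) :
    LipschitzWith C (s.indicator f) := by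
  have exit_bound : ∀ x ∈ s, ∀ y ∉ s, ‖f x‖ ≤ C * dist x y := fun x hx y hy => by
    obtain ⟨z, hz, hzs⟩ := exists_mem_segment_inter_frontier hs hx hy
    calc ‖f x‖ = dist (f x) (f z) := by rw [h0 z hzs, dist_zero_right]
      _ ≤ C * dist x z := hf.dist_le_mul x hx z (hs.frontier_subset hzs)
      _ ≤ C * dist x y := by
        gcongr
        linarith [dist_add_dist_of_mem_segment hz, dist_nonneg (x := z) (y := y)]
  refine LipschitzWith.of_dist_le_mul fun x y => ?_
  by_cases hx : x ∈ s <;> by_cases hy : y ∈ s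
  · rw [indicator_of_mem hx, indicator_of_mem hy]
    exact hf.dist_le_mul x hx y hy
  · rw [indicator_of_mem hx, indicator_of_notMem hy, dist_zero_right]
    exact exit_bound x hx y hy
  · rw [indicator_of_notMem hx, indicator_of_mem hy, dist_zero_left, dist_comm]
    exact exit_bound y hy x hx
  · rw [indicator_of_notMem hx, indicator_of_notMem hy, dist_self]
    positivity

/-- A convex body is a compact convex set with nonempty interior: up to its frontier, `C¹` functions
have well-defined derivatives and are Lipschitz, and its frontier is null. -/
structure IsConvexBody (s : Set V) : Prop where
  isCompact : IsCompact s
  convex : Convex ℝ s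
  interior_nonempty : (interior s).Nonempty

lemma isConvexBody_Icc {a b : ℝ} (hab : a < b) : IsConvexBody (Icc a b) where
  isCompact := isCompact_Icc
  convex := convex_Icc a b
  interior_nonempty := by simpa only [interior_Icc, nonempty_Ioo]

lemma isConvexBody_closedBall [ProperSpace V] (x : V) {r : ℝ} (hr : 0 < r) :
    IsConvexBody (closedBall x r) where
  isCompact := isCompact_closedBall x r
  convex := convex_closedBall x r
  interior_nonempty := ⟨x, ball_subset_interior_closedBall (mem_ball_self hr)⟩

namespace IsConvexBody

lemma uniqueDiffOn (hs : IsConvexBody s) : UniqueDiffOn ℝ s :=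
  uniqueDiffOn_convex hs.convex hs.interior_nonempty

lemma prod {W : Type*} [NormedAddCommGroup W] [NormedSpace ℝ W] {t : Set W}
    (hs : IsConvexBody s) (ht : IsConvexBody t) : IsConvexBody (s ×ˢ t) where
  isCompact := hs.isCompact.prod ht.isCompact
  convex := hs.convex.prod ht.convex
  interior_nonempty := by
    rw [interior_prod_eq]
    exact hs.interior_nonempty.prod ht.interior_nonempty

variable [MeasurableSpace V] [BorelSpace V] {μ : Measure V} [IsFiniteMeasureOnCompacts μ]
  {f g : V → ℝ}

lemma integrableOn_interior (hs : IsConvexBody s) (hf : ContinuousOn f s) :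
    IntegrableOn f (interior s) μ :=
  (hf.integrableOn_compact hs.isCompact).mono_set interior_subset

lemma setIntegral_mono (hs : IsConvexBody s) (hf : ContinuousOn f s) (hg : ContinuousOn g s)
    (hfg : ∀ x ∈ interior s, f x ≤ g x) :
    ∫ x in interior s, f x ∂μ ≤ ∫ x in interior s, g x ∂μ :=
  setIntegral_mono_on (hs.integrableOn_interior hf) (hs.integrableOn_interior hg)
    isOpen_interior.measurableSet hfg

lemma setIntegral_const_mul_add (hs : IsConvexBody s) (hf : ContinuousOn f s)
    (hg : ContinuousOn g s) (a b : ℝ) :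
    ∫ x in interior s, (a * f x + b * g x) ∂μ =
      a * ∫ x in interior s, f x ∂μ + b * ∫ x in interior s, g x ∂μ := by
  rw [integral_add ((hs.integrableOn_interior hf).const_mul a)
    ((hs.integrableOn_interior hg).const_mul b), integral_const_mul, integral_const_mul]

end IsConvexBody

end ConvexBody

section Divergence

variable {V : Type*} [NormedAddCommGroup V] [NormedSpace ℝ V] [FiniteDimensional ℝ V]
  [MeasurableSpace V] [BorelSpace V] (μ : Measure V) [μ.IsAddHaarMeasure]

lemma integral_lineDeriv_eq_zero {f : V → ℝ} {C : ℝ≥0} (hf : LipschitzWith C f)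
    (hfc : HasCompactSupport f) (v : V) : ∫ x, lineDeriv ℝ f x v ∂μ = 0 := by
  have hparts := LipschitzWith.integral_lineDeriv_mul_eq (μ := μ) (LipschitzWith.const (1 : ℝ))
    hf hfc (-v)
  simpa [lineDeriv] using hparts.symm

lemma IsConvexBody.setIntegral_fderiv_eq_zero {s : Set V} (hs : IsConvexBody s) {f : V → ℝ}
    (hf : ContDiffOn ℝ 1 f s) (h0 : ∀ x ∈ frontier s, f x = 0) (v : V) :
    ∫ x in interior s, fderiv ℝ f x v ∂μ = 0 := by
  have hsc : IsClosed s := hs.isCompact.isClosed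
  obtain ⟨C, hC⟩ := hf.exists_lipschitzOnWith one_ne_zero hs.convex hs.isCompact
  have hlip := lipschitzWith_indicator hsc hC h0
  have hcs : HasCompactSupport (s.indicator f) :=
    HasCompactSupport.of_support_subset_isCompact hs.isCompact support_indicator_subset
  rw [← integral_lineDeriv_eq_zero μ hlip hcs v,
    ← integral_indicator isOpen_interior.measurableSet]
  refine integral_congr_ae ?_
  filter_upwards [measure_eq_zero_iff_ae_notMem.1 (hs.convex.addHaar_frontier μ)] with x hx
  by_cases hxi : x ∈ interior s
  · have hsx : s ∈ 𝓝 x := mem_interior_iff_mem_nhds.1 hxi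
    have heq : s.indicator f =ᶠ[𝓝 x] f := by
      filter_upwards [hsx] with y hy using indicator_of_mem hy f
    rw [indicator_of_mem hxi, heq.lineDeriv_eq,
      ((hf.differentiableOn one_ne_zero).differentiableAt hsx).lineDeriv_eq_fderiv]
  · have hxs : x ∉ s := fun h => hx (hsc.frontier_eq ▸ ⟨h, hxi⟩)
    have heq : s.indicator f =ᶠ[𝓝 x] fun _ => 0 := by
      filter_upwards [hsc.isOpen_compl.mem_nhds hxs] with y hy using indicator_of_notMem hy f
    rw [indicator_of_notMem hxi, heq.lineDeriv_eq]
    simp only [lineDeriv, deriv_const]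

end Divergence

/-- The closed space-time cylinder with base `K` and height `T`. -/
abbrev cylinder {E : Type*} (T : ℝ) (K : Set E) : Set (ℝ × E) := Icc 0 T ×ˢ K

section Slices

variable {X Y : Type*} [TopologicalSpace X] [TopologicalSpace Y] {K : Set X} {T : ℝ}
  {f : ℝ × X → Y}

lemma interior_cylinder : interior (cylinder T K) = Ioo 0 T ×ˢ interior K := by
  rw [interior_prod_eq, interior_Icc]

lemma continuousOn_timeSlice (hf : ContinuousOn f (cylinder T K)) {x : X} (hx : x ∈ K) :
    ContinuousOn (fun s => f (s, x)) (Icc 0 T) :=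
  hf.comp (by fun_prop) fun _ hs => ⟨hs, hx⟩

lemma continuousOn_spaceSlice (hf : ContinuousOn f (cylinder T K)) {t : ℝ} (ht : t ∈ Icc 0 T) :
    ContinuousOn (fun x => f (t, x)) K :=
  hf.comp (by fun_prop) fun _ hx => ⟨ht, hx⟩

end Slices

section DifferentiableSlices

variable {V W : Type*} [NormedAddCommGroup V] [NormedSpace ℝ V] [NormedAddCommGroup W]
  [NormedSpace ℝ W] {K : Set V} {T t : ℝ} {x : V} {f : ℝ × V → W} {L : ℝ × V →L[ℝ] W}

lemma isConvexBody_cylinder (hT : 0 < T) (hK : IsConvexBody K) : IsConvexBody (cylinder T K) :=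
  (isConvexBody_Icc hT).prod hK

lemma contDiffOn_spaceSlice (hf : ContDiffOn ℝ 1 f (cylinder T K)) (ht : t ∈ Icc 0 T) :
    ContDiffOn ℝ 1 (fun x => f (t, x)) K :=
  hf.comp (by fun_prop) fun _ hx => ⟨ht, hx⟩

lemma hasDerivWithinAt_timeSlice (hx : x ∈ K)
    (hf : HasFDerivWithinAt f L (cylinder T K) (t, x)) :
    HasDerivWithinAt (fun s => f (s, x)) (L (1, 0)) (Icc 0 T) t := by
  have hpath : HasFDerivWithinAt (fun s => (s, x)) (ContinuousLinearMap.inl ℝ ℝ V) (Icc 0 T) t :=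
    (hasFDerivAt_prodMk_left t x).hasFDerivWithinAt
  have hmaps : MapsTo (fun s : ℝ => (s, x)) (Icc 0 T) (cylinder T K) := fun _ hs => ⟨hs, hx⟩
  exact (hf.comp t hpath hmaps).hasDerivWithinAt

lemma hasFDerivWithinAt_spaceSlice (ht : t ∈ Icc 0 T)
    (hf : HasFDerivWithinAt f L (cylinder T K) (t, x)) :
    HasFDerivWithinAt (fun y => f (t, y)) (L.comp (ContinuousLinearMap.inr ℝ ℝ V)) K x :=
  hf.comp x (hasFDerivAt_prodMk_right t x).hasFDerivWithinAt fun _ hy => ⟨ht, hy⟩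

end DifferentiableSlices

section SpaceTimeDivergence

variable {E : Type*} [NormedAddCommGroup E] [InnerProductSpace ℝ E]

/-- `F` is differentiable at `x` with divergence `d`, the trace of its derivative. -/
def HasDivergenceAt (F : E → E) (d : ℝ) (x : E) : Prop :=
  ∃ F' : E →L[ℝ] E, HasFDerivAt F F' x ∧ LinearMap.trace ℝ E F' = d

lemma hasDivergenceAt_id [FiniteDimensional ℝ E] (x : E) :
    HasDivergenceAt (fun y : E => y) (Module.finrank ℝ E) x :=
  ⟨ContinuousLinearMap.id ℝ E, hasFDerivAt_id x, LinearMap.trace_id ℝ E⟩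

namespace HasDivergenceAt

variable {f : E → ℝ} {f' : E →L[ℝ] ℝ} {F F₁ F₂ : E → E} {d d₁ d₂ : ℝ} {x : E}

lemma add (h₁ : HasDivergenceAt F₁ d₁ x) (h₂ : HasDivergenceAt F₂ d₂ x) :
    HasDivergenceAt (fun y => F₁ y + F₂ y) (d₁ + d₂) x := by
  obtain ⟨F₁', hF₁, rfl⟩ := h₁
  obtain ⟨F₂', hF₂, rfl⟩ := h₂
  exact ⟨F₁' + F₂', hF₁.add hF₂, map_add (LinearMap.trace ℝ E) _ _⟩

variable [FiniteDimensional ℝ E]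

lemma smul (hf : HasFDerivAt f f' x) (hF : HasDivergenceAt F d x) :
    HasDivergenceAt (fun y => f y • F y) (f x * d + f' (F x)) x := by
  obtain ⟨F', hF', rfl⟩ := hF
  refine ⟨f x • F' + f'.smulRight (F x), hf.smul hF', ?_⟩
  rw [ContinuousLinearMap.toLinearMap_add, map_add, ContinuousLinearMap.toLinearMap_smul,
    map_smul, smul_eq_mul]
  congr 1
  exact LinearMap.trace_smulRight (f' : E →ₗ[ℝ] ℝ) (F x)

end HasDivergenceAt

variable [FiniteDimensional ℝ E] [MeasurableSpace E] [BorelSpace E] {K : Set E} {T : ℝ}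

lemma IsConvexBody.setIntegral_eq_zero_of_hasDivergenceAt (hK : IsConvexBody K) {F : E → E}
    {d : E → ℝ} (hF : ContDiffOn ℝ 1 F K) (hF0 : ∀ x ∈ frontier K, F x = 0)
    (hd : ∀ x ∈ interior K, HasDivergenceAt F (d x) x) : ∫ x in interior K, d x = 0 := by
  let b := stdOrthonormalBasis ℝ E
  have hcoord (i) : ContDiffOn ℝ 1 (fun x => inner ℝ (b i) (F x)) K := contDiffOn_const.inner ℝ hF
  have hsum : EqOn d (fun x => ∑ i, fderiv ℝ (fun y => inner ℝ (b i) (F y)) x (b i))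
      (interior K) := fun x hx => by
    obtain ⟨F', hF', hd'⟩ := hd x hx
    have hfd (i) : fderiv ℝ (fun y => inner ℝ (b i) (F y)) x = (innerSL ℝ (b i)).comp F' :=
      ((innerSL ℝ (b i)).hasFDerivAt.comp x hF').fderiv
    simp only [hfd, ← hd', LinearMap.trace_eq_sum_inner _ b]
    rfl
  have hint (i) : IntegrableOn (fun x => fderiv ℝ (fun y => inner ℝ (b i) (F y)) x (b i))
      (interior K) := by
    have hcont := ((hcoord i).continuousOn_fderivWithin hK.uniqueDiffOn le_rfl).clm_apply
      (continuousOn_const (c := b i))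
    refine (hK.integrableOn_interior hcont).congr_fun (fun x hx => ?_)
      isOpen_interior.measurableSet
    simp only [fderivWithin_of_mem_nhds (mem_interior_iff_mem_nhds.1 hx)]
  rw [setIntegral_congr_fun isOpen_interior.measurableSet hsum,
    integral_finsetSum _ fun i _ => hint i]
  exact Finset.sum_eq_zero fun i _ => hK.setIntegral_fderiv_eq_zero volume (hcoord i)
    (fun x hx => by simp only [hF0 x hx, inner_zero_right]) (b i)

lemma IsConvexBody.setIntegral_cylinder (hK : IsConvexBody K) (hT : 0 < T) {g : ℝ × E → ℝ}
    (hg : ContinuousOn g (cylinder T K)) :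
    ∫ z in interior (cylinder T K), g z = ∫ t in Ioo 0 T, ∫ x in interior K, g (t, x) := by
  have hint := (isConvexBody_cylinder hT hK).integrableOn_interior (μ := volume) hg
  rw [interior_cylinder] at hint ⊢
  exact setIntegral_prod g hint

lemma IsConvexBody.setIntegral_timeDeriv (hK : IsConvexBody K) (hT : 0 < T) {e e' : ℝ × E → ℝ}
    (he : ContinuousOn e (cylinder T K)) (he' : ContinuousOn e' (cylinder T K))
    (hderiv : ∀ z ∈ interior (cylinder T K), HasDerivAt (fun s => e (s, z.2)) (e' z) z.1) :
    ∫ z in interior (cylinder T K), e' z =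
      (∫ x in interior K, e (T, x)) - ∫ x in interior K, e (0, x) := by
  have hint := (isConvexBody_cylinder hT hK).integrableOn_interior (μ := volume) he'
  rw [hK.setIntegral_cylinder hT he', integral_integral_swap (f := fun t x => e' (t, x)),
    ← integral_sub
      (hK.integrableOn_interior (continuousOn_spaceSlice he (right_mem_Icc.2 hT.le)))
      (hK.integrableOn_interior (continuousOn_spaceSlice he (left_mem_Icc.2 hT.le)))]
  · refine setIntegral_congr_fun isOpen_interior.measurableSet fun x hx => ?_
    have hxK := interior_subset hx
    simp only [← integral_Ioc_eq_integral_Ioo, ← intervalIntegral.integral_of_le hT.le]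
    refine intervalIntegral.integral_eq_sub_of_hasDerivAt_of_le hT.le
      (continuousOn_timeSlice he hxK) (fun t ht => hderiv (t, x) ?_)
      ((continuousOn_timeSlice he' hxK).intervalIntegrable_of_Icc hT.le)
    rw [interior_cylinder]
    exact ⟨ht, hx⟩
  · rw [interior_cylinder] at hint
    rwa [Measure.prod_restrict]

lemma IsConvexBody.setIntegral_eq_sub_of_hasDivergenceAt (hK : IsConvexBody K) (hT : 0 < T)
    {e h : ℝ × E → ℝ} {F : ℝ × E → E} (he : ContDiffOn ℝ 1 e (cylinder T K))
    (hF : ContDiffOn ℝ 1 F (cylinder T K)) (hh : ContinuousOn h (cylinder T K))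
    (hF0 : ∀ t ∈ Icc 0 T, ∀ x ∈ frontier K, F (t, x) = 0)
    (hbalance : ∀ z ∈ interior (cylinder T K), ∃ e' d, HasDerivAt (fun s => e (s, z.2)) e' z.1 ∧
      HasDivergenceAt (fun y => F (z.1, y)) d z.2 ∧ e' + d = h z) :
    ∫ z in interior (cylinder T K), h z =
      (∫ x in interior K, e (T, x)) - ∫ x in interior K, e (0, x) := by
  let e' : ℝ × E → ℝ := fun z => fderivWithin ℝ e (cylinder T K) z (1, 0)
  have hcyl := isConvexBody_cylinder hT hK
  have he' : ContinuousOn e' (cylinder T K) :=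
    (he.continuousOn_fderivWithin hcyl.uniqueDiffOn le_rfl).clm_apply continuousOn_const
  have hderiv : ∀ z ∈ interior (cylinder T K), HasDerivAt (fun s => e (s, z.2)) (e' z) z.1 := by
    intro z hz
    have hzc := interior_subset hz
    rw [interior_cylinder] at hz
    exact (hasDerivWithinAt_timeSlice hzc.2 ((he.differentiableOn one_ne_zero) z
      hzc).hasFDerivWithinAt).hasDerivAt (Icc_mem_nhds hz.1.1 hz.1.2)
  have hspace : ∫ z in interior (cylinder T K), (h z - e' z) = 0 := by
    rw [hK.setIntegral_cylinder (g := fun z => h z - e' z) hT (hh.sub he')]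
    refine setIntegral_eq_zero_of_forall_eq_zero fun t ht => ?_
    have htc := Ioo_subset_Icc_self ht
    refine hK.setIntegral_eq_zero_of_hasDivergenceAt (contDiffOn_spaceSlice hF htc) (hF0 t htc)
      fun x hx => ?_
    have hz : (t, x) ∈ interior (cylinder T K) := by
      rw [interior_cylinder]
      exact ⟨ht, hx⟩
    obtain ⟨q, d, hq, hd, hsum⟩ := hbalance (t, x) hz
    rwa [← hsum, hq.unique (hderiv (t, x) hz), add_sub_cancel_left]
  rw [integral_sub (hcyl.integrableOn_interior hh) (hcyl.integrableOn_interior he'),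
    sub_eq_zero] at hspace
  rw [hspace, hK.setIntegral_timeDeriv hT he.continuousOn he' hderiv]

end SpaceTimeDivergence

section Wave

variable {E : Type*} [NormedAddCommGroup E] [InnerProductSpace ℝ E]

/-- `IsDirichletWave T K v p G` says that `v` solves the wave equation on the cylinder over `K` and
vanishes on its lateral boundary, written as a first-order system: the velocity `p = ∂ₜv` and the
spatial gradient `G = ∇v`, as functions of `(t, x)`, are of class `C¹`, and `∂ₜp = div G`. -/
structure IsDirichletWave (T : ℝ) (K : Set E) (v p : ℝ × E → ℝ) (G : ℝ × E → E) : Prop where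
  contDiffOn_displacement : ContDiffOn ℝ 1 v (cylinder T K)
  contDiffOn_velocity : ContDiffOn ℝ 1 p (cylinder T K)
  contDiffOn_gradient : ContDiffOn ℝ 1 G (cylinder T K)
  hasFDerivWithinAt : ∀ z ∈ cylinder T K, HasFDerivWithinAt v
    (p z • ContinuousLinearMap.fst ℝ ℝ E + (innerSL ℝ (G z)).comp (ContinuousLinearMap.snd ℝ ℝ E))
    (cylinder T K) z
  hasDivergenceAt : ∀ z ∈ interior (cylinder T K),
    HasDivergenceAt (fun y => G (z.1, y)) (deriv (fun s => p (s, z.2)) z.1) z.2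
  eq_zero_of_mem_frontier : ∀ t ∈ Icc 0 T, ∀ x ∈ frontier K, v (t, x) = 0

/-- The first derivatives in time and space of a wave `v`, of its velocity `p` and of its gradient
`G` at the space-time point `z`: here `q = ∂ₜp`, `a = ∂ₜG = ∇p`, and `A` is the Hessian of `v`. -/
structure HasWaveDerivsAt (v p : ℝ × E → ℝ) (G : ℝ × E → E) (z : ℝ × E) (q : ℝ) (a : E)
    (A : E →L[ℝ] E) : Prop where
  displacement_time : HasDerivAt (fun s => v (s, z.2)) (p z) z.1
  displacement_space : HasFDerivAt (fun y => v (z.1, y)) (innerSL ℝ (G z)) z.2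
  velocity_time : HasDerivAt (fun s => p (s, z.2)) q z.1
  velocity_space : HasFDerivAt (fun y => p (z.1, y)) (innerSL ℝ a) z.2
  gradient_time : HasDerivAt (fun s => G (s, z.2)) a z.1
  gradient_space : HasFDerivAt (fun y => G (z.1, y)) A z.2
  hessian_symm : ∀ y w, inner ℝ (A y) w = inner ℝ y (A w)
  trace_hessian : LinearMap.trace ℝ E A = q

lemma HasWaveDerivsAt.hasDivergenceAt {v p : ℝ × E → ℝ} {G : ℝ × E → E} {z : ℝ × E} {q : ℝ} {a : E}
    {A : E →L[ℝ] E} (hz : HasWaveDerivsAt v p G z q a A) :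
    HasDivergenceAt (fun y => G (z.1, y)) q z.2 :=
  ⟨A, hz.gradient_space, hz.trace_hessian⟩

namespace IsDirichletWave

variable {T : ℝ} {K : Set E} {v p : ℝ × E → ℝ} {G : ℝ × E → E}

lemma hasDerivWithinAt_time (hw : IsDirichletWave T K v p G) {t : ℝ} (ht : t ∈ Icc 0 T) {x : E}
    (hx : x ∈ K) : HasDerivWithinAt (fun s => v (s, x)) (p (t, x)) (Icc 0 T) t := by
  simpa using hasDerivWithinAt_timeSlice hx (hw.hasFDerivWithinAt (t, x) ⟨ht, hx⟩)

lemma hasFDerivAt_space (hw : IsDirichletWave T K v p G) {t : ℝ} (ht : t ∈ Icc 0 T) {x : E}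
    (hx : x ∈ interior K) : HasFDerivAt (fun y => v (t, y)) (innerSL ℝ (G (t, x))) x := by
  have h := (hasFDerivWithinAt_spaceSlice ht (hw.hasFDerivWithinAt (t, x)
    ⟨ht, interior_subset hx⟩)).hasFDerivAt (mem_interior_iff_mem_nhds.1 hx)
  exact h.congr_fderiv (by ext w; simp)

lemma velocity_eq_zero_of_mem_frontier (hw : IsDirichletWave T K v p G) (hT : 0 < T)
    (hK : IsClosed K) {t : ℝ} (ht : t ∈ Icc 0 T) {x : E} (hx : x ∈ frontier K) : p (t, x) = 0 := by
  have hzero : HasDerivWithinAt (fun s => v (s, x)) 0 (Icc 0 T) t :=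
    (hasDerivWithinAt_const t (Icc 0 T) (0 : ℝ)).congr
      (fun s hs => hw.eq_zero_of_mem_frontier s hs x hx) (hw.eq_zero_of_mem_frontier t ht x hx)
  exact (uniqueDiffOn_Icc hT t ht).eq_deriv (Icc 0 T)
    (hw.hasDerivWithinAt_time ht (hK.frontier_subset hx)) hzero

lemma gradient_eq_zero_of_eventuallyEq (hw : IsDirichletWave T K v p G) {t : ℝ} (ht : t ∈ Icc 0 T)
    {x : E} (hx : x ∈ interior K) (hv : (fun y => v (t, y)) =ᶠ[𝓝 x] 0) : G (t, x) = 0 := by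
  have hzero := (hw.hasFDerivAt_space ht hx).unique
    ((hasFDerivAt_const (0 : ℝ) x).congr_of_eventuallyEq hv)
  simpa using congr($hzero (G (t, x)))

lemma second_derivative_symm [FiniteDimensional ℝ E] (hw : IsDirichletWave T K v p G) {z : ℝ × E}
    (hz : z ∈ interior (cylinder T K)) (y w : ℝ × E) :
    fderiv ℝ p z y * w.1 + inner ℝ (fderiv ℝ G z y) w.2 =
      fderiv ℝ p z w * y.1 + inner ℝ (fderiv ℝ G z w) y.2 := by
  let D : ℝ × E → ℝ × E →L[ℝ] ℝ := fun z => p z • ContinuousLinearMap.fst ℝ ℝ E +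
    (innerSL ℝ (G z)).comp (ContinuousLinearMap.snd ℝ ℝ E)
  have hnhds := mem_interior_iff_mem_nhds.1 hz
  have hp := (hw.contDiffOn_velocity.differentiableOn one_ne_zero).differentiableAt hnhds
  have hG := (hw.contDiffOn_gradient.differentiableOn one_ne_zero).differentiableAt hnhds
  have hD_apply (w) : (fun z => D z w) = fun z => p z * w.1 + inner ℝ (G z) w.2 := by
    ext z
    simp [D]
  have hD : DifferentiableAt ℝ D z := by
    have hC1 : ContDiffOn ℝ 1 D (cylinder T K) := contDiffOn_clm_apply.2 fun w => by
      rw [hD_apply w]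
      exact (hw.contDiffOn_velocity.mul contDiffOn_const).add
        (hw.contDiffOn_gradient.inner ℝ contDiffOn_const)
    exact (hC1.differentiableOn one_ne_zero).differentiableAt hnhds
  have hfderiv (y w) : fderiv ℝ D z y w = fderiv ℝ p z y * w.1 + inner ℝ (fderiv ℝ G z y) w.2 := by
    have h₁ := hD.hasFDerivAt.clm_apply (hasFDerivAt_const w z)
    have h₂ := (hp.hasFDerivAt.mul_const w.1).add (hG.hasFDerivAt.inner ℝ (hasFDerivAt_const w.2 z))
    rw [hD_apply w] at h₁
    have := congr($(h₁.unique h₂) y)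
    simpa [mul_comm] using this
  rw [← hfderiv, ← hfderiv]
  refine second_derivative_symmetric_of_eventually (f := v) ?_ hD.hasFDerivAt y w
  filter_upwards [isOpen_interior.mem_nhds hz] with z' hz'
  exact (hw.hasFDerivWithinAt z' (interior_subset hz')).hasFDerivAt
    (mem_interior_iff_mem_nhds.1 hz')

lemma exists_hasWaveDerivsAt [FiniteDimensional ℝ E] (hw : IsDirichletWave T K v p G) {z : ℝ × E}
    (hz : z ∈ interior (cylinder T K)) : ∃ q a A, HasWaveDerivsAt v p G z q a A := by
  have hnhds := mem_interior_iff_mem_nhds.1 hz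
  have hzc := interior_subset hz
  have hp := (hw.contDiffOn_velocity.differentiableOn one_ne_zero).differentiableAt hnhds
  have hG := (hw.contDiffOn_gradient.differentiableOn one_ne_zero).differentiableAt hnhds
  have hsymm := hw.second_derivative_symm hz
  have hwave := hw.hasDivergenceAt z hz
  rw [interior_cylinder] at hz
  have htime := Icc_mem_nhds hz.1.1 hz.1.2
  have hspace := mem_interior_iff_mem_nhds.1 hz.2
  have hp_time :=
    (hasDerivWithinAt_timeSlice hzc.2 hp.hasFDerivAt.hasFDerivWithinAt).hasDerivAt htime
  have hG_space := (hasFDerivWithinAt_spaceSlice hzc.1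
    hG.hasFDerivAt.hasFDerivWithinAt).hasFDerivAt hspace
  refine ⟨_, _, _, (hw.hasDerivWithinAt_time hzc.1 hzc.2).hasDerivAt htime,
    hw.hasFDerivAt_space hzc.1 hz.2, hp_time, ?_,
    (hasDerivWithinAt_timeSlice hzc.2 hG.hasFDerivAt.hasFDerivWithinAt).hasDerivAt htime,
    hG_space, fun y w => ?_, ?_⟩
  · refine ((hasFDerivWithinAt_spaceSlice hzc.1
      hp.hasFDerivAt.hasFDerivWithinAt).hasFDerivAt hspace).congr_fderiv ?_
    ext w
    simpa using (hsymm (1, 0) (0, w)).symm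
  · simpa [real_inner_comm y] using hsymm (0, y) (0, w)
  · obtain ⟨A, hA, htrace⟩ := hwave
    rw [hG_space.unique hA, htrace, hp_time.deriv]

end IsDirichletWave

end Wave

section Multiplier

variable {E : Type*} [NormedAddCommGroup E] [InnerProductSpace ℝ E] {T : ℝ} {K : Set E}
  {v p : ℝ × E → ℝ} {G : ℝ × E → E}

/-- The Morawetz multiplier `x · ∇v + ½(n - 1)v` of a function `v` with spatial gradient `G`, where
`n` is the dimension. -/
noncomputable def multiplier (v : ℝ × E → ℝ) (G : ℝ × E → E) (z : ℝ × E) : ℝ :=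
  inner ℝ z.2 (G z) + (Module.finrank ℝ E - 1) / 2 * v z

namespace HasWaveDerivsAt

variable {z : ℝ × E} {q : ℝ} {a : E} {A : E →L[ℝ] E}

lemma multiplier_time (hz : HasWaveDerivsAt v p G z q a A) :
    HasDerivAt (fun s => multiplier v G (s, z.2))
      (inner ℝ z.2 a + (Module.finrank ℝ E - 1) / 2 * p z) z.1 :=
  ((innerSL ℝ z.2).hasFDerivAt.comp_hasDerivAt z.1 hz.gradient_time).add
    (hz.displacement_time.const_mul _)

lemma multiplier_space (hz : HasWaveDerivsAt v p G z q a A) :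
    HasFDerivAt (fun y => multiplier v G (z.1, y))
      (innerSL ℝ (G z + A z.2 + ((Module.finrank ℝ E - 1) / 2 : ℝ) • G z)) z.2 := by
  refine (((hasFDerivAt_id z.2).inner ℝ hz.gradient_space).add
    (hz.displacement_space.const_mul _)).congr_fderiv ?_
  ext w
  have hsymm : ⟪z.2, A w⟫_ℝ = ⟪w, A z.2⟫_ℝ := by rw [← hz.hessian_symm, real_inner_comm]
  simp only [id_eq, Prod.mk.eta, add_apply, ContinuousLinearMap.comp_apply,
    ContinuousLinearMap.prod_apply, ContinuousLinearMap.id_apply, fderivInnerCLM_apply, smul_apply,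
    coe_innerSL_apply, real_inner_comm w, smul_eq_mul, map_add, map_smul]
  linear_combination hsymm

end HasWaveDerivsAt

lemma IsDirichletWave.contDiffOn_multiplier (hw : IsDirichletWave T K v p G) :
    ContDiffOn ℝ 1 (multiplier v G) (cylinder T K) :=
  (contDiffOn_snd.inner ℝ hw.contDiffOn_gradient).add
    (contDiffOn_const.mul hw.contDiffOn_displacement)

end Multiplier

section Identities

variable {E : Type*} [NormedAddCommGroup E] [InnerProductSpace ℝ E] [FiniteDimensional ℝ E]
  [MeasurableSpace E] [BorelSpace E]

/-- Twice the energy, at time `t`, of a wave on `K` with velocity `p` and gradient `G`. -/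
noncomputable def energy (K : Set E) (p : ℝ × E → ℝ) (G : ℝ × E → E) (t : ℝ) : ℝ :=
  ∫ x in interior K, (p (t, x) ^ 2 + ‖G (t, x)‖ ^ 2)

variable {T : ℝ} {K : Set E} {v p : ℝ × E → ℝ} {G : ℝ × E → E} {φ ψ ζ : E → ℝ}

lemma IsConvexBody.setIntegral_two_mul_add_eq_zero (hK : IsConvexBody K) {w : E → ℝ} {g : E → E}
    (hw : ContDiffOn ℝ 1 w K) (hwg : ∀ x ∈ interior K, HasFDerivAt w (innerSL ℝ (g x)) x)
    (hφ : ContDiff ℝ 1 φ) (hφ0 : ∀ x ∈ frontier K, φ x = 0) :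
    ∫ x in interior K, (φ x ^ 2 * w x ^ 2 * Module.finrank ℝ E +
      (2 * φ x * w x ^ 2 * fderiv ℝ φ x x + 2 * φ x ^ 2 * w x * inner ℝ x (g x))) = 0 := by
  refine hK.setIntegral_eq_zero_of_hasDivergenceAt (F := fun x => (φ x ^ 2 * w x ^ 2) • x)
    (ContDiffOn.smul (by fun_prop) contDiffOn_id) (fun x hx => by simp [hφ0 x hx])
    fun x hx => ?_
  have hweight : HasFDerivAt (fun y => φ y ^ 2 * w y ^ 2)
      (φ x ^ 2 • (2 * w x) • innerSL ℝ (g x) + w x ^ 2 • (2 * φ x) • fderiv ℝ φ x) x :=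
    (((hφ.differentiable one_ne_zero x).hasFDerivAt.pow 2).mul ((hwg x hx).pow 2)).congr_fderiv
      (by simp)
  have hdiv := HasDivergenceAt.smul hweight (hasDivergenceAt_id x)
  simp only [add_apply, smul_apply, coe_innerSL_apply, smul_eq_mul, real_inner_comm x] at hdiv
  convert hdiv using 1
  ring

namespace IsDirichletWave

lemma setIntegral_weighted_energy (hw : IsDirichletWave T K v p G) (hK : IsConvexBody K)
    (hT : 0 < T) (A B : ℝ) :
    ∫ z in interior (cylinder T K), B * (p z ^ 2 + ‖G z‖ ^ 2) =
      (∫ x in interior K, (A + B * T) * (p (T, x) ^ 2 + ‖G (T, x)‖ ^ 2)) -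
        ∫ x in interior K, (A + B * 0) * (p (0, x) ^ 2 + ‖G (0, x)‖ ^ 2) := by
  have hp := hw.contDiffOn_velocity
  have hG := hw.contDiffOn_gradient
  have hdensity : ContDiffOn ℝ 1 (fun z => p z ^ 2 + ‖G z‖ ^ 2) (cylinder T K) :=
    (hp.pow 2).add (hG.norm_sq ℝ)
  refine hK.setIntegral_eq_sub_of_hasDivergenceAt hT
    (e := fun z => (A + B * z.1) * (p z ^ 2 + ‖G z‖ ^ 2))
    (F := fun z => (-2 * (A + B * z.1) * p z) • G z)
    (ContDiffOn.mul (by fun_prop) hdensity) (ContDiffOn.smul (by fun_prop) hG)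
    (continuousOn_const.mul hdensity.continuousOn)
    (fun t ht x hx => ?_) fun z hz => ?_
  · simp only [hw.velocity_eq_zero_of_mem_frontier hT hK.isCompact.isClosed ht hx, mul_zero,
      zero_smul]
  · obtain ⟨q, a, H, hd⟩ := hw.exists_hasWaveDerivsAt hz
    refine ⟨_, _, (((hasDerivAt_id z.1).const_mul B).const_add A).mul
      ((hd.velocity_time.pow 2).add hd.gradient_time.norm_sq),
      .smul (hd.velocity_space.const_mul (-2 * (A + B * z.1))) hd.hasDivergenceAt, ?_⟩
    simp only [mul_one, Prod.mk.eta, id_eq, Nat.cast_ofNat, Nat.add_one_sub_one, pow_one,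
      real_inner_comm a, neg_mul, neg_smul, neg_apply, smul_apply, coe_innerSL_apply, smul_eq_mul]
    ring

lemma energy_eq (hw : IsDirichletWave T K v p G) (hK : IsConvexBody K) (hT : 0 < T) :
    energy K p G T = energy K p G 0 := by
  have h := hw.setIntegral_weighted_energy hK hT 1 0
  simp only [zero_mul, integral_zero, add_zero, one_mul] at h
  exact sub_eq_zero.1 h.symm

lemma setIntegral_energy (hw : IsDirichletWave T K v p G) (hK : IsConvexBody K) (hT : 0 < T) :
    ∫ z in interior (cylinder T K), (p z ^ 2 + ‖G z‖ ^ 2) = T * energy K p G 0 := by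
  have h := hw.setIntegral_weighted_energy hK hT 0 1
  simp only [zero_add, one_mul, zero_mul, integral_zero, sub_zero, integral_const_mul] at h
  rw [h, ← hw.energy_eq hK hT, energy]

lemma setIntegral_displacement (hw : IsDirichletWave T K v p G) (hK : IsConvexBody K) (hT : 0 < T)
    (hζ : Continuous ζ) :
    ∫ z in interior (cylinder T K),
        (-(ζ z.2 * v z ^ 2) + (T + 1 - z.1) * (ζ z.2 * (2 * v z * p z))) =
      (∫ x in interior K, (T + 1 - T) * (ζ x * v (T, x) ^ 2)) -
        ∫ x in interior K, (T + 1 - 0) * (ζ x * v (0, x) ^ 2) := by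
  have hv := hw.contDiffOn_displacement.continuousOn
  have hp := hw.contDiffOn_velocity.continuousOn
  refine hK.setIntegral_timeDeriv hT (e := fun z => (T + 1 - z.1) * (ζ z.2 * v z ^ 2))
    (by fun_prop) (by fun_prop) fun z hz => ?_
  obtain ⟨q, a, H, hd⟩ := hw.exists_hasWaveDerivsAt hz
  refine (((hasDerivAt_id z.1).const_sub (T + 1)).mul
    ((hd.displacement_time.pow 2).const_mul (ζ z.2))).congr_deriv ?_
  simp only [id_eq, Pi.pow_apply, Prod.mk.eta, Nat.cast_ofNat, Nat.add_one_sub_one, pow_one]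
  ring

lemma setIntegral_equipartition (hw : IsDirichletWave T K v p G) (hK : IsConvexBody K) (hT : 0 < T)
    (hψ : ContDiff ℝ 1 ψ) :
    ∫ z in interior (cylinder T K),
        (ψ z.2 * p z ^ 2 - ψ z.2 * ‖G z‖ ^ 2 - v z * fderiv ℝ ψ z.2 (G z)) =
      (∫ x in interior K, ψ x * v (T, x) * p (T, x)) -
        ∫ x in interior K, ψ x * v (0, x) * p (0, x) := by
  have hv := hw.contDiffOn_displacement
  have hp := hw.contDiffOn_velocity
  have hG := hw.contDiffOn_gradient
  refine hK.setIntegral_eq_sub_of_hasDivergenceAt hT (e := fun z => ψ z.2 * v z * p z)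
    (F := fun z => (-(ψ z.2 * v z)) • G z) (by fun_prop) (by fun_prop) ?_
    (fun t ht x hx => ?_) fun z hz => ?_
  · have := hψ.continuous
    have := hv.continuousOn
    have := hp.continuousOn
    have := hG.continuousOn
    fun_prop
  · simp only [hw.eq_zero_of_mem_frontier t ht x hx, mul_zero, neg_zero, zero_smul]
  · obtain ⟨q, a, H, hd⟩ := hw.exists_hasWaveDerivsAt hz
    refine ⟨_, _, (hd.displacement_time.const_mul (ψ z.2)).mul hd.velocity_time, .smul
      ((hψ.differentiable one_ne_zero z.2).hasFDerivAt.mul hd.displacement_space).neg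
      hd.hasDivergenceAt, ?_⟩
    simp only [Prod.mk.eta, neg_apply, add_apply, smul_apply, smul_eq_mul, coe_innerSL_apply,
      real_inner_self_eq_norm_sq]
    ring

lemma setIntegral_virial (hw : IsDirichletWave T K v p G) (hK : IsConvexBody K) (hT : 0 < T)
    (hφ : ContDiff ℝ 1 φ) (hφ0 : ∀ x ∈ frontier K, φ x = 0) :
    ∫ z in interior (cylinder T K), (-(1 / 2) * φ z.2 * (p z ^ 2 + ‖G z‖ ^ 2) +
        (1 / 2 * fderiv ℝ φ z.2 z.2 * (‖G z‖ ^ 2 - p z ^ 2) -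
          fderiv ℝ φ z.2 (G z) * multiplier v G z)) =
      (∫ x in interior K, φ x * p (T, x) * multiplier v G (T, x)) -
        ∫ x in interior K, φ x * p (0, x) * multiplier v G (0, x) := by
  have hp := hw.contDiffOn_velocity
  have hG := hw.contDiffOn_gradient
  have hm := hw.contDiffOn_multiplier
  have hG2 : ContDiffOn ℝ 1 (fun z => ‖G z‖ ^ 2) (cylinder T K) := hG.norm_sq ℝ
  refine hK.setIntegral_eq_sub_of_hasDivergenceAt hT
    (e := fun z => φ z.2 * p z * multiplier v G z)
    (F := fun z => (-(1 / 2) * (φ z.2 * (p z ^ 2 - ‖G z‖ ^ 2))) • z.2 +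
      (-(φ z.2 * multiplier v G z)) • G z) (by fun_prop) (by fun_prop) ?_
    (fun t _ x hx => ?_) fun z hz => ?_
  · have := hφ.continuous
    have := hp.continuousOn
    have := hG.continuousOn
    have := hm.continuousOn
    fun_prop
  · simp only [hφ0 x hx, zero_mul, mul_zero, neg_zero, zero_smul, add_zero]
  · obtain ⟨q, a, H, hd⟩ := hw.exists_hasWaveDerivsAt hz
    have hφz := (hφ.differentiable one_ne_zero z.2).hasFDerivAt
    refine ⟨_, _, (hd.velocity_time.const_mul (φ z.2)).mul hd.multiplier_time, .add
      (.smul ((hφz.mul ((hd.velocity_space.pow 2).sub hd.gradient_space.norm_sq)).const_mul _)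
        (hasDivergenceAt_id z.2))
      (.smul (hφz.mul hd.multiplier_space).neg hd.hasDivergenceAt), ?_⟩
    simp only [multiplier, Prod.mk.eta, real_inner_comm, Nat.add_one_sub_one, pow_one,
      nsmul_eq_mul, Nat.cast_ofNat, Pi.sub_apply, add_apply, neg_apply, smul_apply, sub_apply,
      coe_innerSL_apply, smul_eq_mul, ContinuousLinearMap.comp_apply, map_add, map_smul,
      real_inner_self_eq_norm_sq]
    ring

end IsDirichletWave

end Identities

section Cutoffs

variable {E : Type*} [NormedAddCommGroup E] [InnerProductSpace ℝ E] {r s b M N δ ρ : ℝ}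
  {η φ ψ ζ : E → ℝ}

/-- `η` is a `C¹` cutoff that vanishes on the ball of radius `r` about the origin and equals `1`
outside the ball of radius `s`, with derivative bounded by `M`. -/
structure IsOuterCutoff (r s M : ℝ) (η : E → ℝ) : Prop where
  contDiff : ContDiff ℝ 1 η
  nonneg : ∀ x, 0 ≤ η x
  le_one : ∀ x, η x ≤ 1
  eq_zero : ∀ x, ‖x‖ ≤ r → η x = 0
  eq_one : ∀ x, s ≤ ‖x‖ → η x = 1
  norm_fderiv_le : ∀ x, ‖fderiv ℝ η x‖ ≤ M

namespace IsOuterCutoff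

lemma bound_nonneg (hη : IsOuterCutoff r s M η) : 0 ≤ M :=
  (norm_nonneg _).trans (hη.norm_fderiv_le 0)

lemma fderiv_eq_zero_of_norm_le (hη : IsOuterCutoff r s M η) {x : E} (hx : ‖x‖ ≤ r) :
    fderiv ℝ η x = 0 :=
  IsLocalMin.fderiv_eq_zero (Eventually.of_forall fun y => hη.eq_zero x hx ▸ hη.nonneg y)

lemma fderiv_eq_zero_of_le_norm (hη : IsOuterCutoff r s M η) {x : E} (hx : s ≤ ‖x‖) :
    fderiv ℝ η x = 0 :=
  IsLocalMax.fderiv_eq_zero (Eventually.of_forall fun y => hη.eq_one x hx ▸ hη.le_one y)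

lemma norm_fderiv_mul_norm_le (hη : IsOuterCutoff r s M η) (x : E) :
    ‖fderiv ℝ η x‖ * ‖x‖ ≤ M * |s| := by
  have hM := hη.bound_nonneg
  rcases le_total ‖x‖ s with hx | hx
  · exact mul_le_mul (hη.norm_fderiv_le x) (hx.trans (le_abs_self s)) (norm_nonneg x) hM
  · rw [hη.fderiv_eq_zero_of_le_norm hx, norm_zero, zero_mul]
    positivity

lemma sq_norm_fderiv_sq_le (hη : IsOuterCutoff r s M η) (x : E) :
    ‖fderiv ℝ (fun y => η y ^ 2) x‖ ^ 2 ≤ (2 * M) ^ 2 * η x ^ 2 := by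
  have hderiv : ‖fderiv ℝ (fun y => η y ^ 2) x‖ = 2 * η x * ‖fderiv ℝ η x‖ := by
    rw [((hη.contDiff.differentiable one_ne_zero x).hasFDerivAt.pow 2).fderiv]
    simp [norm_smul, abs_of_nonneg (hη.nonneg x)]
  calc ‖fderiv ℝ (fun y => η y ^ 2) x‖ ^ 2 = (2 * ‖fderiv ℝ η x‖) ^ 2 * η x ^ 2 := by
        rw [hderiv]
        ring
    _ ≤ (2 * M) ^ 2 * η x ^ 2 := by
        gcongr
        exact hη.norm_fderiv_le x

end IsOuterCutoff

variable (E) in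
lemma exists_isOuterCutoff [FiniteDimensional ℝ E] (hr : 0 < r) (hrs : r < s) :
    ∃ (M : ℝ) (η : E → ℝ), IsOuterCutoff r s M η := by
  let β : ContDiffBump (0 : E) := ⟨r, s, hr, hrs⟩
  have hβ : ContDiff ℝ 1 β := β.contDiff
  obtain ⟨M, hM⟩ := (hβ.continuous_fderiv one_ne_zero).bounded_above_of_compact_support
    (β.hasCompactSupport.fderiv ℝ)
  refine ⟨M, fun x => 1 - β x, contDiff_const.sub hβ, fun x => sub_nonneg.2 β.le_one,
    fun x => sub_le_self 1 β.nonneg, fun x hx => ?_, fun x hx => ?_, fun x => ?_⟩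
  · rw [β.one_of_mem_closedBall (mem_closedBall_zero_iff.2 hx), sub_self]
  · rw [β.zero_of_le_dist (by rwa [dist_zero_right]), sub_zero]
  · rw [fderiv_const_sub, norm_neg]
    exact hM x

/-- Cutoffs for localising the virial identity. The weight `φ` of the multiplier is `1` on the ball
of radius `r` and `0` off the ball of radius `b`; the loss `1 - φ` and the derivative of `φ` are
controlled by `ψ`, which in turn is controlled, together with its derivative, by `ζ`, supported off
the ball of radius `r`. The constant `N` bounds all derivatives. -/
structure NestedCutoffs (r b N : ℝ) (φ ψ ζ : E → ℝ) : Prop where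
  bound_nonneg : 0 ≤ N
  contDiff_weight : ContDiff ℝ 1 φ
  contDiff_middle : ContDiff ℝ 1 ψ
  continuous_outer : Continuous ζ
  weight_nonneg : ∀ x, 0 ≤ φ x
  weight_le_one : ∀ x, φ x ≤ 1
  weight_eq_zero : ∀ x, b ≤ ‖x‖ → φ x = 0
  one_sub_weight_le : ∀ x, 1 - φ x ≤ ψ x
  norm_fderiv_weight_le : ∀ x, ‖fderiv ℝ φ x‖ ≤ N * ψ x
  norm_fderiv_weight_mul_norm_le : ∀ x, ‖fderiv ℝ φ x‖ * ‖x‖ ≤ N * ψ x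
  middle_nonneg : ∀ x, 0 ≤ ψ x
  middle_le_outer : ∀ x, ψ x ≤ ζ x
  sq_norm_fderiv_middle_le : ∀ x, ‖fderiv ℝ ψ x‖ ^ 2 ≤ N ^ 2 * (ψ x * ζ x)
  outer_le_one : ∀ x, ζ x ≤ 1
  outer_eq_zero : ∀ x, ‖x‖ ≤ r → ζ x = 0

lemma nestedCutoffs_of_isOuterCutoff {s₁ s₂ M₁ M₂ M₃ : ℝ} {η₁ η₂ η₃ : E → ℝ}
    (h₁ : IsOuterCutoff r s₁ M₁ η₁) (h₂ : IsOuterCutoff s₁ s₂ M₂ η₂)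
    (h₃ : IsOuterCutoff s₂ b M₃ η₃) (hM₂ : 2 * M₂ ≤ N) (hM₃ : M₃ ≤ N) (hM₃b : M₃ * |b| ≤ N) :
    NestedCutoffs r b N (fun x => 1 - η₃ x) (fun x => η₂ x ^ 2) η₁ where
  bound_nonneg := h₃.bound_nonneg.trans hM₃
  contDiff_weight := contDiff_const.sub h₃.contDiff
  contDiff_middle := h₂.contDiff.pow 2
  continuous_outer := h₁.contDiff.continuous
  weight_nonneg x := sub_nonneg.2 (h₃.le_one x)
  weight_le_one x := sub_le_self 1 (h₃.nonneg x)
  weight_eq_zero x hx := by rw [h₃.eq_one x hx, sub_self]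
  one_sub_weight_le x := by
    rcases le_total ‖x‖ s₂ with hx | hx
    · rw [h₃.eq_zero x hx, sub_zero, sub_self]
      positivity
    · rw [h₂.eq_one x hx, one_pow, sub_sub_cancel]
      exact h₃.le_one x
  norm_fderiv_weight_le x := by
    rw [fderiv_const_sub, norm_neg]
    rcases le_total ‖x‖ s₂ with hx | hx
    · rw [h₃.fderiv_eq_zero_of_norm_le hx, norm_zero]
      exact mul_nonneg (h₃.bound_nonneg.trans hM₃) (sq_nonneg _)
    · rw [h₂.eq_one x hx, one_pow, mul_one]
      exact (h₃.norm_fderiv_le x).trans hM₃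
  norm_fderiv_weight_mul_norm_le x := by
    rw [fderiv_const_sub, norm_neg]
    rcases le_total ‖x‖ s₂ with hx | hx
    · rw [h₃.fderiv_eq_zero_of_norm_le hx, norm_zero, zero_mul]
      exact mul_nonneg (h₃.bound_nonneg.trans hM₃) (sq_nonneg _)
    · rw [h₂.eq_one x hx, one_pow, mul_one]
      exact (h₃.norm_fderiv_mul_norm_le x).trans hM₃b
  middle_nonneg x := sq_nonneg _
  middle_le_outer x := by
    rcases le_total ‖x‖ s₁ with hx | hx
    · rw [h₂.eq_zero x hx, zero_pow two_ne_zero]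
      exact h₁.nonneg x
    · rw [h₁.eq_one x hx]
      exact pow_le_one₀ (h₂.nonneg x) (h₂.le_one x)
  sq_norm_fderiv_middle_le x := by
    have hM₂0 := h₂.bound_nonneg
    refine (h₂.sq_norm_fderiv_sq_le x).trans ?_
    rcases le_total ‖x‖ s₁ with hx | hx
    · simp only [h₂.eq_zero x hx, zero_pow two_ne_zero, mul_zero, zero_mul, le_refl]
    · rw [h₁.eq_one x hx, mul_one]
      gcongr
  outer_le_one := h₁.le_one
  outer_eq_zero := h₁.eq_zero

variable (E) in
lemma exists_nestedCutoffs [FiniteDimensional ℝ E] (hr : 0 < r) (hrb : r < b) :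
    ∃ (N : ℝ) (φ ψ ζ : E → ℝ), NestedCutoffs r b N φ ψ ζ := by
  obtain ⟨s₂, hrs₂, hs₂b⟩ := exists_between hrb
  obtain ⟨s₁, hrs₁, hs₁₂⟩ := exists_between hrs₂
  obtain ⟨M₁, η₁, h₁⟩ := exists_isOuterCutoff E hr hrs₁
  obtain ⟨M₂, η₂, h₂⟩ := exists_isOuterCutoff E (hr.trans hrs₁) hs₁₂
  obtain ⟨M₃, η₃, h₃⟩ := exists_isOuterCutoff E (hr.trans hrs₂) hs₂b
  exact ⟨max (2 * M₂) (max M₃ (M₃ * |b|)), _, _, _, nestedCutoffs_of_isOuterCutoff h₁ h₂ h₃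
    (by simp) (by simp) (by simp)⟩

namespace NestedCutoffs

lemma middle_le_one (hc : NestedCutoffs r b N φ ψ ζ) (x : E) : ψ x ≤ 1 :=
  (hc.middle_le_outer x).trans (hc.outer_le_one x)

lemma outer_nonneg (hc : NestedCutoffs r b N φ ψ ζ) (x : E) : 0 ≤ ζ x :=
  (hc.middle_nonneg x).trans (hc.middle_le_outer x)

lemma middle_mul_eq_zero (hc : NestedCutoffs r b N φ ψ ζ) {x : E} {w : ℝ}
    (hw : ζ x * w ^ 2 = 0) : ψ x * w = 0 := by
  rcases mul_eq_zero.1 hw with hζ | hw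
  · rw [le_antisymm (hζ ▸ hc.middle_le_outer x) (hc.middle_nonneg x), zero_mul]
  · rw [pow_eq_zero_iff two_ne_zero |>.1 hw, mul_zero]

lemma abs_fderiv_weight_self_le (hc : NestedCutoffs r b N φ ψ ζ) (x : E) :
    |fderiv ℝ φ x x| ≤ N * ψ x :=
  ((fderiv ℝ φ x).le_opNorm x).trans (hc.norm_fderiv_weight_mul_norm_le x)

lemma weight_mul_norm_le (hc : NestedCutoffs r b N φ ψ ζ) (hb : 0 ≤ b) (x : E) :
    φ x * ‖x‖ ≤ b := by
  rcases le_total ‖x‖ b with hx | hx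
  · nlinarith [hc.weight_le_one x, hc.weight_nonneg x, norm_nonneg x]
  · rwa [hc.weight_eq_zero x hx, zero_mul]

lemma abs_weight_mul_inner_le (hc : NestedCutoffs r b N φ ψ ζ) {x : E} (hx : φ x * ‖x‖ ≤ ρ)
    (g : E) : |φ x * inner ℝ x g| ≤ ρ * ‖g‖ := calc
  |φ x * inner ℝ x g| = φ x * |⟪x, g⟫_ℝ| := by rw [abs_mul, abs_of_nonneg (hc.weight_nonneg x)]
  _ ≤ φ x * (‖x‖ * ‖g‖) :=
    mul_le_mul_of_nonneg_left (abs_real_inner_le_norm x g) (hc.weight_nonneg x)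
  _ ≤ ρ * ‖g‖ := by
    rw [← mul_assoc]
    gcongr

lemma abs_weight_mul_inner_le_of_eq_zero (hc : NestedCutoffs r b N φ ψ ζ) {x g : E}
    (hg : ρ < ‖x‖ → g = 0) : |φ x * inner ℝ x g| ≤ ρ * ‖g‖ := by
  rcases lt_or_ge ρ ‖x‖ with hx | hx
  · rw [hg hx, inner_zero_right, mul_zero, abs_zero, norm_zero, mul_zero]
  · exact hc.abs_weight_mul_inner_le
      ((mul_le_of_le_one_left (norm_nonneg x) (hc.weight_le_one x)).trans hx) g

lemma neg_mul_fderiv_middle_le (hc : NestedCutoffs r b N φ ψ ζ) (x g : E) (w : ℝ) :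
    -(w * fderiv ℝ ψ x g) ≤ 1 / 2 * (ψ x * ‖g‖ ^ 2) + N ^ 2 / 2 * (ζ x * w ^ 2) := by
  have hsq : (w * fderiv ℝ ψ x g) ^ 2 ≤ (ψ x * ‖g‖ ^ 2) * (N ^ 2 * (ζ x * w ^ 2)) := calc
    (w * fderiv ℝ ψ x g) ^ 2 = w ^ 2 * ‖fderiv ℝ ψ x g‖ ^ 2 := by
      rw [Real.norm_eq_abs, sq_abs, mul_pow]
    _ ≤ w ^ 2 * (‖fderiv ℝ ψ x‖ ^ 2 * ‖g‖ ^ 2) := by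
      rw [← mul_pow ‖fderiv ℝ ψ x‖]
      gcongr
      exact (fderiv ℝ ψ x).le_opNorm g
    _ ≤ w ^ 2 * (N ^ 2 * (ψ x * ζ x) * ‖g‖ ^ 2) := by
      gcongr
      exact hc.sq_norm_fderiv_middle_le x
    _ = (ψ x * ‖g‖ ^ 2) * (N ^ 2 * (ζ x * w ^ 2)) := by ring
  have hψ : 0 ≤ ψ x * ‖g‖ ^ 2 := mul_nonneg (hc.middle_nonneg x) (sq_nonneg _)
  have hζ : 0 ≤ N ^ 2 * (ζ x * w ^ 2) :=
    mul_nonneg (sq_nonneg N) (mul_nonneg (hc.outer_nonneg x) (sq_nonneg w))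
  have := abs_le_of_sq_le_sq
    (hsq.trans (by nlinarith [sq_nonneg (ψ x * ‖g‖ ^ 2 - N ^ 2 * (ζ x * w ^ 2))]) :
      _ ≤ (1 / 2 * (ψ x * ‖g‖ ^ 2) + N ^ 2 / 2 * (ζ x * w ^ 2)) ^ 2) (by linarith)
  exact (neg_le_abs _).trans this

lemma neg_middle_mul_le (hc : NestedCutoffs r b N φ ψ ζ) (hδ : 0 < δ) (x g : E)
    (w P : ℝ) : -(ψ x * w * P) ≤ δ * (P ^ 2 + ‖g‖ ^ 2) + 1 / (4 * δ) * (ζ x * w ^ 2) := by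
  have hψ : ψ x ^ 2 ≤ ζ x :=
    (pow_le_of_le_one (hc.middle_nonneg x) (hc.middle_le_one x) two_ne_zero).trans
      (hc.middle_le_outer x)
  have hsq : 1 / (4 * δ) * (2 * δ * P + ψ x * w) ^ 2 =
      δ * P ^ 2 + ψ x * w * P + 1 / (4 * δ) * (ψ x ^ 2 * w ^ 2) := by
    field_simp
    ring
  have hnonneg : 0 ≤ 1 / (4 * δ) * (2 * δ * P + ψ x * w) ^ 2 + δ * ‖g‖ ^ 2 := by positivity
  have hle : 1 / (4 * δ) * (ψ x ^ 2 * w ^ 2) ≤ 1 / (4 * δ) * (ζ x * w ^ 2) := by gcongr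
  linarith

lemma virial_density_le (hc : NestedCutoffs r b N φ ψ ζ) {c : ℝ} (hc0 : 0 ≤ c) (x g : E)
    (P w : ℝ) :
    -(1 / 2) * φ x * (P ^ 2 + ‖g‖ ^ 2) + (1 / 2 * fderiv ℝ φ x x * (‖g‖ ^ 2 - P ^ 2) -
        fderiv ℝ φ x g * (inner ℝ x g + c * w)) ≤
      -(1 / 2) * (P ^ 2 + ‖g‖ ^ 2) +
        (1 / 2 + (2 + c) * N) * (ψ x * ‖g‖ ^ 2 + (ζ x * P ^ 2 + ζ x * w ^ 2)) := by
  have hN := hc.bound_nonneg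
  have hψ := hc.middle_nonneg x
  have hψζ := hc.middle_le_outer x
  have hloss : (1 - φ x) * (P ^ 2 + ‖g‖ ^ 2) ≤ ψ x * (P ^ 2 + ‖g‖ ^ 2) := by
    gcongr
    exact hc.one_sub_weight_le x
  have hradial : fderiv ℝ φ x x * (‖g‖ ^ 2 - P ^ 2) ≤ N * ψ x * (‖g‖ ^ 2 + P ^ 2) := by
    obtain ⟨hlo, hhi⟩ := abs_le.1 (hc.abs_fderiv_weight_self_le x)
    nlinarith [sq_nonneg ‖g‖, sq_nonneg P]
  have hinner : |fderiv ℝ φ x g * inner ℝ x g| ≤ N * ψ x * ‖g‖ ^ 2 := by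
    rw [abs_mul]
    calc |fderiv ℝ φ x g| * |⟪x, g⟫_ℝ| ≤ (‖fderiv ℝ φ x‖ * ‖g‖) * (‖x‖ * ‖g‖) := by
          gcongr
          · exact (fderiv ℝ φ x).le_opNorm g
          · exact abs_real_inner_le_norm x g
      _ = ‖fderiv ℝ φ x‖ * ‖x‖ * ‖g‖ ^ 2 := by ring
      _ ≤ N * ψ x * ‖g‖ ^ 2 :=
          mul_le_mul_of_nonneg_right (hc.norm_fderiv_weight_mul_norm_le x) (sq_nonneg _)
  have hlower : |fderiv ℝ φ x g * w| ≤ N * ψ x * ((‖g‖ ^ 2 + w ^ 2) / 2) := by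
    rw [abs_mul]
    calc |fderiv ℝ φ x g| * |w| ≤ (N * ψ x * ‖g‖) * |w| := by
          gcongr
          exact ((fderiv ℝ φ x).le_opNorm g).trans (by gcongr; exact hc.norm_fderiv_weight_le x)
      _ = N * ψ x * (‖g‖ * |w|) := by ring
      _ ≤ N * ψ x * ((‖g‖ ^ 2 + w ^ 2) / 2) := by
          gcongr
          nlinarith [sq_nonneg (‖g‖ - |w|), sq_abs w]
  have hlower' := mul_le_mul_of_nonneg_left ((neg_le_abs _).trans hlower) hc0
  have hinner' := (neg_le_abs _).trans hinner
  have hgrad : 0 ≤ (1 / 2 * N + 1 / 2 * c * N) * (ψ x * ‖g‖ ^ 2) := by positivity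
  have hvel : (1 / 2 + 1 / 2 * N) * (ψ x * P ^ 2) ≤
      (1 / 2 + (2 + c) * N) * (ζ x * P ^ 2) := by gcongr; nlinarith
  have hdisp : 1 / 2 * c * N * (ψ x * w ^ 2) ≤ (1 / 2 + (2 + c) * N) * (ζ x * w ^ 2) := by
    gcongr
    nlinarith
  linarith

end NestedCutoffs

end Cutoffs

section Estimates

variable {E : Type*} [NormedAddCommGroup E] [InnerProductSpace ℝ E] [FiniteDimensional ℝ E]
  [MeasurableSpace E] [BorelSpace E] {T r b N ρ δ : ℝ} {K : Set E} {v p : ℝ × E → ℝ}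
  {G : ℝ × E → E} {φ ψ ζ : E → ℝ}

lemma NestedCutoffs.setIntegral_sq_multiplier_le [Nontrivial E] (hc : NestedCutoffs r b N φ ψ ζ)
    (hK : IsConvexBody K) (hbK : ∀ x ∈ frontier K, b ≤ ‖x‖) {w : E → ℝ} {g : E → E}
    (hw : ContDiffOn ℝ 1 w K) (hg : ContinuousOn g K)
    (hwg : ∀ x ∈ interior K, HasFDerivAt w (innerSL ℝ (g x)) x)
    (hρ : ∀ x ∈ interior K, |φ x * inner ℝ x (g x)| ≤ ρ * ‖g x‖) {c : ℝ}
    (hcE : c = (Module.finrank ℝ E - 1) / 2) :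
    ∫ x in interior K, (φ x * (inner ℝ x (g x) + c * w x)) ^ 2 ≤
      ∫ x in interior K, (ρ ^ 2 * ‖g x‖ ^ 2 + 2 * c * N * (ζ x * w x ^ 2)) := by
  have hφ := hc.contDiff_weight
  have hφc := hφ.continuous
  have hζc := hc.continuous_outer
  have hwc := hw.continuousOn
  have hdiv := hK.setIntegral_two_mul_add_eq_zero hw hwg hφ
    fun x hx => hc.weight_eq_zero x (hbK x hx)
  have hdim : (1 : ℝ) ≤ Module.finrank ℝ E := by exact_mod_cast Module.finrank_pos
  have hc0 : 0 ≤ c := by linarith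
  rw [← sub_zero (∫ x in interior K, (φ x * _) ^ 2), ← mul_zero c, ← hdiv, ← integral_const_mul,
    ← integral_sub]
  · refine hK.setIntegral_mono (by fun_prop) (by fun_prop) fun x hx => ?_
    have hgrad : (φ x * inner ℝ x (g x)) ^ 2 ≤ (ρ * ‖g x‖) ^ 2 :=
      sq_le_sq' (abs_le.1 (hρ x hx)).1 (abs_le.1 (hρ x hx)).2
    have hweight : -(φ x * fderiv ℝ φ x x) ≤ N * ζ x := calc
      -(φ x * fderiv ℝ φ x x) ≤ φ x * |fderiv ℝ φ x x| := by
        rw [← mul_neg]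
        exact mul_le_mul_of_nonneg_left (neg_le_abs _) (hc.weight_nonneg x)
      _ ≤ 1 * (N * ψ x) := mul_le_mul (hc.weight_le_one x) (hc.abs_fderiv_weight_self_le x)
        (abs_nonneg _) zero_le_one
      _ ≤ N * ζ x := by
        rw [one_mul]
        exact mul_le_mul_of_nonneg_left (hc.middle_le_outer x) hc.bound_nonneg
    have hlower := mul_le_mul_of_nonneg_left hweight (by positivity : 0 ≤ 2 * c * w x ^ 2)
    have hzeroth : 0 ≤ (c ^ 2 + c) * (φ x ^ 2 * w x ^ 2) := by positivity
    rw [show (Module.finrank ℝ E : ℝ) = 2 * c + 1 by linarith]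
    linarith
  all_goals exact hK.integrableOn_interior (by fun_prop)

lemma NestedCutoffs.neg_setIntegral_middle_mul_le (hc : NestedCutoffs r b N φ ψ ζ)
    (hK : IsConvexBody K) {w P : E → ℝ} {g : E → E} (hw : ContinuousOn w K)
    (hP : ContinuousOn P K) (hg : ContinuousOn g K) (hδ : 0 < δ) :
    -∫ x in interior K, ψ x * w x * P x ≤
      δ * (∫ x in interior K, (P x ^ 2 + ‖g x‖ ^ 2)) +
        1 / (4 * δ) * ∫ x in interior K, ζ x * w x ^ 2 := by
  have hψ := hc.contDiff_middle.continuous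
  have hζ := hc.continuous_outer
  rw [← integral_neg, ← integral_const_mul, ← integral_const_mul, ← integral_add]
  · exact hK.setIntegral_mono (by fun_prop) (by fun_prop) fun x _ =>
      hc.neg_middle_mul_le hδ x (g x) (w x) (P x)
  all_goals exact hK.integrableOn_interior (by fun_prop)

lemma NestedCutoffs.abs_setIntegral_multiplier_le [Nontrivial E] (hc : NestedCutoffs r b N φ ψ ζ)
    (hK : IsConvexBody K) (hbK : ∀ x ∈ frontier K, b ≤ ‖x‖) {w P : E → ℝ} {g : E → E}
    (hw : ContDiffOn ℝ 1 w K) (hP : ContinuousOn P K) (hg : ContinuousOn g K)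
    (hwg : ∀ x ∈ interior K, HasFDerivAt w (innerSL ℝ (g x)) x) (hρ : 0 < ρ)
    (hφg : ∀ x ∈ interior K, |φ x * inner ℝ x (g x)| ≤ ρ * ‖g x‖) {c : ℝ}
    (hcE : c = (Module.finrank ℝ E - 1) / 2) :
    |∫ x in interior K, φ x * P x * (inner ℝ x (g x) + c * w x)| ≤
      ρ / 2 * (∫ x in interior K, (P x ^ 2 + ‖g x‖ ^ 2)) +
        c * N / ρ * ∫ x in interior K, ζ x * w x ^ 2 := by
  have hφ := hc.contDiff_weight.continuous
  have hζ := hc.continuous_outer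
  have hwc := hw.continuousOn
  have hyoung (y z : ℝ) : |y * z| ≤ ρ / 2 * y ^ 2 + 1 / (2 * ρ) * z ^ 2 := by
    have h : 0 ≤ 1 / (2 * ρ) * (ρ * |y| - |z|) ^ 2 := by positivity
    have heq : 1 / (2 * ρ) * (ρ * |y| - |z|) ^ 2 =
        ρ / 2 * |y| ^ 2 + 1 / (2 * ρ) * |z| ^ 2 - |y| * |z| := by
      field_simp
      ring
    rw [sq_abs, sq_abs, ← abs_mul] at heq
    linarith
  calc |∫ x in interior K, φ x * P x * (inner ℝ x (g x) + c * w x)|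
      ≤ ∫ x in interior K, |φ x * P x * (inner ℝ x (g x) + c * w x)| :=
        abs_integral_le_integral_abs
    _ ≤ ∫ x in interior K, (ρ / 2 * P x ^ 2 +
          1 / (2 * ρ) * (φ x * (inner ℝ x (g x) + c * w x)) ^ 2) :=
        hK.setIntegral_mono (by fun_prop) (by fun_prop) fun x _ => by
          convert hyoung (P x) (φ x * (inner ℝ x (g x) + c * w x)) using 2
          ring
    _ ≤ ρ / 2 * (∫ x in interior K, P x ^ 2) + 1 / (2 * ρ) *
          ∫ x in interior K, (ρ ^ 2 * ‖g x‖ ^ 2 + 2 * c * N * (ζ x * w x ^ 2)) := by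
        rw [hK.setIntegral_const_mul_add (by fun_prop) (by fun_prop)]
        exact add_le_add le_rfl (mul_le_mul_of_nonneg_left
          (hc.setIntegral_sq_multiplier_le hK hbK hw hg hwg hφg hcE) (by positivity))
    _ = _ := by
        rw [hK.setIntegral_const_mul_add (by fun_prop) (by fun_prop),
          integral_add (hK.integrableOn_interior (by fun_prop))
            (hK.integrableOn_interior (by fun_prop))]
        field_simp
        ring

lemma le_mul_of_absorbed_estimates {a d k C M e F U V Ψ : ℝ} (hd : 0 < d) (ha : 0 ≤ a)
    (hC : 0 < C) (hM : 0 ≤ M) (hU : 0 ≤ U) (hV : 0 ≤ V)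
    (hvirial : d / 2 * e ≤ a * U + C * (Ψ + (F + V)))
    (hequi : 1 / 2 * Ψ ≤ F + M * V + d / (8 * C) * e + 1 / (4 * (d / (8 * C))) * U)
    (hdisp : U + 1 / 2 * V ≤ k * F) :
    e ≤ 4 / d * ((a + 4 * C ^ 2 / d) * k + C * (2 * M + 1) * (2 * k) + 3 * C) * F := by
  have hΨ : C * Ψ ≤ C * (2 * F + 2 * M * V) + d / 4 * e + 4 * C ^ 2 / d * U := calc
    C * Ψ = 2 * C * (1 / 2 * Ψ) := by ring
    _ ≤ 2 * C * (F + M * V + d / (8 * C) * e + 1 / (4 * (d / (8 * C))) * U) :=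
      mul_le_mul_of_nonneg_left hequi (by positivity)
    _ = _ := by
      field_simp
      ring
  have habsorb : d / 4 * e ≤ (a + 4 * C ^ 2 / d) * U + C * (2 * M + 1) * V + 3 * C * F := by
    linarith
  have hUk := mul_le_mul_of_nonneg_left (by linarith : U ≤ k * F)
    (by positivity : 0 ≤ a + 4 * C ^ 2 / d)
  have hVk := mul_le_mul_of_nonneg_left (by linarith : V ≤ 2 * k * F)
    (by positivity : 0 ≤ C * (2 * M + 1))
  calc e = 4 / d * (d / 4 * e) := by field_simp
    _ ≤ 4 / d * (((a + 4 * C ^ 2 / d) * k + C * (2 * M + 1) * (2 * k) + 3 * C) * F) :=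
      mul_le_mul_of_nonneg_left (habsorb.trans (by linarith)) (by positivity)
    _ = _ := by ring

namespace IsDirichletWave

lemma displacement_estimate (hw : IsDirichletWave T K v p G) (hK : IsConvexBody K) (hT : 0 < T)
    (hζ : Continuous ζ) (hζ0 : ∀ x, 0 ≤ ζ x) (hv0 : ∀ x ∈ K, ζ x * v (0, x) ^ 2 = 0) :
    (∫ x in interior K, ζ x * v (T, x) ^ 2) +
        1 / 2 * ∫ z in interior (cylinder T K), ζ z.2 * v z ^ 2 ≤
      2 * (T + 1) ^ 2 * ∫ z in interior (cylinder T K), ζ z.2 * p z ^ 2 := by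
  have hv := hw.contDiffOn_displacement.continuousOn
  have hp := hw.contDiffOn_velocity.continuousOn
  have hcyl := isConvexBody_cylinder hT hK
  have hfinal := hw.setIntegral_displacement hK hT hζ
  rw [setIntegral_eq_zero_of_forall_eq_zero (f := fun x => (T + 1 - 0) * (ζ x * v (0, x) ^ 2))
    fun x hx => by rw [hv0 x (interior_subset hx), mul_zero]] at hfinal
  simp only [add_sub_cancel_left, one_mul, sub_zero] at hfinal
  rw [← hfinal, ← integral_const_mul, ← integral_const_mul, ← integral_add]
  · refine hcyl.setIntegral_mono (by fun_prop) (by fun_prop) fun z hz => ?_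
    have ht : (T + 1 - z.1) ^ 2 ≤ (T + 1) ^ 2 := by
      have := (interior_subset hz).1
      gcongr <;> linarith [this.1, this.2]
    have hamgm : (T + 1 - z.1) * (2 * v z * p z) ≤ 1 / 2 * v z ^ 2 + 2 * (T + 1) ^ 2 * p z ^ 2 := by
      nlinarith [sq_nonneg (v z - 2 * (T + 1 - z.1) * p z), sq_nonneg (p z)]
    nlinarith [mul_le_mul_of_nonneg_left hamgm (hζ0 z.2)]
  all_goals exact hcyl.integrableOn_interior (by fun_prop)

lemma equipartition_estimate (hw : IsDirichletWave T K v p G) (hK : IsConvexBody K) (hT : 0 < T)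
    (hc : NestedCutoffs r b N φ ψ ζ) (hv0 : ∀ x ∈ K, ζ x * v (0, x) ^ 2 = 0) (hδ : 0 < δ) :
    1 / 2 * ∫ z in interior (cylinder T K), ψ z.2 * ‖G z‖ ^ 2 ≤
      (∫ z in interior (cylinder T K), ζ z.2 * p z ^ 2) +
        N ^ 2 / 2 * (∫ z in interior (cylinder T K), ζ z.2 * v z ^ 2) +
        δ * energy K p G T + 1 / (4 * δ) * ∫ x in interior K, ζ x * v (T, x) ^ 2 := by
  have hv := hw.contDiffOn_displacement.continuousOn
  have hp := hw.contDiffOn_velocity.continuousOn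
  have hG := hw.contDiffOn_gradient.continuousOn
  have hψ := hc.contDiff_middle.continuous
  have hDψ := hc.contDiff_middle.continuous_fderiv one_ne_zero
  have hζ := hc.continuous_outer
  have hcyl := isConvexBody_cylinder hT hK
  have hidentity := hw.setIntegral_equipartition hK hT hc.contDiff_middle
  rw [setIntegral_eq_zero_of_forall_eq_zero (f := fun x => ψ x * v (0, x) * p (0, x)) fun x hx => by
    rw [hc.middle_mul_eq_zero (hv0 x (interior_subset hx)), zero_mul], sub_zero] at hidentity
  have hspace : 1 / 2 * ∫ z in interior (cylinder T K), ψ z.2 * ‖G z‖ ^ 2 ≤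
      (∫ z in interior (cylinder T K), ζ z.2 * p z ^ 2) +
        N ^ 2 / 2 * (∫ z in interior (cylinder T K), ζ z.2 * v z ^ 2) -
        ∫ x in interior K, ψ x * v (T, x) * p (T, x) := by
    rw [← hidentity, ← integral_const_mul, ← integral_const_mul, ← integral_add, ← integral_sub]
    · refine hcyl.setIntegral_mono (by fun_prop) (by fun_prop) fun z _ => ?_
      linarith [hc.neg_mul_fderiv_middle_le z.2 (G z) (v z),
        mul_le_mul_of_nonneg_right (hc.middle_le_outer z.2) (sq_nonneg (p z))]
    all_goals exact hcyl.integrableOn_interior (by fun_prop)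
  have hT' : T ∈ Icc 0 T := right_mem_Icc.2 hT.le
  have htime := hc.neg_setIntegral_middle_mul_le hK (continuousOn_spaceSlice hv hT')
    (continuousOn_spaceSlice hp hT') (continuousOn_spaceSlice hG hT') hδ
  rw [energy]
  linarith

lemma virial_estimate [Nontrivial E] (hw : IsDirichletWave T K v p G) (hK : IsConvexBody K)
    (hT : 0 < T) (hc : NestedCutoffs r b N φ ψ ζ) (hbK : ∀ x ∈ frontier K, b ≤ ‖x‖) {c : ℝ}
    (hcE : c = (Module.finrank ℝ E - 1) / 2) :
    (∫ x in interior K, φ x * p (T, x) * multiplier v G (T, x)) -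
        ∫ x in interior K, φ x * p (0, x) * multiplier v G (0, x) ≤
      -(T / 2) * energy K p G 0 + (1 / 2 + (2 + c) * N) *
        ((∫ z in interior (cylinder T K), ψ z.2 * ‖G z‖ ^ 2) +
          ((∫ z in interior (cylinder T K), ζ z.2 * p z ^ 2) +
            ∫ z in interior (cylinder T K), ζ z.2 * v z ^ 2)) := by
  have hv := hw.contDiffOn_displacement.continuousOn
  have hp := hw.contDiffOn_velocity.continuousOn
  have hG := hw.contDiffOn_gradient.continuousOn
  have hm := hw.contDiffOn_multiplier.continuousOn
  have hφ := hc.contDiff_weight.continuous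
  have hDφ := hc.contDiff_weight.continuous_fderiv one_ne_zero
  have hψ := hc.contDiff_middle.continuous
  have hζ := hc.continuous_outer
  have hcyl := isConvexBody_cylinder hT hK
  have hdim : (1 : ℝ) ≤ Module.finrank ℝ E := by exact_mod_cast Module.finrank_pos
  have henergy : -(T / 2) * energy K p G 0 =
      -(1 / 2) * ∫ z in interior (cylinder T K), (p z ^ 2 + ‖G z‖ ^ 2) := by
    rw [hw.setIntegral_energy hK hT]
    ring
  rw [← hw.setIntegral_virial hK hT hc.contDiff_weight fun x hx => hc.weight_eq_zero x (hbK x hx),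
    henergy, ← integral_add, ← integral_add, ← integral_const_mul, ← integral_const_mul,
    ← integral_add]
  · refine hcyl.setIntegral_mono (by fun_prop) (by fun_prop) fun z _ => ?_
    have h := hc.virial_density_le (by linarith : 0 ≤ c) z.2 (G z) (p z) (v z)
    rw [multiplier, ← hcE]
    linarith
  all_goals exact hcyl.integrableOn_interior (by fun_prop)

lemma abs_setIntegral_multiplier_le [Nontrivial E] (hw : IsDirichletWave T K v p G)
    (hK : IsConvexBody K) (hc : NestedCutoffs r b N φ ψ ζ) (hbK : ∀ x ∈ frontier K, b ≤ ‖x‖)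
    {t : ℝ} (ht : t ∈ Icc 0 T) (hρ : 0 < ρ)
    (hφG : ∀ x ∈ interior K, |φ x * inner ℝ x (G (t, x))| ≤ ρ * ‖G (t, x)‖) {c : ℝ}
    (hcE : c = (Module.finrank ℝ E - 1) / 2) :
    |∫ x in interior K, φ x * p (t, x) * multiplier v G (t, x)| ≤
      ρ / 2 * energy K p G t + c * N / ρ * ∫ x in interior K, ζ x * v (t, x) ^ 2 := by
  simp only [multiplier, ← hcE]
  exact hc.abs_setIntegral_multiplier_le hK hbK
    (contDiffOn_spaceSlice hw.contDiffOn_displacement ht)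
    (continuousOn_spaceSlice hw.contDiffOn_velocity.continuousOn ht)
    (continuousOn_spaceSlice hw.contDiffOn_gradient.continuousOn ht)
    (fun x hx => hw.hasFDerivAt_space ht hx) hρ hφG hcE

lemma exists_energy_le [Nontrivial E] {α : ℝ} (hα : 0 < α) (hb : 0 < b) (hT : α + b < T)
    (hK : IsConvexBody K) (hbK : ∀ x ∈ frontier K, b ≤ ‖x‖) (hc : NestedCutoffs r b N φ ψ ζ) :
    ∃ C : ℝ, 0 < C ∧ ∀ v p G, IsDirichletWave T K v p G →
      (∀ x ∈ K, ζ x * v (0, x) ^ 2 = 0) → (∀ x ∈ interior K, α < ‖x‖ → G (0, x) = 0) →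
      energy K p G 0 ≤ C * ∫ z in interior (cylinder T K), ζ z.2 * p z ^ 2 := by
  obtain ⟨c, hcE⟩ : ∃ c : ℝ, c = (Module.finrank ℝ E - 1) / 2 := ⟨_, rfl⟩
  have hdim : (1 : ℝ) ≤ Module.finrank ℝ E := by exact_mod_cast Module.finrank_pos
  have hc0 : 0 ≤ c := by linarith
  have hN := hc.bound_nonneg
  have hT0 : 0 < T := by linarith
  have hd : 0 < T - α - b := by linarith
  set k : ℝ := 2 * (T + 1) ^ 2
  set C₁ : ℝ := 1 / 2 + (2 + c) * N
  have hC₁ : 0 < C₁ := by positivity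
  have hδ : 0 < (T - α - b) / (8 * C₁) := by positivity
  refine ⟨4 / (T - α - b) * ((c * N / b + 4 * C₁ ^ 2 / (T - α - b)) * k +
    C₁ * (2 * (N ^ 2 / 2) + 1) * (2 * k) + 3 * C₁), by positivity, fun v p G hw hv0 hG0 => ?_⟩
  have hdisp := hw.displacement_estimate hK hT0 hc.continuous_outer hc.outer_nonneg hv0
  have hequi := hw.equipartition_estimate hK hT0 hc hv0 hδ
  have hvirial : _ ≤ -(T / 2) * energy K p G 0 + C₁ * _ := hw.virial_estimate hK hT0 hc hbK hcE
  have hfinal := hw.abs_setIntegral_multiplier_le hK hc hbK (right_mem_Icc.2 hT0.le) hb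
    (fun x _ => hc.abs_weight_mul_inner_le (hc.weight_mul_norm_le hb.le x) _) hcE
  have hinitial := hw.abs_setIntegral_multiplier_le hK hc hbK (left_mem_Icc.2 hT0.le) hα
    (fun x hx => hc.abs_weight_mul_inner_le_of_eq_zero (hG0 x hx)) hcE
  rw [setIntegral_eq_zero_of_forall_eq_zero (f := fun x => ζ x * v (0, x) ^ 2)
    fun x hx => hv0 x (interior_subset hx), mul_zero, add_zero] at hinitial
  rw [hw.energy_eq hK hT0] at hequi hfinal
  refine le_mul_of_absorbed_estimates hd (by positivity) hC₁ (by positivity)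
    (integral_nonneg fun x => mul_nonneg (hc.outer_nonneg x) (sq_nonneg _))
    (integral_nonneg fun z : ℝ × E => mul_nonneg (hc.outer_nonneg z.2) (sq_nonneg _)) ?_ hequi hdisp
  linarith [(abs_le.1 hfinal).1, (abs_le.1 hinitial).2]

end IsDirichletWave

end Estimates

section ClassicalSolutions

variable {E : Type*} [NormedAddCommGroup E] [InnerProductSpace ℝ E] {T : ℝ} {K : Set E}
  {v : ℝ × E → ℝ}

/-- The time derivative of `v` on the cylinder over `K`, one-sided on the boundary of the
cylinder. -/
noncomputable def cylinderVelocity (T : ℝ) (K : Set E) (v : ℝ × E → ℝ) (z : ℝ × E) : ℝ :=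
  fderivWithin ℝ v (cylinder T K) z (1, 0)

lemma cylinderVelocity_eq_derivWithin (hT : 0 < T) (hv : DifferentiableOn ℝ v (cylinder T K))
    {t : ℝ} (ht : t ∈ Icc 0 T) {x : E} (hx : x ∈ K) :
    cylinderVelocity T K v (t, x) = derivWithin (fun s => v (s, x)) (Icc 0 T) t :=
  ((hasDerivWithinAt_timeSlice hx (hv (t, x) ⟨ht, hx⟩).hasFDerivWithinAt).derivWithin
    (uniqueDiffOn_Icc hT t ht)).symm

lemma cylinderVelocity_eq_deriv (hv : DifferentiableOn ℝ v (cylinder T K)) {t : ℝ}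
    (ht : t ∈ Ioo 0 T) {x : E} (hx : x ∈ K) :
    cylinderVelocity T K v (t, x) = deriv (fun s => v (s, x)) t := by
  rw [cylinderVelocity_eq_derivWithin (ht.1.trans ht.2) hv (Ioo_subset_Icc_self ht) hx,
    derivWithin_of_mem_nhds (Icc_mem_nhds ht.1 ht.2)]

variable [FiniteDimensional ℝ E]

lemma hasDivergenceAt_gradient {f : E → ℝ} {x : E} (hf : ContDiffAt ℝ 2 f x) :
    HasDivergenceAt (gradient f) (Laplacian.laplacian f x) x := by
  have hdf : DifferentiableAt ℝ (fderiv ℝ f) x :=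
    (hf.fderiv_right (m := 1) (by norm_num)).differentiableAt one_ne_zero
  let Φ : (E →L[ℝ] ℝ) ≃ₗᵢ[ℝ] E := (InnerProductSpace.toDual ℝ E).symm
  have hΦ (l : E →L[ℝ] ℝ) (y : E) : ⟪y, Φ l⟫_ℝ = l y := by
    rw [real_inner_comm]
    exact InnerProductSpace.toDual_symm_apply
  refine ⟨(Φ : (E →L[ℝ] ℝ) →L[ℝ] E).comp (fderiv ℝ (fderiv ℝ f) x),
    Φ.toContinuousLinearEquiv.hasFDerivAt.comp x hdf.hasFDerivAt, ?_⟩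
  rw [InnerProductSpace.laplacian_eq_iteratedFDeriv_stdOrthonormalBasis,
    LinearMap.trace_eq_sum_inner _ (stdOrthonormalBasis ℝ E)]
  refine Finset.sum_congr rfl fun i _ => ?_
  simp [hΦ, iteratedFDeriv_two_apply]

/-- The spatial gradient of `v` on the cylinder over `K`, one-sided on the boundary of the
cylinder. -/
noncomputable def cylinderGradient (T : ℝ) (K : Set E) (v : ℝ × E → ℝ) (z : ℝ × E) : E :=
  (InnerProductSpace.toDual ℝ E).symm
    ((fderivWithin ℝ v (cylinder T K) z).comp (ContinuousLinearMap.inr ℝ ℝ E))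

lemma hasFDerivWithinAt_cylinder (hv : DifferentiableOn ℝ v (cylinder T K)) {z : ℝ × E}
    (hz : z ∈ cylinder T K) : HasFDerivWithinAt v
      (cylinderVelocity T K v z • ContinuousLinearMap.fst ℝ ℝ E +
        (innerSL ℝ (cylinderGradient T K v z)).comp (ContinuousLinearMap.snd ℝ ℝ E))
      (cylinder T K) z := by
  convert (hv z hz).hasFDerivWithinAt using 1
  ext <;> simp [cylinderVelocity, cylinderGradient]

lemma cylinderGradient_eq_gradient (hv : DifferentiableOn ℝ v (cylinder T K)) {t : ℝ}
    (ht : t ∈ Icc 0 T) {x : E} (hx : x ∈ interior K) :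
    cylinderGradient T K v (t, x) = gradient (fun y => v (t, y)) x := by
  have h := (hasFDerivWithinAt_spaceSlice ht (hv (t, x)
    ⟨ht, interior_subset hx⟩).hasFDerivWithinAt).hasFDerivAt (mem_interior_iff_mem_nhds.1 hx)
  rw [gradient, h.fderiv, cylinderGradient]

lemma sq_deriv_le_sq_derivWithin {f : ℝ → ℝ} {s : Set ℝ} {t : ℝ} (hs : UniqueDiffWithinAt ℝ s t) :
    deriv f t ^ 2 ≤ derivWithin f s t ^ 2 := by
  by_cases hf : DifferentiableAt ℝ f t
  · rw [hf.derivWithin hs]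
  · rw [deriv_zero_of_not_differentiableAt hf, zero_pow two_ne_zero]
    exact sq_nonneg _

lemma isDirichletWave_of_contDiffOn (hT : 0 < T) (hK : IsConvexBody K)
    (hv : ContDiffOn ℝ 2 v (cylinder T K))
    (hwave : ∀ t ∈ Ioo 0 T, ∀ x ∈ interior K, deriv (deriv fun s => v (s, x)) t =
      Laplacian.laplacian (fun y => v (t, y)) x)
    (hv0 : ∀ t ∈ Icc 0 T, ∀ x ∈ frontier K, v (t, x) = 0) :
    IsDirichletWave T K v (cylinderVelocity T K v) (cylinderGradient T K v) := by
  have hdiff := hv.differentiableOn two_ne_zero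
  have hDv : ContDiffOn ℝ 1 (fderivWithin ℝ v (cylinder T K)) (cylinder T K) :=
    hv.fderivWithin (isConvexBody_cylinder hT hK).uniqueDiffOn (by norm_num)
  refine ⟨hv.of_le one_le_two, hDv.clm_apply contDiffOn_const, ?_,
    fun z hz => hasFDerivWithinAt_cylinder hdiff hz, fun z hz => ?_, hv0⟩
  · exact (InnerProductSpace.toDual ℝ E).symm.contDiff.comp_contDiffOn
      (hDv.clm_comp contDiffOn_const)
  · have hnhds := mem_interior_iff_mem_nhds.1 hz
    obtain ⟨t, x⟩ := z
    obtain ⟨ht, hx⟩ : t ∈ Ioo 0 T ∧ x ∈ interior K := by rwa [interior_cylinder] at hz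
    have hC2 : ContDiffAt ℝ 2 (fun y => v (t, y)) x :=
      (hv.contDiffAt hnhds).comp x (by fun_prop)
    have hvel : (fun s => cylinderVelocity T K v (s, x)) =ᶠ[𝓝 t] deriv fun s => v (s, x) := by
      filter_upwards [Ioo_mem_nhds ht.1 ht.2] with s hs
      exact cylinderVelocity_eq_deriv hdiff hs (interior_subset hx)
    have hgrad : (fun y => cylinderGradient T K v (t, y)) =ᶠ[𝓝 x] gradient fun y => v (t, y) := by
      filter_upwards [isOpen_interior.mem_nhds hx] with y hy
      exact cylinderGradient_eq_gradient hdiff (Ioo_subset_Icc_self ht) hy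
    obtain ⟨A, hA, htrace⟩ := hasDivergenceAt_gradient hC2
    refine ⟨A, hA.congr_of_eventuallyEq hgrad, ?_⟩
    rw [htrace, hvel.deriv_eq, hwave t ht x hx]

lemma setIntegral_deriv_le_setIntegral_derivWithin [MeasurableSpace E] [BorelSpace E] (hT : 0 < T)
    (hK : IsConvexBody K) (hv : ContDiffOn ℝ 1 v (cylinder T K)) {t : ℝ} (ht : t ∈ Icc 0 T) :
    ∫ x in interior K, (‖gradient (fun y => v (t, y)) x‖ ^ 2 + deriv (fun s => v (s, x)) t ^ 2) ≤
      ∫ x in interior K, (‖gradient (fun y => v (t, y)) x‖ ^ 2 +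
        derivWithin (fun s => v (s, x)) (Icc 0 T) t ^ 2) := by
  have hdiff := hv.differentiableOn one_ne_zero
  have hDv : ContinuousOn (fun x => fderivWithin ℝ v (cylinder T K) (t, x)) K :=
    continuousOn_spaceSlice
      (hv.continuousOn_fderivWithin (isConvexBody_cylinder hT hK).uniqueDiffOn le_rfl) ht
  have hvel : ContinuousOn (fun x => cylinderVelocity T K v (t, x)) K :=
    hDv.clm_apply continuousOn_const
  have hgrad : ContinuousOn (fun x => cylinderGradient T K v (t, x)) K :=
    (InnerProductSpace.toDual ℝ E).symm.continuous.comp_continuousOn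
      (hDv.clm_comp continuousOn_const)
  refine integral_mono_of_nonneg (Eventually.of_forall fun x => by positivity) ?_
    (Eventually.of_forall fun x =>
      add_le_add le_rfl (sq_deriv_le_sq_derivWithin (uniqueDiffOn_Icc hT t ht)))
  refine (hK.integrableOn_interior ((hgrad.norm.pow 2).add (hvel.pow 2))).congr_fun
    (fun x hx => ?_) isOpen_interior.measurableSet
  simp only [Pi.add_apply, Pi.pow_apply, cylinderGradient_eq_gradient hdiff ht hx,
    cylinderVelocity_eq_derivWithin hT hdiff ht (interior_subset hx)]

end ClassicalSolutions

section Observability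

variable {E : Type*} [NormedAddCommGroup E] [InnerProductSpace ℝ E] [FiniteDimensional ℝ E]
  [MeasurableSpace E] [BorelSpace E] {T r α : ℝ} {K : Set E}

lemma NestedCutoffs.setIntegral_outer_mul_le {b N : ℝ} {φ ψ ζ : E → ℝ}
    (hc : NestedCutoffs r b N φ ψ ζ) (hK : IsConvexBody K) (hT : 0 < T) {g : ℝ × E → ℝ}
    (hg : ContinuousOn g (cylinder T K)) (hg0 : ∀ z, 0 ≤ g z) :
    ∫ z in interior (cylinder T K), ζ z.2 * g z ≤
      ∫ t in Ioo 0 T, ∫ x in {x ∈ interior K | r < ‖x‖}, g (t, x) := by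
  have hcyl := isConvexBody_cylinder hT hK
  have hζ := hc.continuous_outer
  have hsub : Ioo 0 T ×ˢ {x ∈ interior K | r < ‖x‖} ⊆ interior (cylinder T K) := by
    rw [interior_cylinder]
    exact prod_mono_right fun x hx => hx.1
  have hmeas : MeasurableSet (Ioo 0 T ×ˢ {x ∈ interior K | r < ‖x‖}) :=
    measurableSet_Ioo.prod (isOpen_interior.inter
      (isOpen_lt continuous_const continuous_norm)).measurableSet
  have hint : IntegrableOn g (Ioo 0 T ×ˢ {x ∈ interior K | r < ‖x‖}) :=
    (hcyl.integrableOn_interior hg).mono_set hsub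
  have hintζ : IntegrableOn (fun z => ζ z.2 * g z) (interior (cylinder T K)) :=
    hcyl.integrableOn_interior (by fun_prop)
  rw [← setIntegral_prod g hint,
    setIntegral_eq_of_subset_of_forall_sdiff_eq_zero isOpen_interior.measurableSet hsub]
  · exact setIntegral_mono_on (hintζ.mono_set hsub) hint hmeas fun z _ =>
      mul_le_of_le_one_left (hg0 z) (hc.outer_le_one z.2)
  · rintro z ⟨hz, hz'⟩
    rw [interior_cylinder] at hz
    rw [hc.outer_eq_zero z.2 (not_lt.1 fun h => hz' ⟨hz.1, hz.2, h⟩), zero_mul]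

lemma IsDirichletWave.exists_energy_le_setIntegral_velocity [Nontrivial E] (hα : 0 < α)
    (hαr : α ≤ r) (hT : α + r < T) (hK : IsConvexBody K) (hrK : ∀ x ∈ frontier K, r < ‖x‖) :
    ∃ C : ℝ, 0 < C ∧ ∀ v p G, IsDirichletWave T K v p G →
      (∀ x ∈ K, α ≤ ‖x‖ → v (0, x) = 0) →
      energy K p G 0 ≤
        C * ∫ t in Ioo 0 T, ∫ x in {x ∈ interior K | r < ‖x‖}, p (t, x) ^ 2 := by
  have hr : 0 < r := hα.trans_le hαr
  have hT0 : 0 < T := by linarith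
  obtain ⟨b₀, hrb₀, hb₀⟩ := (hK.isCompact.of_isClosed_subset isClosed_frontier
    hK.isCompact.isClosed.frontier_subset).exists_forall_le' continuous_norm.continuousOn hrK
  obtain ⟨b, hrb, hb⟩ := exists_between (lt_min hrb₀ (by linarith : r < T - α))
  obtain ⟨hbb₀, hbT⟩ := lt_min_iff.1 hb
  obtain ⟨N, φ, ψ, ζ, hc⟩ := exists_nestedCutoffs (E := E) hr hrb
  obtain ⟨C, hC, hest⟩ := exists_energy_le hα (hr.trans hrb) (by linarith : α + b < T) hK
    (fun x hx => hbb₀.le.trans (hb₀ x hx)) hc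
  refine ⟨C, hC, fun v p G hw hsupp => (hest v p G hw (fun x hx => ?_) fun x hx hαx => ?_).trans
    (mul_le_mul_of_nonneg_left (hc.setIntegral_outer_mul_le hK hT0
      (hw.contDiffOn_velocity.continuousOn.pow 2) fun z => sq_nonneg (p z)) hC.le)⟩
  · rcases le_total ‖x‖ α with hxα | hαx
    · rw [hc.outer_eq_zero x (hxα.trans hαr), zero_mul]
    · rw [hsupp x hx hαx, zero_pow two_ne_zero, mul_zero]
  · refine hw.gradient_eq_zero_of_eventuallyEq (left_mem_Icc.2 hT0.le) hx ?_
    filter_upwards [isOpen_interior.mem_nhds hx,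
      (isOpen_lt continuous_const continuous_norm).mem_nhds hαx] with y hy hαy
    exact hsupp y (interior_subset hy) (le_of_lt hαy)

end Observability

lemma laplacian_eq_lap {n : ℕ} (f : EuclideanSpace ℝ (Fin n) → ℝ) :
    Laplacian.laplacian f = lap f := by
  rw [InnerProductSpace.laplacian_eq_iteratedFDeriv_orthonormalBasis f
    (EuclideanSpace.basisFun (Fin n) ℝ)]
  ext x
  simp only [EuclideanSpace.basisFun_apply, lap]

end WaveObservability

open WaveObservability

theorem observability_ball_localized_general {E : Type*} [NormedAddCommGroup E]
    [InnerProductSpace ℝ E] [FiniteDimensional ℝ E] [MeasurableSpace E] [BorelSpace E]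
    [Nontrivial E] {K : Set E} (hK : IsConvexBody K) {α r T : ℝ} (hα : 0 < α) (hαr : α ≤ r)
    (hrK : ∀ x ∈ frontier K, r < ‖x‖) (hT : α + r < T) :
    ∃ C : ℝ, 0 < C ∧ ∀ u : ℝ → E → ℝ,
      ContDiffOn ℝ 2 (Function.uncurry u) (Set.Icc 0 T ×ˢ K) →
      (∀ t ∈ Set.Ioo 0 T, ∀ x ∈ interior K,
        deriv (deriv fun s => u s x) t = Laplacian.laplacian (u t) x) →
      (∀ t ∈ Set.Icc 0 T, ∀ x ∈ frontier K, u t x = 0) →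
      (∀ x ∈ K, α ≤ ‖x‖ → u 0 x = 0) →
      ∫ x in interior K,
          (‖gradient (u 0) x‖ ^ 2 + derivWithin (fun s => u s x) (Set.Icc 0 T) 0 ^ 2) ≤
        C * ∫ t in Set.Ioo 0 T, ∫ x in {x ∈ interior K | r < ‖x‖},
          deriv (fun s => u s x) t ^ 2 := by
  have hT0 : 0 < T := by linarith
  obtain ⟨C, hC, hest⟩ := IsDirichletWave.exists_energy_le_setIntegral_velocity hα hαr hT hK hrK
  refine ⟨C, hC, fun u hu hwave hu0 hsupp => ?_⟩
  have hdiff := hu.differentiableOn two_ne_zero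
  have hmeas := (isOpen_interior (s := K)).measurableSet
  calc ∫ x in interior K,
          (‖gradient (u 0) x‖ ^ 2 + derivWithin (fun s => u s x) (Set.Icc 0 T) 0 ^ 2)
      = energy K (cylinderVelocity T K (Function.uncurry u))
          (cylinderGradient T K (Function.uncurry u)) 0 := ?_
    _ ≤ _ := hest _ _ _ (isDirichletWave_of_contDiffOn hT0 hK hu hwave hu0) hsupp
    _ = _ := ?_
  · refine setIntegral_congr_fun hmeas fun x hx => ?_
    have h0 := Set.left_mem_Icc.2 hT0.le
    simp only [cylinderVelocity_eq_derivWithin hT0 hdiff h0 (interior_subset hx),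
      cylinderGradient_eq_gradient hdiff h0 hx]
    exact add_comm _ _
  · congr 1
    refine setIntegral_congr_fun measurableSet_Ioo fun t ht => ?_
    refine setIntegral_congr_fun
      (hmeas.inter (isOpen_lt continuous_const continuous_norm).measurableSet) fun x hx => ?_
    simp only [cylinderVelocity_eq_deriv hdiff ht (interior_subset hx.1)]
    rfl

theorem observability_ball_localized (n : ℕ) (hn : 1 ≤ n) (ε α T : ℝ)
    (hε0 : 0 < ε) (hε1 : ε < 1) (hα0 : 0 < α) (hα : α < 1 - ε) (hT : 1 + α - ε < T) :
    ∃ C : ℝ, 0 < C ∧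
      ∀ u : ℝ → EuclideanSpace ℝ (Fin n) → ℝ,
        -- u is of class C² on [0,T] × closure(Ω)
        ContDiffOn ℝ 2 (Function.uncurry u)
          (Set.Icc 0 T ×ˢ Metric.closedBall (0 : EuclideanSpace ℝ (Fin n)) 1) →
        -- u solves the wave equation on [0,T] × closure(Ω)
        (∀ t ∈ Set.Icc (0 : ℝ) T, ∀ x ∈ Metric.closedBall (0 : EuclideanSpace ℝ (Fin n)) 1,
          pdt (pdt u) t x = lap (u t) x) →
        -- Dirichlet boundary conditions
        (∀ t ∈ Set.Icc (0 : ℝ) T, ∀ x : EuclideanSpace ℝ (Fin n), ‖x‖ = 1 → u t x = 0) →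
        -- initial data supported in the closed ball of radius α
        (∀ x : EuclideanSpace ℝ (Fin n), α ≤ ‖x‖ → ‖x‖ ≤ 1 → u 0 x = 0 ∧ pdt u 0 x = 0) →
        -- observability inequality with observation in the annulus
        ∫ x in Metric.ball (0 : EuclideanSpace ℝ (Fin n)) 1,
            (‖gradient (u 0) x‖ ^ 2 + (pdt u 0 x) ^ 2) ≤
          C * ∫ t in Set.Ioo (0 : ℝ) T,
                ∫ x in {x : EuclideanSpace ℝ (Fin n) | 1 - ε < ‖x‖ ∧ ‖x‖ < 1},
                  (pdt u t x) ^ 2 := by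
  have : Nonempty (Fin n) := ⟨⟨0, hn⟩⟩
  have hball := isConvexBody_closedBall (0 : EuclideanSpace ℝ (Fin n)) one_pos
  have hsphere : ∀ x ∈ frontier (Metric.closedBall (0 : EuclideanSpace ℝ (Fin n)) 1), ‖x‖ = 1 :=
    fun x hx => by rwa [frontier_closedBall 0 one_ne_zero, mem_sphere_zero_iff_norm] at hx
  have hannulus : {x : EuclideanSpace ℝ (Fin n) | 1 - ε < ‖x‖ ∧ ‖x‖ < 1} =
      {x ∈ interior (Metric.closedBall 0 1) | 1 - ε < ‖x‖} := by
    rw [interior_closedBall 0 one_ne_zero]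
    ext x
    simp only [Set.mem_ofPred_eq, mem_ball_zero_iff, and_comm]
  obtain ⟨C, hC, hest⟩ := observability_ball_localized_general hball hα0 hα.le
    (fun x hx => by linarith [hsphere x hx]) (by linarith : α + (1 - ε) < T)
  refine ⟨C, hC, fun u hu hwave hdirichlet hsupp => ?_⟩
  rw [hannulus, ← interior_closedBall 0 one_ne_zero]
  have hT0 : 0 < T := by linarith
  refine (setIntegral_deriv_le_setIntegral_derivWithin hT0 hball (hu.of_le one_le_two)
    (Set.left_mem_Icc.2 hT0.le)).trans (hest u hu (fun t ht x hx => ?_)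
      (fun t ht x hx => hdirichlet t ht x (hsphere x hx))
      fun x hx hαx => (hsupp x hαx (mem_closedBall_zero_iff.1 hx)).1)
  rw [laplacian_eq_lap]
  exact hwave t (Set.Ioo_subset_Icc_self ht) x (interior_subset hx)
end

section
/- Let Ω ⊂ ℝⁿ be a bounded connected open set with C^∞ boundary and let ω ⊆ Ω be a nonempty open subset. Let A = (a_{ij}) be an n×n matrix of real-valued C^∞ functions on ℝⁿ that is symmetric (a_{ij} = a_{ji}) and uniformly positive definite on a neighborhood of closure(Ω), and let Δ_A u = ∑_{i,j=1}^n ∂_{x_j}( a_{ij} ∂_{x_i} u ). Let λ ∈ ℂ and let u be a complex-valued function smooth on a neighborhood of closure(Ω) such that Δ_A u = λ² u on Ω, u = 0 on ∂Ω, and λ·u(x) = 0 for every x ∈ ω. Then u vanishes identically on Ω. -/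
open MeasureTheory

/-- The partial derivative ∂_{x_i} of a complex-valued function on ℝⁿ. -/
noncomputable def pd (n : ℕ) (i : Fin n) (f : EuclideanSpace ℝ (Fin n) → ℂ)
    (x : EuclideanSpace ℝ (Fin n)) : ℂ :=
  fderiv ℝ f x (EuclideanSpace.single i 1)

/-- The divergence-form elliptic operator Δ_A u = ∑_{i,j} ∂_{x_j}(a_{ij} ∂_{x_i} u). -/
noncomputable def lapA (n : ℕ) (a : Fin n → Fin n → EuclideanSpace ℝ (Fin n) → ℝ)
    (u : EuclideanSpace ℝ (Fin n) → ℂ) (x : EuclideanSpace ℝ (Fin n)) : ℂ :=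
  ∑ j, pd n j (fun y => ∑ i, (a i j y : ℂ) * pd n i u y) x

/-- A set has C^∞ boundary if near every boundary point it is the sublevel set of
a smooth function with nonvanishing differential. -/
def SmoothBoundary {n : ℕ} (Ω : Set (EuclideanSpace ℝ (Fin n))) : Prop :=
  ∀ x ∈ frontier Ω, ∃ (U : Set (EuclideanSpace ℝ (Fin n)))
      (f : EuclideanSpace ℝ (Fin n) → ℝ),
    IsOpen U ∧ x ∈ U ∧ ContDiff ℝ (⊤ : ℕ∞) f ∧ (∀ y ∈ U, fderiv ℝ f y ≠ 0) ∧
      Ω ∩ U = {y ∈ U | f y < 0}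

/-!
If `λ = 0`, testing `Δ_A u = 0` against truncations of the real and imaginary parts of `u` gives
the maximum principle, so the zero Dirichlet data force `u = 0`.

If `λ ≠ 0`, then `u` vanishes near a point of `ω`. For a function `ψ` without critical points, the
convexified weight `φ = exp (γ ψ)` with `γ` large is strongly pseudoconvex. Conjugating `Δ_A` with
`exp (t φ)` and pairing the symmetric part of the result with its transport part then yields the
Carleman estimate `c t³ ∫ exp (2tφ) w² ≤ ∫ exp (2tφ) (Δ_A w)²`. As `t → ∞` the left-hand side
absorbs the zeroth-order term `λ² u`. With `ψ = -|x - p|²` this extends the vanishing of `u` from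
balls to concentric larger balls, and connectedness of `Ω` does the rest.
-/

open Filter Set Metric
open scoped Topology

section Divergence

variable {E : Type*} [NormedAddCommGroup E] [NormedSpace ℝ E]

/-- The divergence of a vector field, as the trace of its derivative. -/
noncomputable def divergence (F : E → E) (x : E) : ℝ :=
  LinearMap.trace ℝ E (fderiv ℝ F x)

variable {f : E → ℝ} {F G : E → E} {x : E}

theorem divergence_congr (h : F =ᶠ[𝓝 x] G) : divergence F x = divergence G x := by
  rw [divergence, divergence, h.fderiv_eq]

theorem divergence_eq_zero_of_notMem_tsupport (h : x ∉ tsupport F) : divergence F x = 0 := by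
  rw [divergence, image_eq_zero_of_notMem_tsupport fun hx => h (tsupport_fderiv_subset ℝ hx)]
  exact map_zero _

theorem hasCompactSupport_divergence (hF : HasCompactSupport F) :
    HasCompactSupport (divergence F) :=
  hF.mono' fun _ hx => not_not.1 fun hxF => hx (divergence_eq_zero_of_notMem_tsupport hxF)

theorem divergence_add (hF : DifferentiableAt ℝ F x) (hG : DifferentiableAt ℝ G x) :
    divergence (fun y => F y + G y) x = divergence F x + divergence G x := by
  simp only [divergence, fderiv_fun_add hF hG, ContinuousLinearMap.toLinearMap_add, map_add]

theorem divergence_const_smul (c : ℝ) : divergence (fun y => c • F y) x = c * divergence F x := by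
  have : fderiv ℝ (fun y => c • F y) x = c • fderiv ℝ F x := congrFun (fderiv_const_smul_field c) x
  rw [divergence, this, ContinuousLinearMap.toLinearMap_smul, map_smul, smul_eq_mul, divergence]

variable [FiniteDimensional ℝ E]

theorem divergence_smul (hf : DifferentiableAt ℝ f x) (hF : DifferentiableAt ℝ F x) :
    divergence (fun y => f y • F y) x = f x * divergence F x + fderiv ℝ f x (F x) := by
  simp only [divergence, fderiv_fun_smul hf hF, ContinuousLinearMap.toLinearMap_add,
    ContinuousLinearMap.toLinearMap_smul, map_add, map_smul, smul_eq_mul]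
  congr 1
  exact LinearMap.trace_smulRight (fderiv ℝ f x : E →ₗ[ℝ] ℝ) (F x)

theorem divergence_eq_sum_basis {ι : Type*} [Fintype ι] (b : Module.Basis ι ℝ E)
    (hF : DifferentiableAt ℝ F x) :
    divergence F x = ∑ i, fderiv ℝ (fun y => b.coord i (F y)) x (b i) := by
  classical
  rw [divergence, LinearMap.trace_eq_matrix_trace ℝ b, Matrix.trace]
  refine Finset.sum_congr rfl fun i _ => ?_
  have hcoord := ((b.coord i).toContinuousLinearMap.hasFDerivAt (x := F x)).comp x hF.hasFDerivAt
  rw [Matrix.diag_apply, LinearMap.toMatrix_apply]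
  exact congrArg (· (b i)) hcoord.fderiv.symm

theorem contDiffAt_divergence {m n : WithTop ℕ∞} (hF : ContDiffAt ℝ n F x) (hmn : m + 1 ≤ n) :
    ContDiffAt ℝ m (divergence F) x :=
  ((LinearMap.trace ℝ E ∘ₗ ContinuousLinearMap.coeLM ℝ).toContinuousLinearMap.contDiff.contDiffAt
    (n := m)).comp x (hF.fderiv_right hmn)

theorem continuous_divergence (hF : ContDiff ℝ 1 F) : Continuous (divergence F) :=
  (contDiff_iff_contDiffAt.2 fun _ =>
    contDiffAt_divergence hF.contDiffAt (zero_add 1).le).continuous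

variable [MeasurableSpace E] [BorelSpace E] (μ : Measure E) [μ.IsAddHaarMeasure]

theorem integral_fderiv_apply_eq_zero (hf : ContDiff ℝ 1 f) (hc : HasCompactSupport f) (v : E) :
    ∫ x, fderiv ℝ f x v ∂μ = 0 := by
  have hf' : Integrable (fun x => fderiv ℝ f x v) μ :=
    ((hf.continuous_fderiv one_ne_zero).clm_apply continuous_const).integrable_of_hasCompactSupport
      (hc.fderiv_apply ℝ v)
  have := integral_mul_fderiv_eq_neg_fderiv_mul_of_integrable (μ := μ) (𝕜 := ℝ)
    (f := fun _ => (1 : ℝ)) (g := f) (v := v) (by simp) (by simpa using hf')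
    (by simpa using hf.continuous.integrable_of_hasCompactSupport hc)
    (fun _ _ => differentiableAt_const _) (fun x _ => hf.differentiable one_ne_zero x)
  simpa using this

theorem integral_divergence_eq_zero (hF : ContDiff ℝ 1 F) (hc : HasCompactSupport F) :
    ∫ x, divergence F x ∂μ = 0 := by
  let b := Module.finBasis ℝ E
  have hcoord (i) : ContDiff ℝ 1 fun y => b.coord i (F y) :=
    (b.coord i).toContinuousLinearMap.contDiff.comp hF
  have hsupp (i) : HasCompactSupport fun y => b.coord i (F y) := hc.comp_left (map_zero (b.coord i))
  simp_rw [fun x => divergence_eq_sum_basis b (hF.differentiable one_ne_zero x)]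
  rw [integral_finsetSum]
  · exact Finset.sum_eq_zero fun i _ => integral_fderiv_apply_eq_zero μ (hcoord i) (hsupp i) _
  · exact fun i _ => (((hcoord i).continuous_fderiv one_ne_zero).clm_apply
      continuous_const).integrable_of_hasCompactSupport ((hsupp i).fderiv_apply ℝ _)

end Divergence

section DivergenceForm

variable {E : Type*} [NormedAddCommGroup E] [NormedSpace ℝ E]

/-- Symmetry of an operator taking covectors to vectors, viewed as a bilinear form on covectors. -/
def IsSymmForm (T : StrongDual ℝ E →L[ℝ] E) : Prop :=
  ∀ α β : StrongDual ℝ E, α (T β) = β (T α)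

/-- Positive definiteness of an operator taking covectors to vectors, viewed as a quadratic form on
covectors. -/
def IsPosForm (T : StrongDual ℝ E →L[ℝ] E) : Prop :=
  ∀ α : StrongDual ℝ E, α ≠ 0 → 0 < α (T α)

/-- The flux `A ∇v` of `v`, where the coefficient field `A` takes covectors to vectors, so that no
inner product on `E` is involved. -/
noncomputable def flux (A : E → StrongDual ℝ E →L[ℝ] E) (v : E → ℝ) (x : E) : E :=
  A x (fderiv ℝ v x)

/-- The second-order operator in divergence form `v ↦ div (A ∇v)`. -/
noncomputable def divForm (A : E → StrongDual ℝ E →L[ℝ] E) (v : E → ℝ) (x : E) : ℝ :=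
  divergence (flux A v) x

/-- The energy density `⟨A ∇v, ∇v⟩`. -/
noncomputable def energy (A : E → StrongDual ℝ E →L[ℝ] E) (v : E → ℝ) (x : E) : ℝ :=
  fderiv ℝ v x (flux A v x)

variable {A B : E → StrongDual ℝ E →L[ℝ] E} {f g v w : E → ℝ} {x : E} {m n : WithTop ℕ∞}

theorem flux_congr (hA : A =ᶠ[𝓝 x] B) (hv : v =ᶠ[𝓝 x] w) : flux A v =ᶠ[𝓝 x] flux B w := by
  filter_upwards [hA, hv.fderiv (𝕜 := ℝ)] with y hAy hvy
  rw [flux, flux, hAy, hvy]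

theorem divForm_congr (hA : A =ᶠ[𝓝 x] B) (hv : v =ᶠ[𝓝 x] w) : divForm A v x = divForm B w x :=
  divergence_congr (flux_congr hA hv)

theorem tsupport_flux_subset : tsupport (flux A v) ⊆ tsupport v :=
  (closure_mono fun y hy => by
    contrapose! hy
    simp only [flux, Function.notMem_support.mp hy, map_zero, Function.mem_support, ne_eq, not_true,
      not_false_eq_true]).trans (tsupport_fderiv_subset ℝ)

theorem divForm_eq_zero_of_notMem_tsupport (hx : x ∉ tsupport v) : divForm A v x = 0 :=
  divergence_eq_zero_of_notMem_tsupport fun h => hx (tsupport_flux_subset h)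

theorem hasCompactSupport_divForm (hv : HasCompactSupport v) : HasCompactSupport (divForm A v) :=
  hasCompactSupport_divergence (hv.mono' (subset_closure.trans tsupport_flux_subset))

theorem flux_const_mul (c : ℝ) : flux A (fun y => c * v y) x = c • flux A v x := by
  have : fderiv ℝ (fun y => c * v y) x = c • fderiv ℝ v x := congrFun (fderiv_const_smul_field c) x
  rw [flux, this, map_smul, flux]

theorem divForm_const_mul (c : ℝ) : divForm A (fun y => c * v y) x = c * divForm A v x := by
  have : flux A (fun y => c * v y) = fun y => c • flux A v y := funext fun _ => flux_const_mul c
  rw [divForm, this, divergence_const_smul, divForm]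

theorem energy_const_mul (c : ℝ) : energy A (fun y => c * v y) x = c ^ 2 * energy A v x := by
  have : fderiv ℝ (fun y => c * v y) x = c • fderiv ℝ v x := congrFun (fderiv_const_smul_field c) x
  rw [energy, flux_const_mul, this, map_smul, smul_apply, smul_eq_mul, smul_eq_mul, energy]
  ring

theorem energy_nonneg (h : IsPosForm (A x)) : 0 ≤ energy A v x := by
  by_cases hv : fderiv ℝ v x = 0
  · rw [energy, hv, zero_apply]
  · exact (h _ hv).le

theorem fderiv_eq_zero_of_energy_eq_zero (h : IsPosForm (A x)) (hv : energy A v x = 0) :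
    fderiv ℝ v x = 0 := by
  by_contra hdv
  exact (h _ hdv).ne' hv

theorem contDiffAt_flux (hA : ContDiffAt ℝ m A x) (hv : ContDiffAt ℝ n v x) (hmn : m + 1 ≤ n) :
    ContDiffAt ℝ m (flux A v) x :=
  hA.clm_apply (hv.fderiv_right hmn)

theorem contDiffAt_energy (hA : ContDiffAt ℝ m A x) (hv : ContDiffAt ℝ n v x) (hmn : m + 1 ≤ n) :
    ContDiffAt ℝ m (energy A v) x :=
  (hv.fderiv_right hmn).clm_apply (contDiffAt_flux hA hv hmn)

theorem flux_mul (hf : DifferentiableAt ℝ f x) (hg : DifferentiableAt ℝ g x) :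
    flux A (fun y => f y * g y) x = f x • flux A g x + g x • flux A f x := by
  rw [flux, fderiv_fun_mul hf hg, map_add, map_smul, map_smul, flux, flux]

theorem flux_comp {η : ℝ → ℝ} (hη : DifferentiableAt ℝ η (v x)) (hv : DifferentiableAt ℝ v x) :
    flux A (fun y => η (v y)) x = deriv η (v x) • flux A v x := by
  have : fderiv ℝ (fun y => η (v y)) x = deriv η (v x) • fderiv ℝ v x :=
    (hη.hasDerivAt.comp_hasFDerivAt x hv.hasFDerivAt).fderiv
  rw [flux, this, map_smul, flux]

theorem fderiv_energy (hsymm : IsSymmForm (A x)) (hA : DifferentiableAt ℝ A x)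
    (hv : ContDiffAt ℝ 2 v x) (y : E) :
    fderiv ℝ (energy A v) x y = fderiv ℝ v x (fderiv ℝ A x y (fderiv ℝ v x)) +
      2 * fderiv ℝ (fderiv ℝ v) x y (flux A v x) := by
  have hdv : DifferentiableAt ℝ (fderiv ℝ v) x :=
    (hv.fderiv_right (m := 1) one_add_one_eq_two.le).differentiableAt one_ne_zero
  have hflux' : DifferentiableAt ℝ (flux A v) x := hA.clm_apply hdv
  have hflux : fderiv ℝ (flux A v) x y =
      fderiv ℝ A x y (fderiv ℝ v x) + A x (fderiv ℝ (fderiv ℝ v) x y) := by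
    unfold flux
    rw [fderiv_clm_apply hA hdv, add_comm]
    rfl
  have henergy : fderiv ℝ (energy A v) x y =
      fderiv ℝ v x (fderiv ℝ (flux A v) x y) + fderiv ℝ (fderiv ℝ v) x y (flux A v x) := by
    unfold energy
    rw [fderiv_clm_apply hdv hflux']
    rfl
  have hcross : fderiv ℝ v x (A x (fderiv ℝ (fderiv ℝ v) x y)) =
      fderiv ℝ (fderiv ℝ v) x y (flux A v x) := hsymm _ _
  rw [henergy, hflux, map_add, hcross]
  ring

variable [FiniteDimensional ℝ E]

theorem contDiffAt_divForm {k : WithTop ℕ∞} (hA : ContDiffAt ℝ m A x) (hv : ContDiffAt ℝ n v x)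
    (hkm : k + 1 ≤ m) (hmn : m + 1 ≤ n) : ContDiffAt ℝ k (divForm A v) x :=
  contDiffAt_divergence (contDiffAt_flux hA hv hmn) hkm

theorem continuous_divForm (hA : ContDiff ℝ 1 A) (hv : ContDiff ℝ 2 v) :
    Continuous (divForm A v) :=
  continuous_divergence <| contDiff_iff_contDiffAt.2 fun _ =>
    contDiffAt_flux hA.contDiffAt hv.contDiffAt one_add_one_eq_two.le

theorem divForm_mul (hsymm : IsSymmForm (A x)) (hA : ContDiffAt ℝ 1 A x) (hf : ContDiffAt ℝ 2 f x)
    (hg : ContDiffAt ℝ 2 g x) :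
    divForm A (fun y => f y * g y) x =
      f x * divForm A g x + g x * divForm A f x + 2 * fderiv ℝ f x (flux A g x) := by
  have hdiff {v : E → ℝ} (hv : ContDiffAt ℝ 2 v x) : DifferentiableAt ℝ v x :=
    hv.differentiableAt two_ne_zero
  have hflux {v : E → ℝ} (hv : ContDiffAt ℝ 2 v x) : DifferentiableAt ℝ (flux A v) x :=
    (contDiffAt_flux hA hv one_add_one_eq_two.le).differentiableAt one_ne_zero
  have hprod : flux A (fun y => f y * g y) =ᶠ[𝓝 x]
      fun y => f y • flux A g y + g y • flux A f y := by
    filter_upwards [hf.eventually (by simp), hg.eventually (by simp)] with y hfy hgy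
    exact flux_mul (hfy.differentiableAt two_ne_zero) (hgy.differentiableAt two_ne_zero)
  have hcross : fderiv ℝ g x (flux A f x) = fderiv ℝ f x (flux A g x) := hsymm _ _
  rw [divForm, divergence_congr hprod,
    divergence_add ((hdiff hf).fun_smul (hflux hg)) ((hdiff hg).fun_smul (hflux hf)),
    divergence_smul (hdiff hf) (hflux hg), divergence_smul (hdiff hg) (hflux hf), hcross,
    divForm, divForm]
  ring

theorem divergence_comp_smul_flux {θ : ℝ → ℝ} (hθ : DifferentiableAt ℝ θ (v x))
    (hA : ContDiffAt ℝ 1 A x) (hv : ContDiffAt ℝ 2 v x) :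
    divergence (fun y => θ (v y) • flux A v y) x =
      θ (v x) * divForm A v x + deriv θ (v x) * energy A v x := by
  have hvx : HasFDerivAt v (fderiv ℝ v x) x := (hv.differentiableAt two_ne_zero).hasFDerivAt
  have hθv : HasFDerivAt (fun y => θ (v y)) (deriv θ (v x) • fderiv ℝ v x) x :=
    hθ.hasDerivAt.comp_hasFDerivAt x hvx
  rw [divergence_smul hθv.differentiableAt
    ((contDiffAt_flux hA hv one_add_one_eq_two.le).differentiableAt one_ne_zero), hθv.fderiv]
  rfl

theorem divForm_comp {η : ℝ → ℝ} (hη : ContDiff ℝ 2 η) (hA : ContDiffAt ℝ 1 A x)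
    (hv : ContDiffAt ℝ 2 v x) :
    divForm A (fun y => η (v y)) x =
      deriv η (v x) * divForm A v x + deriv (deriv η) (v x) * energy A v x := by
  have hη' : Differentiable ℝ (deriv η) := (hη.iterate_deriv' 1 1).differentiable one_ne_zero
  have hchain : flux A (fun y => η (v y)) =ᶠ[𝓝 x] fun y => deriv η (v y) • flux A v y := by
    filter_upwards [hv.eventually (by simp)] with y hy
    exact flux_comp (hη.differentiable two_ne_zero _) (hy.differentiableAt two_ne_zero)
  rw [divForm, divergence_congr hchain, divergence_comp_smul_flux (hη' _) hA hv]

/-- Conjugating with `exp f` turns the operator into one whose first-order part is transport along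
the flux of `f`. -/
theorem exp_mul_divForm_exp_neg_mul (hsymm : IsSymmForm (A x)) (hA : ContDiffAt ℝ 1 A x)
    (hf : ContDiffAt ℝ 2 f x) (hv : ContDiffAt ℝ 2 v x) :
    Real.exp (f x) * divForm A (fun y => Real.exp (-f y) * v y) x =
      divForm A v x - 2 * fderiv ℝ v x (flux A f x) + (energy A f x - divForm A f x) * v x := by
  have hη : ContDiff ℝ 2 fun s : ℝ => Real.exp (-s) := Real.contDiff_exp.comp contDiff_neg
  have hη' : deriv (fun s : ℝ => Real.exp (-s)) = fun s => -Real.exp (-s) := by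
    ext1 s; simpa using ((hasDerivAt_neg s).exp).deriv
  have hη'' (s : ℝ) : deriv (fun s : ℝ => -Real.exp (-s)) s = Real.exp (-s) := by
    simpa using ((hasDerivAt_neg s).exp).neg.deriv
  have hexp := divForm_comp hη hA hf
  have hflux := flux_comp (A := A) (hη.differentiable two_ne_zero (f x))
    (hf.differentiableAt two_ne_zero)
  have hcross : fderiv ℝ (fun y => Real.exp (-f y)) x (flux A v x) =
      fderiv ℝ v x (flux A (fun y => Real.exp (-f y)) x) := hsymm _ _
  rw [hη', hη''] at hexp
  rw [hη'] at hflux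
  rw [divForm_mul (f := fun y => Real.exp (-f y)) hsymm hA (hη.contDiffAt.comp x hf) hv,
    hexp, hcross, hflux, map_smul, smul_eq_mul]
  have hone : Real.exp (f x) * Real.exp (-f x) = 1 := by
    rw [← Real.exp_add, add_neg_cancel, Real.exp_zero]
  linear_combination (divForm A v x - 2 * fderiv ℝ v x (flux A f x) +
    (energy A f x - divForm A f x) * v x) * hone

end DivergenceForm

section CarlemanIdentity

variable {E : Type*} [NormedAddCommGroup E] [NormedSpace ℝ E]

/-- The Lie derivative of the contravariant metric `A` along the vector field `X`, evaluated as a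
quadratic form on covectors. -/
noncomputable def lieForm (A : E → StrongDual ℝ E →L[ℝ] E) (X : E → E) (x : E)
    (α : StrongDual ℝ E) : ℝ :=
  α (fderiv ℝ A x (X x) α) - 2 * α (fderiv ℝ X x (A x α))

/-- The vector field whose divergence is, up to lower-order terms, the product of
`divForm A v + q v` with the transport term `2 ∂_X v + h v`. -/
noncomputable def carlemanField (A : E → StrongDual ℝ E →L[ℝ] E) (X : E → E) (h q v : E → ℝ)
    (x : E) : E :=
  (2 * fderiv ℝ v x (X x) + h x * v x) • flux A v x + (q x * v x ^ 2 - energy A v x) • X x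

variable {A : E → StrongDual ℝ E →L[ℝ] E} {X : E → E} {h q v : E → ℝ} {x : E}

theorem tsupport_carlemanField_subset : tsupport (carlemanField A X h q v) ⊆ tsupport v := by
  refine closure_minimal (fun y hy => ?_) (isClosed_tsupport v)
  by_contra hyv
  have hv : v y = 0 := image_eq_zero_of_notMem_tsupport hyv
  have hdv : fderiv ℝ v y = 0 :=
    image_eq_zero_of_notMem_tsupport fun hy' => hyv (tsupport_fderiv_subset ℝ hy')
  exact hy (by simp [carlemanField, energy, flux, hv, hdv])

theorem contDiff_carlemanField (hA : ContDiff ℝ 1 A) (hX : ContDiff ℝ 1 X) (hh : ContDiff ℝ 1 h)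
    (hq : ContDiff ℝ 1 q) (hv : ContDiff ℝ 2 v) : ContDiff ℝ 1 (carlemanField A X h q v) := by
  have hv1 : ContDiff ℝ 1 v := hv.of_le one_le_two
  have hdv : ContDiff ℝ 1 (fderiv ℝ v) := hv.fderiv_right one_add_one_eq_two.le
  have hflux : ContDiff ℝ 1 (flux A v) := hA.clm_apply hdv
  exact (((contDiff_const.mul (hdv.clm_apply hX)).add (hh.mul hv1)).smul hflux).add
    (((hq.mul (hv1.pow 2)).sub (hdv.clm_apply hflux)).smul hX)

variable [FiniteDimensional ℝ E]

theorem divergence_carlemanField (hsymm : IsSymmForm (A x)) (hA : ContDiffAt ℝ 1 A x)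
    (hX : DifferentiableAt ℝ X x) (hh : DifferentiableAt ℝ h x) (hq : DifferentiableAt ℝ q x)
    (hv : ContDiffAt ℝ 2 v x) :
    divergence (carlemanField A X h q v) x =
      (divForm A v x + q x * v x) * (2 * fderiv ℝ v x (X x) + h x * v x)
        - lieForm A X x (fderiv ℝ v x) + (h x - divergence X x) * energy A v x
        + v x * fderiv ℝ h x (flux A v x)
        + (fderiv ℝ q x (X x) - (h x - divergence X x) * q x) * v x ^ 2 := by
  have hv1 : DifferentiableAt ℝ v x := hv.differentiableAt two_ne_zero
  have hdv : DifferentiableAt ℝ (fderiv ℝ v) x :=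
    (hv.fderiv_right (m := 1) one_add_one_eq_two.le).differentiableAt one_ne_zero
  have hflux : DifferentiableAt ℝ (flux A v) x :=
    (contDiffAt_flux hA hv one_add_one_eq_two.le).differentiableAt one_ne_zero
  have henergy : DifferentiableAt ℝ (energy A v) x := hdv.clm_apply hflux
  have hdvX : HasFDerivAt (fun y => fderiv ℝ v y (X y)) _ x :=
    hdv.hasFDerivAt.clm_apply hX.hasFDerivAt
  have htransport := (hdvX.const_mul 2).add (hh.hasFDerivAt.mul hv1.hasFDerivAt)
  have hpotential := (hq.hasFDerivAt.mul (hv1.hasFDerivAt.pow 2)).sub henergy.hasFDerivAt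
  have hhess : fderiv ℝ (fderiv ℝ v) x (X x) (flux A v x) =
      fderiv ℝ (fderiv ℝ v) x (flux A v x) (X x) :=
    hv.isSymmSndFDerivAt (by simp) _ _
  have hdiv : divergence (carlemanField A X h q v) x = _ :=
    (divergence_add (htransport.differentiableAt.fun_smul hflux)
      (hpotential.differentiableAt.fun_smul hX)).trans
    (congrArg₂ (· + ·) (divergence_smul htransport.differentiableAt hflux)
      (divergence_smul hpotential.differentiableAt hX))
  rw [hdiv, htransport.fderiv, hpotential.fderiv]
  simp only [add_apply, sub_apply, smul_apply, ContinuousLinearMap.coe_comp, Function.comp_apply,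
    ContinuousLinearMap.flip_apply, smul_eq_mul, nsmul_eq_mul, Pi.mul_apply, Pi.add_apply,
    Pi.sub_apply, fderiv_energy hsymm (hA.differentiableAt one_ne_zero) hv]
  rw [lieForm, energy, divForm, ← flux]
  linear_combination -2 * hhess

end CarlemanIdentity

section CarlemanEstimate

variable {E : Type*} [NormedAddCommGroup E] [NormedSpace ℝ E]

/-- Strong pseudoconvexity of the weight `φ` at `x` with respect to `A`, quantified by `c`. The
multiplier `ρ` trades the transport of the metric along the flux of `φ`, which must be negative
relative to `ρ`, against the growth of the energy of `φ` along its own flux. -/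
structure IsPseudoconvexWeight (A : E → StrongDual ℝ E →L[ℝ] E) (φ ρ : E → ℝ) (c : ℝ) (x : E) :
    Prop where
  gradient (α : StrongDual ℝ E) : c * ‖α‖ ^ 2 ≤ ρ x * α (A x α) - lieForm A (flux A φ) x α
  potential : c ≤ fderiv ℝ (energy A φ) x (flux A φ x) - ρ x * energy A φ x

/-- The Carleman field of `v` for the weight `φ`, with large parameter `t`. -/
noncomputable def weightedCarlemanField (A : E → StrongDual ℝ E →L[ℝ] E) (φ ρ : E → ℝ) (t : ℝ)
    (v : E → ℝ) : E → E :=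
  carlemanField A (flux A φ) (fun y => divForm A φ y + ρ y) (fun y => t ^ 2 * energy A φ y) v

variable {A : E → StrongDual ℝ E →L[ℝ] E} {φ ρ v w : E → ℝ} {x : E} {K : Set E} {c t M M₁ M₂ : ℝ}

variable [FiniteDimensional ℝ E]

theorem le_divergence_weightedCarlemanField (hsymm : IsSymmForm (A x)) (hA : ContDiffAt ℝ 2 A x)
    (hφ : ContDiffAt ℝ 3 φ x) (hρ : DifferentiableAt ℝ ρ x) (hv : ContDiffAt ℝ 2 v x)
    (hc : 0 < c) (hconv : IsPseudoconvexWeight A φ ρ c x)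
    (hM : ‖(fderiv ℝ (fun y => divForm A φ y + ρ y) x).comp (A x)‖ ≤ M) :
    (c * t ^ 2 - M ^ 2 / (4 * c)) * v x ^ 2 ≤
      divergence (weightedCarlemanField A φ ρ t v) x -
        (divForm A v x + t ^ 2 * energy A φ x * v x) *
          (2 * fderiv ℝ v x (flux A φ x) + (divForm A φ x + ρ x) * v x) := by
  have hA1 : ContDiffAt ℝ 1 A x := hA.of_le one_le_two
  have hflux : DifferentiableAt ℝ (flux A φ) x :=
    (contDiffAt_flux hA hφ (by norm_num)).differentiableAt two_ne_zero
  have hdiv : DifferentiableAt ℝ (divForm A φ) x :=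
    (contDiffAt_divForm hA hφ one_add_one_eq_two.le (by norm_num)).differentiableAt one_ne_zero
  have henergy : DifferentiableAt ℝ (energy A φ) x :=
    (contDiffAt_energy hA hφ (by norm_num)).differentiableAt two_ne_zero
  have hid := divergence_carlemanField hsymm hA1 hflux (hdiv.fun_add hρ)
    (henergy.const_mul (t ^ 2)) hv
  have hgradient := hconv.gradient (fderiv ℝ v x)
  have hpotential := mul_le_mul_of_nonneg_right hconv.potential (sq_nonneg (t * v x))
  have hcross : -(M * ‖fderiv ℝ v x‖ * |v x|) ≤
      v x * fderiv ℝ (fun y => divForm A φ y + ρ y) x (flux A v x) := by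
    refine neg_le_of_abs_le ?_
    rw [abs_mul, mul_comm]
    gcongr
    exact (((fderiv ℝ (fun y => divForm A φ y + ρ y) x).comp (A x)).le_opNorm (fderiv ℝ v x)).trans
      (by gcongr)
  have hamgm : 0 ≤ c * ‖fderiv ℝ v x‖ ^ 2 - M * ‖fderiv ℝ v x‖ * |v x| +
      M ^ 2 / (4 * c) * v x ^ 2 := by
    have : 0 ≤ c * (‖fderiv ℝ v x‖ - M / (2 * c) * |v x|) ^ 2 := by positivity
    rw [← sq_abs (v x)]
    convert this using 1
    field_simp
    ring
  have hq : fderiv ℝ (fun y => t ^ 2 * energy A φ y) x (flux A φ x) =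
      t ^ 2 * fderiv ℝ (energy A φ) x (flux A φ x) := by
    rw [fderiv_const_mul henergy]; rfl
  rw [hq] at hid
  have hρx : divForm A φ x + ρ x - divergence (flux A φ) x = ρ x := add_sub_cancel_left _ _
  rw [hρx] at hid
  rw [weightedCarlemanField, hid]
  have : energy A v x = fderiv ℝ v x (A x (fderiv ℝ v x)) := rfl
  rw [this]
  linarith

theorem exp_mul_divForm_eq (hsymm : IsSymmForm (A x)) (hA : ContDiffAt ℝ 1 A x)
    (hφ : ContDiffAt ℝ 2 φ x) (hw : ContDiffAt ℝ 2 w x) :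
    Real.exp (t * φ x) * divForm A w x =
      divForm A (fun y => Real.exp (t * φ y) * w y) x -
        2 * t * fderiv ℝ (fun y => Real.exp (t * φ y) * w y) x (flux A φ x) +
        (t ^ 2 * energy A φ x - t * divForm A φ x) * (Real.exp (t * φ x) * w x) := by
  have htφ : ContDiffAt ℝ 2 (fun y => t * φ y) x := contDiffAt_const.mul hφ
  have hcancel : w = fun y => Real.exp (-(t * φ y)) * (Real.exp (t * φ y) * w y) := by
    ext1 y
    rw [← mul_assoc, ← Real.exp_add, neg_add_cancel, Real.exp_zero, one_mul]
  have hconj := exp_mul_divForm_exp_neg_mul hsymm hA htφ (htφ.exp.mul hw)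
  rw [← hcancel, flux_const_mul, energy_const_mul, divForm_const_mul, map_smul, smul_eq_mul]
    at hconj
  rw [hconj]
  ring

theorem mul_exp_mul_sq_le_add_divergence (hsymm : IsSymmForm (A x)) (hA : ContDiffAt ℝ 2 A x)
    (hφ : ContDiffAt ℝ 3 φ x) (hρ : DifferentiableAt ℝ ρ x) (hw : ContDiffAt ℝ 2 w x)
    (hc : 0 < c) (hconv : IsPseudoconvexWeight A φ ρ c x)
    (hM₁ : ‖(fderiv ℝ (fun y => divForm A φ y + ρ y) x).comp (A x)‖ ≤ M₁) (hM₂ : |ρ x| ≤ M₂)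
    (ht : 0 ≤ t) (hlarge : M₁ ^ 2 / (2 * c) + t * M₂ ^ 2 ≤ c * t ^ 2) :
    c * t ^ 3 * (Real.exp (2 * t * φ x) * w x ^ 2) ≤
      Real.exp (2 * t * φ x) * divForm A w x ^ 2 +
        2 * t * divergence (weightedCarlemanField A φ ρ t fun y => Real.exp (t * φ y) * w y) x := by
  have hφ2 : ContDiffAt ℝ 2 φ x := hφ.of_le (by norm_num)
  have hconj := exp_mul_divForm_eq (t := t) hsymm (hA.of_le one_le_two) hφ2 hw
  have hv : ContDiffAt ℝ 2 (fun y => Real.exp (t * φ y) * w y) x :=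
    (contDiffAt_const.mul hφ2).exp.mul hw
  have hdiv := le_divergence_weightedCarlemanField (t := t) hsymm hA hφ hρ hv hc hconv hM₁
  have hsq (a : ℝ) : Real.exp (2 * t * φ x) * a ^ 2 = (Real.exp (t * φ x) * a) ^ 2 := by
    rw [mul_pow, ← Real.exp_nat_mul]; congr 2; push_cast; ring
  rw [hsq, hsq, hconj]
  beta_reduce at hdiv
  set v := fun y => Real.exp (t * φ y) * w y
  have hvx : Real.exp (t * φ x) * w x = v x := rfl
  rw [hvx]
  -- `P` is the symmetric part of the conjugated operator and `T` its transport part.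
  set P := divForm A v x + t ^ 2 * energy A φ x * v x
  set T := 2 * fderiv ℝ v x (flux A φ x) + (divForm A φ x + ρ x) * v x
  have hρv : (ρ x * v x) ^ 2 ≤ M₂ ^ 2 * v x ^ 2 := by
    rw [mul_pow, ← sq_abs (ρ x)]; gcongr
  have hG : divForm A v x - 2 * t * fderiv ℝ v x (flux A φ x) +
      (t ^ 2 * energy A φ x - t * divForm A φ x) * v x = P - t * T + t * (ρ x * v x) := by
    ring
  have hsplit : -(2 * t) * (P * T) - t ^ 2 * (ρ x * v x) ^ 2 ≤
      (P - t * T + t * (ρ x * v x)) ^ 2 := by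
    nlinarith [sq_nonneg (P + t * T), sq_nonneg (P - t * T + 2 * t * ρ x * v x)]
  have ht_hdiv := mul_le_mul_of_nonneg_left hdiv (by positivity : 0 ≤ 2 * t)
  have ht_hρv := mul_le_mul_of_nonneg_left hρv (sq_nonneg t)
  have ht_hlarge := mul_le_mul_of_nonneg_right (mul_le_mul_of_nonneg_left hlarge ht)
    (sq_nonneg (v x))
  have hhalf : 2 * (M₁ ^ 2 / (4 * c)) = M₁ ^ 2 / (2 * c) := by field_simp; ring
  rw [hG]
  rw [← hhalf] at ht_hlarge
  linarith

theorem contDiff_weightedCarlemanField (hA : ContDiff ℝ 2 A) (hφ : ContDiff ℝ 3 φ)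
    (hρ : ContDiff ℝ 1 ρ) (hv : ContDiff ℝ 2 v) :
    ContDiff ℝ 1 (weightedCarlemanField A φ ρ t v) := by
  have hA1 : ContDiff ℝ 1 A := hA.of_le one_le_two
  have hflux : ContDiff ℝ 2 (flux A φ) :=
    contDiff_iff_contDiffAt.2 fun _ => contDiffAt_flux hA.contDiffAt hφ.contDiffAt (by norm_num)
  have henergy : ContDiff ℝ 2 (energy A φ) :=
    contDiff_iff_contDiffAt.2 fun _ => contDiffAt_energy hA.contDiffAt hφ.contDiffAt (by norm_num)
  have hdiv : ContDiff ℝ 1 (divForm A φ) :=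
    contDiff_iff_contDiffAt.2 fun _ =>
      contDiffAt_divForm hA.contDiffAt hφ.contDiffAt one_add_one_eq_two.le (by norm_num)
  exact contDiff_carlemanField hA1 (hflux.of_le one_le_two) (hdiv.add hρ)
    (contDiff_const.mul (henergy.of_le one_le_two)) hv

variable [MeasurableSpace E] [BorelSpace E]

/-- The Carleman estimate for `divForm A` with weight `φ`, for functions supported in `K`. -/
def HasCarlemanEstimate (A : E → StrongDual ℝ E →L[ℝ] E) (φ : E → ℝ) (K : Set E) (μ : Measure E) :
    Prop :=
  ∃ c > 0, ∀ᶠ t in atTop, ∀ w : E → ℝ, ContDiff ℝ 2 w → tsupport w ⊆ K →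
    c * t ^ 3 * ∫ x, Real.exp (2 * t * φ x) * w x ^ 2 ∂μ ≤
      ∫ x, Real.exp (2 * t * φ x) * divForm A w x ^ 2 ∂μ

theorem mul_integral_exp_mul_sq_le_of_forall_le {μ : Measure E} [μ.IsAddHaarMeasure]
    (hA : ContDiff ℝ 2 A) (hφ : ContDiff ℝ 3 φ) (hρ : ContDiff ℝ 1 ρ) (hw : ContDiff ℝ 2 w)
    (hcomp : HasCompactSupport w)
    (hpt : ∀ x ∈ tsupport w, c * (Real.exp (2 * t * φ x) * w x ^ 2) ≤
      Real.exp (2 * t * φ x) * divForm A w x ^ 2 + 2 * t * divergence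
        (weightedCarlemanField A φ ρ t fun y => Real.exp (t * φ y) * w y) x) :
    c * ∫ x, Real.exp (2 * t * φ x) * w x ^ 2 ∂μ ≤
      ∫ x, Real.exp (2 * t * φ x) * divForm A w x ^ 2 ∂μ := by
  set v := fun y => Real.exp (t * φ y) * w y
  set F := weightedCarlemanField A φ ρ t v
  have hexp : Continuous fun x => Real.exp (2 * t * φ x) := by fun_prop
  have hvw : tsupport v ⊆ tsupport w := tsupport_mul_subset_right
  have hFw : tsupport F ⊆ tsupport w := tsupport_carlemanField_subset.trans hvw
  have hF : ContDiff ℝ 1 F := contDiff_weightedCarlemanField hA hφ hρ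
    ((contDiff_const.mul (hφ.of_le (by norm_num))).exp.mul hw)
  have hFc : HasCompactSupport F := hcomp.mono' (subset_closure.trans hFw)
  have hPw_int : Integrable (fun x => Real.exp (2 * t * φ x) * divForm A w x ^ 2) μ :=
    (hexp.mul ((continuous_divForm (hA.of_le one_le_two) hw).pow 2)).integrable_of_hasCompactSupport
      ((hasCompactSupport_divForm (A := A) hcomp).mono fun x hx hxw => hx (by simp [hxw]))
  have hw_int : Integrable (fun x => Real.exp (2 * t * φ x) * w x ^ 2) μ :=
    (hexp.mul (hw.continuous.pow 2)).integrable_of_hasCompactSupport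
      (hcomp.mono fun x hx hxw => hx (by simp [hxw]))
  have hF_int : Integrable (divergence F) μ :=
    (continuous_divergence hF).integrable_of_hasCompactSupport (hasCompactSupport_divergence hFc)
  calc c * ∫ x, Real.exp (2 * t * φ x) * w x ^ 2 ∂μ
    _ = ∫ x, c * (Real.exp (2 * t * φ x) * w x ^ 2) ∂μ := (integral_const_mul _ _).symm
    _ ≤ ∫ x, Real.exp (2 * t * φ x) * divForm A w x ^ 2 + 2 * t * divergence F x ∂μ := by
      refine integral_mono (hw_int.const_mul c) (hPw_int.add (hF_int.const_mul _)) fun x => ?_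
      by_cases hx : x ∈ tsupport w
      · exact hpt x hx
      · simp [image_eq_zero_of_notMem_tsupport hx, divForm_eq_zero_of_notMem_tsupport hx,
          divergence_eq_zero_of_notMem_tsupport fun hxF => hx (hFw hxF)]
    _ = ∫ x, Real.exp (2 * t * φ x) * divForm A w x ^ 2 ∂μ := by
      rw [integral_add hPw_int (hF_int.const_mul _), integral_const_mul,
        integral_divergence_eq_zero μ hF hFc, mul_zero, add_zero]

theorem hasCarlemanEstimate_of_isPseudoconvexWeight {μ : Measure E} [μ.IsAddHaarMeasure]
    (hA : ContDiff ℝ 2 A) (hφ : ContDiff ℝ 3 φ) (hρ : ContDiff ℝ 1 ρ) (hK : IsCompact K)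
    (hsymm : ∀ x ∈ K, IsSymmForm (A x)) (hc : 0 < c)
    (hconv : ∀ x ∈ K, IsPseudoconvexWeight A φ ρ c x) : HasCarlemanEstimate A φ K μ := by
  have hdiv : ContDiff ℝ 1 fun y => divForm A φ y + ρ y := (contDiff_iff_contDiffAt.2 fun _ =>
    contDiffAt_divForm hA.contDiffAt hφ.contDiffAt one_add_one_eq_two.le (by norm_num)).add hρ
  obtain ⟨M₁, hM₁⟩ := hK.exists_bound_of_continuousOn
    ((hdiv.continuous_fderiv one_ne_zero).clm_comp hA.continuous).continuousOn
  obtain ⟨M₂, hM₂⟩ := hK.exists_bound_of_continuousOn hρ.continuous.continuousOn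
  have hlarge : ∀ᶠ t : ℝ in atTop, M₁ ^ 2 / (2 * c) + t * M₂ ^ 2 ≤ c * t ^ 2 := by
    filter_upwards [eventually_ge_atTop 1,
      eventually_ge_atTop ((M₁ ^ 2 / (2 * c) + M₂ ^ 2) / c)] with t ht1 ht
    rw [div_le_iff₀ hc] at ht
    have : 0 ≤ M₁ ^ 2 / (2 * c) := by positivity
    nlinarith
  refine ⟨c, hc, ?_⟩
  filter_upwards [hlarge, eventually_ge_atTop 0] with t htlarge ht w hw hwK
  refine mul_integral_exp_mul_sq_le_of_forall_le hA hφ hρ hw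
    (hK.of_isClosed_subset (isClosed_tsupport w) hwK) fun x hx => ?_
  have hxK := hwK hx
  exact mul_exp_mul_sq_le_add_divergence (hsymm x hxK) hA.contDiffAt hφ.contDiffAt
    (hρ.differentiable one_ne_zero x) hw.contDiffAt hc (hconv x hxK) (hM₁ x hxK) (hM₂ x hxK) ht
    htlarge

end CarlemanEstimate

section Convexification

variable {E : Type*} [NormedAddCommGroup E] [NormedSpace ℝ E]
variable {A : E → StrongDual ℝ E →L[ℝ] E} {X : E → E} {f ψ : E → ℝ} {x : E} {K : Set E}
variable {γ κ b c : ℝ}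

theorem flux_exp_mul (hψ : DifferentiableAt ℝ ψ x) :
    flux A (fun y => Real.exp (γ * ψ y)) x = (γ * Real.exp (γ * ψ x)) • flux A ψ x := by
  have hderiv : deriv (fun s => Real.exp (γ * s)) (ψ x) = γ * Real.exp (γ * ψ x) := by
    rw [((hasDerivAt_id' (ψ x)).const_mul γ).exp.deriv]; ring
  rw [flux_comp (η := fun s => Real.exp (γ * s)) (by fun_prop) hψ, hderiv]

theorem energy_exp_mul (hψ : DifferentiableAt ℝ ψ x) :
    energy A (fun y => Real.exp (γ * ψ y)) x =
      γ ^ 2 * Real.exp (γ * ψ x) ^ 2 * energy A ψ x := by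
  rw [energy, flux_exp_mul hψ, (hψ.hasFDerivAt.const_mul γ).exp.fderiv, energy]
  simp only [smul_apply, map_smul, smul_eq_mul]
  ring

theorem fderiv_energy_exp_mul (hA : ContDiffAt ℝ 1 A x) (hψ : ContDiffAt ℝ 2 ψ x) :
    fderiv ℝ (energy A fun y => Real.exp (γ * ψ y)) x (flux A ψ x) =
      γ ^ 2 * Real.exp (γ * ψ x) ^ 2 *
        (fderiv ℝ (energy A ψ) x (flux A ψ x) + 2 * γ * energy A ψ x ^ 2) := by
  have hψ' : HasFDerivAt ψ (fderiv ℝ ψ x) x := (hψ.differentiableAt two_ne_zero).hasFDerivAt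
  have henergy : HasFDerivAt (energy A ψ) (fderiv ℝ (energy A ψ) x) x :=
    ((contDiffAt_energy hA hψ one_add_one_eq_two.le).differentiableAt one_ne_zero).hasFDerivAt
  have hloc : (energy A fun y => Real.exp (γ * ψ y)) =ᶠ[𝓝 x]
      fun y => γ ^ 2 * Real.exp (γ * ψ y) ^ 2 * energy A ψ y := by
    filter_upwards [hψ.eventually (by simp)] with y hy
    exact energy_exp_mul (hy.differentiableAt two_ne_zero)
  have hexp := (((hψ'.const_mul γ).exp.pow 2).const_mul (γ ^ 2)).fun_mul henergy
  rw [hloc.fderiv_eq, hexp.fderiv]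
  simp only [add_apply, smul_apply, smul_eq_mul, nsmul_eq_mul]
  rw [energy]
  ring

theorem lieForm_smul (hf : DifferentiableAt ℝ f x) (hX : DifferentiableAt ℝ X x)
    (α : StrongDual ℝ E) :
    lieForm A (fun y => f y • X y) x α =
      f x * lieForm A X x α - 2 * (fderiv ℝ f x (A x α) * α (X x)) := by
  rw [lieForm, lieForm, (hf.hasFDerivAt.fun_smul hX.hasFDerivAt).fderiv]
  simp only [map_smul, smul_apply, add_apply, ContinuousLinearMap.smulRight_apply, map_add,
    smul_eq_mul]
  ring

theorem lieForm_congr {Y : E → E} (h : X =ᶠ[𝓝 x] Y) (α : StrongDual ℝ E) :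
    lieForm A X x α = lieForm A Y x α := by
  rw [lieForm, lieForm, h.fderiv_eq, h.eq_of_nhds]

theorem lieForm_flux_exp_mul (hsymm : IsSymmForm (A x)) (hA : ContDiffAt ℝ 1 A x)
    (hψ : ContDiffAt ℝ 2 ψ x) (α : StrongDual ℝ E) :
    lieForm A (flux A fun y => Real.exp (γ * ψ y)) x α =
      γ * Real.exp (γ * ψ x) * (lieForm A (flux A ψ) x α - 2 * γ * α (flux A ψ x) ^ 2) := by
  have hψ' : HasFDerivAt ψ (fderiv ℝ ψ x) x := (hψ.differentiableAt two_ne_zero).hasFDerivAt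
  have hflux : DifferentiableAt ℝ (flux A ψ) x :=
    (contDiffAt_flux hA hψ one_add_one_eq_two.le).differentiableAt one_ne_zero
  have hloc : flux A (fun y => Real.exp (γ * ψ y)) =ᶠ[𝓝 x]
      fun y => (γ * Real.exp (γ * ψ y)) • flux A ψ y := by
    filter_upwards [hψ.eventually (by simp)] with y hy
    exact flux_exp_mul (hy.differentiableAt two_ne_zero)
  have hexp := (hψ'.const_mul γ).exp.const_mul γ
  have hcross : fderiv ℝ ψ x (A x α) = α (flux A ψ x) := hsymm _ _
  rw [lieForm_congr hloc, lieForm_smul hexp.differentiableAt hflux, hexp.fderiv]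
  simp only [smul_apply, smul_eq_mul, hcross]
  ring

theorem abs_lieForm_le (α : StrongDual ℝ E) :
    |lieForm A X x α| ≤ (‖fderiv ℝ A x (X x)‖ + 2 * ‖(fderiv ℝ X x).comp (A x)‖) * ‖α‖ ^ 2 := by
  have h₁ : |α (fderiv ℝ A x (X x) α)| ≤ ‖α‖ * (‖fderiv ℝ A x (X x)‖ * ‖α‖) :=
    (α.le_opNorm _).trans (by gcongr; exact ContinuousLinearMap.le_opNorm _ α)
  have h₂ : |α (fderiv ℝ X x (A x α))| ≤ ‖α‖ * (‖(fderiv ℝ X x).comp (A x)‖ * ‖α‖) :=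
    (α.le_opNorm _).trans
      (by gcongr; exact ((fderiv ℝ X x).comp (A x)).le_opNorm α)
  calc |lieForm A X x α|
    _ ≤ |α (fderiv ℝ A x (X x) α)| + |2 * α (fderiv ℝ X x (A x α))| := abs_sub _ _
    _ ≤ _ := by rw [abs_mul, abs_two]; linarith

theorem isPseudoconvexWeight_exp_mul (hsymm : IsSymmForm (A x)) (hA : ContDiffAt ℝ 1 A x)
    (hψ : ContDiffAt ℝ 2 ψ x) (hγ : 0 ≤ γ)
    (hgradient : ∀ α : StrongDual ℝ E, ‖α‖ ^ 2 ≤ κ * α (A x α) - lieForm A (flux A ψ) x α)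
    (hpotential : 1 ≤ fderiv ℝ (energy A ψ) x (flux A ψ x) - κ * energy A ψ x +
      2 * γ * energy A ψ x ^ 2)
    (hc : c ≤ γ * Real.exp (γ * ψ x)) (hc' : c ≤ (γ * Real.exp (γ * ψ x)) ^ 3) :
    IsPseudoconvexWeight A (fun y => Real.exp (γ * ψ y))
      (fun y => κ * (γ * Real.exp (γ * ψ y))) c x where
  gradient α := by
    rw [lieForm_flux_exp_mul hsymm hA hψ]
    have hexp : 0 ≤ γ * Real.exp (γ * ψ x) := by positivity
    have hsq : 0 ≤ γ * Real.exp (γ * ψ x) * (2 * γ * α (flux A ψ x) ^ 2) := by positivity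
    have hcα := mul_le_mul_of_nonneg_right hc (sq_nonneg ‖α‖)
    have := mul_le_mul_of_nonneg_left (hgradient α) hexp
    linarith
  potential := by
    have hψ' : DifferentiableAt ℝ ψ x := hψ.differentiableAt two_ne_zero
    rw [flux_exp_mul hψ', map_smul, smul_eq_mul, fderiv_energy_exp_mul hA hψ, energy_exp_mul hψ']
    have hexp : 0 ≤ (γ * Real.exp (γ * ψ x)) ^ 3 := by positivity
    have := mul_le_mul_of_nonneg_left hpotential hexp
    linarith

variable [FiniteDimensional ℝ E]

theorem exists_isPosForm_bound (hA : ContinuousOn A K) (hK : IsCompact K)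
    (hpos : ∀ x ∈ K, IsPosForm (A x)) :
    ∃ c > 0, ∀ x ∈ K, ∀ α : StrongDual ℝ E, c * ‖α‖ ^ 2 ≤ α (A x α) := by
  have hcont : ContinuousOn (fun z : E × StrongDual ℝ E => z.2 (A z.1 z.2)) (K ×ˢ sphere 0 1) :=
    continuousOn_snd.clm_apply
      ((hA.comp continuousOn_fst fun _ hz => hz.1).clm_apply continuousOn_snd)
  obtain ⟨c, hc, hmin⟩ := (hK.prod (isCompact_sphere 0 1)).exists_forall_le' hcont (a := 0)
    fun z hz => hpos z.1 hz.1 z.2 (ne_of_mem_sphere hz.2 one_ne_zero)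
  refine ⟨c, hc, fun x hx α => ?_⟩
  rcases eq_or_ne α 0 with rfl | hα
  · simp
  have hα' : 0 < ‖α‖ := norm_pos_iff.2 hα
  have hunit := hmin (x, ‖α‖⁻¹ • α) ⟨hx, by simp [norm_smul, hα'.ne']⟩
  simp only [map_smul, smul_apply, smul_eq_mul] at hunit
  calc c * ‖α‖ ^ 2 ≤ ‖α‖⁻¹ * (‖α‖⁻¹ * α (A x α)) * ‖α‖ ^ 2 := by gcongr
    _ = α (A x α) := by field_simp

theorem exists_sq_norm_le_sub_lieForm (hA : ContDiff ℝ 1 A) (hX : ContDiff ℝ 1 X)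
    (hK : IsCompact K) (hpos : ∀ x ∈ K, IsPosForm (A x)) :
    ∃ κ, ∀ x ∈ K, ∀ α : StrongDual ℝ E, ‖α‖ ^ 2 ≤ κ * α (A x α) - lieForm A X x α := by
  obtain ⟨c, hc, hcA⟩ := exists_isPosForm_bound hA.continuous.continuousOn hK hpos
  obtain ⟨C₁, hC₁⟩ := hK.exists_bound_of_continuousOn (f := fun x => fderiv ℝ A x (X x))
    ((hA.continuous_fderiv one_ne_zero).clm_apply hX.continuous).continuousOn
  obtain ⟨C₂, hC₂⟩ := hK.exists_bound_of_continuousOn (f := fun x => (fderiv ℝ X x).comp (A x))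
    ((hX.continuous_fderiv one_ne_zero).clm_comp hA.continuous).continuousOn
  set C := C₁ + 2 * C₂
  refine ⟨(C + 1) / c, fun x hx α => ?_⟩
  have hC : ‖fderiv ℝ A x (X x)‖ + 2 * ‖(fderiv ℝ X x).comp (A x)‖ ≤ C := by
    linarith [hC₁ x hx, hC₂ x hx]
  have hlie : lieForm A X x α ≤ C * ‖α‖ ^ 2 := calc
    lieForm A X x α ≤ _ := (le_abs_self _).trans (abs_lieForm_le α)
    _ ≤ C * ‖α‖ ^ 2 := by gcongr
  have hC0 : 0 ≤ C := le_trans (by positivity) hC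
  have hform : (C + 1) * ‖α‖ ^ 2 ≤ (C + 1) / c * α (A x α) := calc
    (C + 1) * ‖α‖ ^ 2 = (C + 1) / c * (c * ‖α‖ ^ 2) := by field_simp
    _ ≤ (C + 1) / c * α (A x α) := by gcongr; exact hcA x hx α
  linarith

variable [MeasurableSpace E] [BorelSpace E] {μ : Measure E} [μ.IsAddHaarMeasure]

theorem exists_hasCarlemanEstimate_exp_mul (hA : ContDiff ℝ 2 A) (hψ : ContDiff ℝ 3 ψ)
    (hK : IsCompact K) (hsymm : ∀ x ∈ K, IsSymmForm (A x)) (hpos : ∀ x ∈ K, IsPosForm (A x))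
    (hdψ : ∀ x ∈ K, fderiv ℝ ψ x ≠ 0) :
    ∃ γ > 0, HasCarlemanEstimate A (fun x => Real.exp (γ * ψ x)) K μ := by
  have hA1 : ContDiff ℝ 1 A := hA.of_le one_le_two
  have hψ2 : ContDiff ℝ 2 ψ := hψ.of_le (by norm_num)
  have hflux : ContDiff ℝ 1 (flux A ψ) := contDiff_iff_contDiffAt.2 fun _ =>
    contDiffAt_flux hA1.contDiffAt hψ2.contDiffAt one_add_one_eq_two.le
  have henergy : ContDiff ℝ 1 (energy A ψ) := contDiff_iff_contDiffAt.2 fun _ =>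
    contDiffAt_energy hA1.contDiffAt hψ2.contDiffAt one_add_one_eq_two.le
  obtain ⟨κ, hκ⟩ := exists_sq_norm_le_sub_lieForm hA1 hflux hK hpos
  obtain ⟨p, hp, hpE⟩ := hK.exists_forall_le' henergy.continuous.continuousOn
    fun x hx => hpos x hx _ (hdψ x hx)
  obtain ⟨C, hC⟩ := hK.exists_bound_of_continuousOn
    (((henergy.continuous_fderiv one_ne_zero).clm_apply hflux.continuous).sub
      (henergy.continuous.const_mul κ)).continuousOn
  obtain ⟨γ, hγ, hγp⟩ : ∃ γ > 0, C + 1 ≤ 2 * γ * p ^ 2 :=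
    ⟨(|C| + 1) / (2 * p ^ 2), by positivity, by field_simp; linarith [le_abs_self C]⟩
  obtain ⟨δ, hδ, hδK⟩ := hK.exists_forall_le' (f := fun x => γ * Real.exp (γ * ψ x))
    ((hψ.continuous.const_mul γ).rexp.const_mul γ).continuousOn (a := 0) fun x _ => by positivity
  have hρ : ContDiff ℝ 1 fun x => κ * (γ * Real.exp (γ * ψ x)) :=
    contDiff_const.mul (contDiff_const.mul (contDiff_const.mul (hψ2.of_le one_le_two)).exp)
  refine ⟨γ, hγ, hasCarlemanEstimate_of_isPseudoconvexWeight (c := min δ (δ ^ 3)) hA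
    (contDiff_const.mul hψ).exp hρ hK hsymm (by positivity) fun x hx => ?_⟩
  refine isPseudoconvexWeight_exp_mul (hsymm x hx) hA1.contDiffAt hψ2.contDiffAt hγ.le (hκ x hx) ?_
    ((min_le_left _ _).trans (hδK x hx))
    ((min_le_right _ _).trans (pow_le_pow_left₀ hδ.le (hδK x hx) 3))
  have hp2 : 2 * γ * p ^ 2 ≤ 2 * γ * energy A ψ x ^ 2 := by gcongr; exact hpE x hx
  have hCx : -C ≤ fderiv ℝ (energy A ψ) x (flux A ψ x) - κ * energy A ψ x :=
    neg_le_of_abs_le (hC x hx)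
  linarith

end Convexification

section ExponentialWeights

variable {X : Type*} [TopologicalSpace X] [MeasurableSpace X] [OpensMeasurableSpace X]
  {μ : Measure X} [IsFiniteMeasureOnCompacts μ] {φ f g : X → ℝ} {m C t : ℝ}

theorem integral_exp_mul_le (hφ : Continuous φ) (hf : Continuous f) (hfc : HasCompactSupport f)
    (hf0 : 0 ≤ f) (hg : Continuous g) (hgc : HasCompactSupport g) (hC : 0 ≤ C)
    (hgf : ∀ x, m < φ x → g x ≤ C * f x) (ht : 0 ≤ t) :
    ∫ x, Real.exp (2 * t * φ x) * g x ∂μ ≤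
      C * ∫ x, Real.exp (2 * t * φ x) * f x ∂μ + Real.exp (2 * t * m) * ∫ x, |g x| ∂μ := by
  have hexp : Continuous fun x => Real.exp (2 * t * φ x) := by fun_prop
  have hf_int : Integrable (fun x => Real.exp (2 * t * φ x) * f x) μ :=
    (hexp.mul hf).integrable_of_hasCompactSupport hfc.mul_left
  have hg_int : Integrable (fun x => Real.exp (2 * t * φ x) * g x) μ :=
    (hexp.mul hg).integrable_of_hasCompactSupport hgc.mul_left
  have habs_int : Integrable (fun x => |g x|) μ := (hg.integrable_of_hasCompactSupport hgc).abs
  rw [← integral_const_mul, ← integral_const_mul,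
    ← integral_add (hf_int.const_mul C) (habs_int.const_mul _)]
  refine integral_mono hg_int ((hf_int.const_mul C).add (habs_int.const_mul _)) fun x => ?_
  dsimp only [Pi.add_apply]
  rcases lt_or_ge m (φ x) with hx | hx
  · calc Real.exp (2 * t * φ x) * g x
      _ ≤ Real.exp (2 * t * φ x) * (C * f x) := by gcongr; exact hgf x hx
      _ = C * (Real.exp (2 * t * φ x) * f x) := by ring
      _ ≤ C * (Real.exp (2 * t * φ x) * f x) + Real.exp (2 * t * m) * |g x| :=
        le_add_of_nonneg_right (by positivity)
  · calc Real.exp (2 * t * φ x) * g x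
      _ ≤ Real.exp (2 * t * φ x) * |g x| := by gcongr; exact le_abs_self (g x)
      _ ≤ Real.exp (2 * t * m) * |g x| := by gcongr
      _ ≤ C * (Real.exp (2 * t * φ x) * f x) + Real.exp (2 * t * m) * |g x| :=
        le_add_of_nonneg_left (mul_nonneg hC (mul_nonneg (Real.exp_pos _).le (hf0 x)))

theorem mul_integral_posPart_le (hφ : Continuous φ) (hf : Continuous f)
    (hfc : HasCompactSupport f) (hf0 : 0 ≤ f) :
    2 * t * (∫ x, max (φ x - m) 0 * f x ∂μ) * Real.exp (2 * t * m) ≤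
      ∫ x, Real.exp (2 * t * φ x) * f x ∂μ := by
  have hpos_int : Integrable (fun x => max (φ x - m) 0 * f x) μ :=
    Continuous.integrable_of_hasCompactSupport (by fun_prop) hfc.mul_left
  have hexp_int : Integrable (fun x => Real.exp (2 * t * φ x) * f x) μ :=
    Continuous.integrable_of_hasCompactSupport (by fun_prop) hfc.mul_left
  have hexp (x : X) : 2 * t * max (φ x - m) 0 ≤ Real.exp (2 * t * (φ x - m)) := by
    rcases max_choice (φ x - m) 0 with h | h <;> rw [h]
    · exact (lt_add_one _).le.trans (Real.add_one_le_exp _)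
    · simpa only [mul_zero] using (Real.exp_pos _).le
  rw [mul_right_comm, ← integral_const_mul]
  refine integral_mono (hpos_int.const_mul _) hexp_int fun x => ?_
  calc 2 * t * Real.exp (2 * t * m) * (max (φ x - m) 0 * f x)
    _ = 2 * t * max (φ x - m) 0 * Real.exp (2 * t * m) * f x := by ring
    _ ≤ Real.exp (2 * t * (φ x - m)) * Real.exp (2 * t * m) * f x := by
      gcongr
      · exact hf0 x
      · exact hexp x
    _ = Real.exp (2 * t * φ x) * f x := by
      rw [← Real.exp_add]
      ring_nf

theorem eq_zero_of_exp_weighted_integral_le [μ.IsOpenPosMeasure] {κ : ℝ → ℝ} (hφ : Continuous φ)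
    (hf : Continuous f) (hfc : HasCompactSupport f) (hf0 : 0 ≤ f) (hg : Continuous g)
    (hgc : HasCompactSupport g) (hκ : Tendsto κ atTop atTop) (hC : 0 ≤ C)
    (hgf : ∀ x, m < φ x → g x ≤ C * f x)
    (hint : ∀ᶠ t in atTop, κ t * ∫ x, Real.exp (2 * t * φ x) * f x ∂μ ≤
      ∫ x, Real.exp (2 * t * φ x) * g x ∂μ) {x : X} (hx : m < φ x) : f x = 0 := by
  set G := ∫ x, |g x| ∂μ
  set I := ∫ x, max (φ x - m) 0 * f x ∂μ
  have hbound : ∀ᶠ t : ℝ in atTop, t * (2 * I) ≤ G := by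
    filter_upwards [hint, hκ.eventually_ge_atTop (C + 1), eventually_ge_atTop 0] with t hintt hκt ht
    have hupper := integral_exp_mul_le (μ := μ) hφ hf hfc hf0 hg hgc hC hgf ht
    have hlower := mul_integral_posPart_le (μ := μ) (m := m) (t := t) hφ hf hfc hf0
    have hJ : 0 ≤ ∫ x, Real.exp (2 * t * φ x) * f x ∂μ :=
      integral_nonneg fun x => mul_nonneg (Real.exp_pos _).le (hf0 x)
    have hκJ := mul_le_mul_of_nonneg_right hκt hJ
    refine le_of_mul_le_mul_right ?_ (Real.exp_pos (2 * t * m))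
    linarith
  have hnonneg : 0 ≤ fun x => max (φ x - m) 0 * f x :=
    fun x => mul_nonneg (le_max_right _ _) (hf0 x)
  by_contra hfx
  have hIpos : 0 < I := by
    refine Continuous.integral_pos_of_hasCompactSupport_nonneg_nonzero (x := x) (by fun_prop)
      hfc.mul_left hnonneg ?_
    exact mul_ne_zero (lt_max_of_lt_left (sub_pos.2 hx)).ne' hfx
  obtain ⟨t, htG, ht⟩ := (hbound.and
    ((tendsto_id.atTop_mul_const (by positivity : 0 < 2 * I)).eventually_gt_atTop G)).exists
  exact absurd ht htG.not_gt

end ExponentialWeights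

section Cutoff

variable {E F : Type*} [NormedAddCommGroup E] [NormedSpace ℝ E] [NormedAddCommGroup F]
  [NormedSpace ℝ F]

theorem contDiff_of_tsupport_subset {n : WithTop ℕ∞} {f : E → F} {U : Set E} (hU : IsOpen U)
    (hf : ContDiffOn ℝ n f U) (hfU : tsupport f ⊆ U) : ContDiff ℝ n f := by
  refine contDiff_iff_contDiffAt.2 fun x => ?_
  by_cases hx : x ∈ tsupport f
  · exact hf.contDiffAt (hU.mem_nhds (hfU hx))
  · exact contDiffAt_const.congr_of_eventuallyEq (notMem_tsupport_iff_eventuallyEq.1 hx)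

theorem contDiff_smul_of_tsupport_subset {n : WithTop ℕ∞} {χ : E → ℝ} {f : E → F} {U : Set E}
    (hU : IsOpen U) (hχ : ContDiff ℝ n χ) (hχU : tsupport χ ⊆ U) (hf : ContDiffOn ℝ n f U) :
    ContDiff ℝ n fun x => χ x • f x :=
  contDiff_of_tsupport_subset hU (hχ.contDiffOn.smul hf)
    ((tsupport_smul_subset_left χ f).trans hχU)

end Cutoff

section CarlemanUniqueness

variable {E : Type*} [NormedAddCommGroup E] [NormedSpace ℝ E] [FiniteDimensional ℝ E]
  [MeasurableSpace E] [BorelSpace E] {μ : Measure E} [μ.IsAddHaarMeasure] {ι : Type*} [Fintype ι]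
  {A : E → StrongDual ℝ E →L[ℝ] E} {φ : E → ℝ} {K : Set E} {C m : ℝ}

theorem HasCarlemanEstimate.sum (h : HasCarlemanEstimate A φ K μ) (hK : IsCompact K)
    (hA : ContDiff ℝ 1 A) (hφ : Continuous φ) :
    ∃ c > 0, ∀ᶠ t in atTop, ∀ w : ι → E → ℝ, (∀ i, ContDiff ℝ 2 (w i)) →
      (∀ i, tsupport (w i) ⊆ K) → c * t ^ 3 * ∫ x, Real.exp (2 * t * φ x) * ∑ i, w i x ^ 2 ∂μ ≤
        ∫ x, Real.exp (2 * t * φ x) * ∑ i, divForm A (w i) x ^ 2 ∂μ := by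
  obtain ⟨c, hc, hest⟩ := h
  refine ⟨c, hc, ?_⟩
  filter_upwards [hest] with t ht w hw hwK
  have hwc (i) : HasCompactSupport (w i) :=
    hK.of_isClosed_subset (isClosed_tsupport (w i)) (hwK i)
  have hint {g : ι → E → ℝ} (hg : ∀ i, Continuous (g i)) (hgc : ∀ i, HasCompactSupport (g i)) (i) :
      Integrable (fun x => Real.exp (2 * t * φ x) * g i x ^ 2) μ := by
    have := hg i
    refine Continuous.integrable_of_hasCompactSupport (by fun_prop) ?_
    exact ((hgc i).comp_left (g := (· ^ 2)) (zero_pow two_ne_zero)).mul_left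
  simp_rw [Finset.mul_sum]
  rw [integral_finsetSum _ fun i _ => hint (fun i => (hw i).continuous) hwc i,
    integral_finsetSum _ fun i _ => hint (fun i => continuous_divForm hA (hw i))
      (fun i => hasCompactSupport_divForm (hwc i)) i, Finset.mul_sum]
  exact Finset.sum_le_sum fun i _ => ht (w i) (hw i) (hwK i)

theorem HasCarlemanEstimate.eq_zero_of_sum_sq_divForm_le (h : HasCarlemanEstimate A φ K μ)
    (hK : IsCompact K) (hA : ContDiff ℝ 1 A) (hφ : Continuous φ) {w : ι → E → ℝ}
    (hw : ∀ i, ContDiff ℝ 2 (w i)) (hwK : ∀ i, tsupport (w i) ⊆ K) (hC : 0 ≤ C)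
    (hPw : ∀ x, m < φ x → ∑ i, divForm A (w i) x ^ 2 ≤ C * ∑ i, w i x ^ 2) {x : E}
    (hx : m < φ x) (i : ι) : w i x = 0 := by
  obtain ⟨c, hc, hest⟩ := h.sum (ι := ι) hK hA hφ
  have hPcont (i) : Continuous (divForm A (w i)) := continuous_divForm hA (hw i)
  have hwcont (i) : Continuous (w i) := (hw i).continuous
  have hκ : Tendsto (fun t : ℝ => c * t ^ 3) atTop atTop :=
    (tendsto_pow_atTop three_ne_zero).const_mul_atTop hc
  have hsum : ∑ i, w i x ^ 2 = 0 := by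
    refine eq_zero_of_exp_weighted_integral_le (μ := μ) (f := fun x => ∑ i, w i x ^ 2)
      (g := fun x => ∑ i, divForm A (w i) x ^ 2) hφ (by fun_prop)
      (HasCompactSupport.of_support_subset_isCompact hK ?_)
      (fun x => Finset.sum_nonneg fun i _ => sq_nonneg _) (by fun_prop)
      (HasCompactSupport.of_support_subset_isCompact hK ?_) hκ hC hPw
      (hest.mono fun t ht => ht w hw hwK) hx
    · refine Function.support_subset_iff'.2 fun y hy => Finset.sum_eq_zero fun i _ => ?_
      rw [image_eq_zero_of_notMem_tsupport fun hyw => hy (hwK i hyw), zero_pow two_ne_zero]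
    · refine Function.support_subset_iff'.2 fun y hy => Finset.sum_eq_zero fun i _ => ?_
      rw [divForm_eq_zero_of_notMem_tsupport fun hyw => hy (hwK i hyw), zero_pow two_ne_zero]
  exact pow_eq_zero_iff two_ne_zero |>.1 <|
    (Finset.sum_eq_zero_iff_of_nonneg fun i _ => sq_nonneg _).1 hsum i (Finset.mem_univ i)

end CarlemanUniqueness

section UniqueContinuation

variable {E : Type*} [NormedAddCommGroup E] [InnerProductSpace ℝ E] {x₀ : E}

theorem fderiv_neg_norm_sub_sq_ne_zero {x : E} (hx : x ≠ x₀) :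
    fderiv ℝ (fun y => -‖y - x₀‖ ^ 2) x ≠ 0 := by
  have h : HasFDerivAt (fun y => -‖y - x₀‖ ^ 2) (-(2 • innerSL ℝ (x - x₀))) x :=
    (((hasFDerivAt_id x).sub_const x₀).norm_sq).fun_neg
  rw [h.fderiv, neg_ne_zero, ← Nat.cast_smul_eq_nsmul ℝ]
  refine smul_ne_zero (by norm_num) fun h0 => hx (sub_eq_zero.1 (norm_eq_zero.1 ?_))
  rw [← innerSL_apply_norm (𝕜 := ℝ), h0, norm_zero]

variable [FiniteDimensional ℝ E] {ι : Type*} [Fintype ι] {A : E → StrongDual ℝ E →L[ℝ] E}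
  {u : ι → E → ℝ} {C R ρ : ℝ}

/-- The weight decreases with the distance to `x₀`, so that cutting `u` off near the boundary of the
ball only creates errors where the weight is small. -/
theorem eq_zero_on_ball_of_eq_zero_on_ball (hρ : 0 < ρ) (hA : ContDiff ℝ 2 A)
    (hsymm : ∀ x ∈ ball x₀ R, IsSymmForm (A x)) (hpos : ∀ x ∈ ball x₀ R, IsPosForm (A x))
    (hu : ∀ i, ContDiffOn ℝ 2 (u i) (ball x₀ R)) (hC : 0 ≤ C)
    (hPu : ∀ x ∈ ball x₀ R, ∑ i, divForm A (u i) x ^ 2 ≤ C * ∑ i, u i x ^ 2)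
    (hu0 : ∀ i, ∀ x ∈ ball x₀ ρ, u i x = 0) :
    ∀ i, ∀ x ∈ ball x₀ R, u i x = 0 := by
  borelize E
  intro i x hx
  obtain ⟨r, hxr, hrR⟩ := exists_between (mem_ball.1 hx)
  obtain ⟨r', hrr', hr'R⟩ := exists_between hrR
  let χ : ContDiffBump x₀ := ⟨r, r', dist_nonneg.trans_lt hxr, hrr'⟩
  have hχsupp : tsupport χ = closedBall x₀ r' := χ.tsupport_eq
  have hχball : closedBall x₀ r' ⊆ ball x₀ R := closedBall_subset_ball hr'R
  have hχone {y : E} (hy : y ∈ ball x₀ r) : χ =ᶠ[𝓝 y] 1 := χ.eventuallyEq_one_of_mem_ball hy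
  set K := closedBall x₀ r' \ ball x₀ ρ
  have hK : IsCompact K := (isCompact_closedBall x₀ r').diff isOpen_ball
  have hKR {y : E} (hy : y ∈ K) : y ∈ ball x₀ R := hχball hy.1
  obtain ⟨γ, hγ, hest⟩ := exists_hasCarlemanEstimate_exp_mul (μ := volume)
    (ψ := fun y => -‖y - x₀‖ ^ 2) hA
    ((contDiff_id.sub contDiff_const).norm_sq ℝ).neg hK
    (fun y hy => hsymm y (hKR hy)) (fun y hy => hpos y (hKR hy))
    fun y hy => fderiv_neg_norm_sub_sq_ne_zero fun h => hy.2 (h ▸ mem_ball_self hρ)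
  have hlevel {y : E} : Real.exp (γ * -r ^ 2) < Real.exp (γ * -‖y - x₀‖ ^ 2) ↔ y ∈ ball x₀ r := by
    rw [Real.exp_lt_exp, mul_lt_mul_iff_right₀ hγ, neg_lt_neg_iff, mem_ball_iff_norm,
      sq_lt_sq₀ (norm_nonneg _) χ.rIn_pos.le]
  have hwK (j) : tsupport (fun y => χ y • u j y) ⊆ K := by
    refine subset_sdiff.2 ⟨hχsupp ▸ tsupport_smul_subset_left χ (u j), ?_⟩
    refine disjoint_left.2 fun y hy hyρ => ?_
    refine (notMem_tsupport_iff_eventuallyEq.2 ?_) hy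
    filter_upwards [isOpen_ball.mem_nhds hyρ] with z hz
    simp [hu0 j z hz]
  have hw (j) : ContDiff ℝ 2 fun y => χ y • u j y :=
    contDiff_smul_of_tsupport_subset isOpen_ball χ.contDiff (hχsupp ▸ hχball) (hu j)
  have hwu {y : E} (hy : y ∈ ball x₀ r) (j) : (fun y => χ y • u j y) =ᶠ[𝓝 y] u j := by
    filter_upwards [hχone hy] with z hz
    rw [hz, Pi.one_apply, one_smul]
  have hwx := hest.eq_zero_of_sum_sq_divForm_le hK (hA.of_le one_le_two) (by fun_prop) hw hwK hC
    (fun y hy => ?_) (hlevel.2 (mem_ball.2 hxr)) i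
  · exact (hwu (mem_ball.2 hxr) i).eq_of_nhds.symm.trans hwx
  · have hyr := hlevel.1 hy
    simpa only [divForm_congr EventuallyEq.rfl (hwu hyr _), (hwu hyr _).eq_of_nhds] using
      hPu y (ball_subset_ball hrR.le hyr)

theorem eq_zero_on_ball_of_contDiffOn (hρ : 0 < ρ) (hA : ContDiffOn ℝ 2 A (ball x₀ R))
    (hsymm : ∀ x ∈ ball x₀ R, IsSymmForm (A x)) (hpos : ∀ x ∈ ball x₀ R, IsPosForm (A x))
    (hu : ∀ i, ContDiffOn ℝ 2 (u i) (ball x₀ R)) (hC : 0 ≤ C)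
    (hPu : ∀ x ∈ ball x₀ R, ∑ i, divForm A (u i) x ^ 2 ≤ C * ∑ i, u i x ^ 2)
    (hu0 : ∀ i, ∀ x ∈ ball x₀ ρ, u i x = 0) :
    ∀ i, ∀ x ∈ ball x₀ R, u i x = 0 := by
  intro i x hx
  obtain ⟨r, hxr, hrR⟩ := exists_between (mem_ball.1 hx)
  obtain ⟨r', hrr', hr'R⟩ := exists_between hrR
  let χ : ContDiffBump x₀ := ⟨r, r', dist_nonneg.trans_lt hxr, hrr'⟩
  have hχsupp : tsupport χ ⊆ ball x₀ R := χ.tsupport_eq ▸ closedBall_subset_ball hr'R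
  have hsub : ball x₀ r ⊆ ball x₀ R := ball_subset_ball hrR.le
  have hAχ {y : E} (hy : y ∈ ball x₀ r) : (fun z => χ z • A z) =ᶠ[𝓝 y] A := by
    filter_upwards [χ.eventuallyEq_one_of_mem_ball hy] with z hz
    rw [hz, Pi.one_apply, one_smul]
  refine eq_zero_on_ball_of_eq_zero_on_ball (A := fun y => χ y • A y) (R := r) hρ
    (contDiff_smul_of_tsupport_subset isOpen_ball χ.contDiff hχsupp hA) (fun y hy => ?_)
    (fun y hy => ?_) (fun j => (hu j).mono hsub) hC (fun y hy => ?_) hu0 i x hxr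
  · exact (hAχ hy).eq_of_nhds.symm ▸ hsymm y (hsub hy)
  · exact (hAχ hy).eq_of_nhds.symm ▸ hpos y (hsub hy)
  · simpa only [divForm_congr (hAχ hy) EventuallyEq.rfl] using hPu y (hsub hy)

theorem eqOn_zero_of_sum_sq_divForm_le {Ω : Set E} (hΩo : IsOpen Ω) (hΩc : IsPreconnected Ω)
    (hA : ContDiffOn ℝ 2 A Ω) (hsymm : ∀ x ∈ Ω, IsSymmForm (A x)) (hpos : ∀ x ∈ Ω, IsPosForm (A x))
    (hu : ∀ i, ContDiffOn ℝ 2 (u i) Ω) (hC : 0 ≤ C)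
    (hPu : ∀ x ∈ Ω, ∑ i, divForm A (u i) x ^ 2 ≤ C * ∑ i, u i x ^ 2) {x₀ : E} (hx₀ : x₀ ∈ Ω)
    (hu0 : ∀ i, u i =ᶠ[𝓝 x₀] 0) (i : ι) : EqOn (u i) 0 Ω := by
  set Z := {x | ∀ᶠ y in 𝓝 x, ∀ i, u i y = 0}
  suffices Ω ⊆ Z from fun x hx => (this hx).self_of_nhds i
  refine hΩc.subset_of_closure_inter_subset isOpen_setOfPred_eventually_nhds
    ⟨x₀, hx₀, eventually_all.2 hu0⟩ ?_
  rintro y ⟨hyZ, hyΩ⟩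
  obtain ⟨R, hR, hRΩ⟩ := Metric.isOpen_iff.1 hΩo y hyΩ
  obtain ⟨z, hzZ, hyz⟩ := Metric.mem_closure_iff.1 hyZ (R / 2) (half_pos hR)
  obtain ⟨ρ, hρ, hρz⟩ := Metric.eventually_nhds_iff_ball.1 hzZ
  have hsub : ball z (R / 2) ⊆ Ω := by
    refine (ball_subset_ball' ?_).trans hRΩ
    rw [dist_comm]
    linarith
  filter_upwards [isOpen_ball.mem_nhds (mem_ball.2 hyz)] with w hw i
  exact eq_zero_on_ball_of_contDiffOn hρ (hA.mono hsub) (fun x hx => hsymm x (hsub hx))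
    (fun x hx => hpos x (hsub hx)) (fun i => (hu i).mono hsub) hC (fun x hx => hPu x (hsub hx))
    (fun i x hx => hρz x hx i) i w hw

end UniqueContinuation

section MaximumPrinciple

theorem tsupport_indicator_comp_subset {X : Type*} [TopologicalSpace X] {Ω : Set X} {u : X → ℝ}
    {θ : ℝ → ℝ} {M M' : ℝ} (hΩo : IsOpen Ω) (hu : ContinuousOn u (closure Ω))
    (hM : ∀ x ∈ frontier Ω, u x ≤ M) (hMM' : M < M') (hθ : ∀ s ≤ M', θ s = 0) :
    tsupport (Ω.indicator fun x => θ (u x)) ⊆ Ω := by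
  have hclosed : IsClosed (closure Ω ∩ u ⁻¹' Ici M') :=
    hu.preimage_isClosed_of_isClosed isClosed_closure isClosed_Ici
  have hsupp : Function.support (Ω.indicator fun x => θ (u x)) ⊆ closure Ω ∩ u ⁻¹' Ici M' := by
    intro x hx
    obtain ⟨hxΩ, hθx⟩ := indicator_apply_ne_zero.1 hx
    exact ⟨subset_closure hxΩ, le_of_not_ge fun h => hθx (hθ _ h)⟩
  intro x hx
  obtain ⟨hxcl, hxM'⟩ := closure_minimal hsupp hclosed hx
  by_contra hxΩ
  exact (hM x (hΩo.frontier_eq ▸ ⟨hxcl, hxΩ⟩)).not_gt (hMM'.trans_le hxM')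

variable {E : Type*} [NormedAddCommGroup E] [NormedSpace ℝ E] {Ω : Set E} {u : E → ℝ} {θ : ℝ → ℝ}

theorem eq_zero_of_fderiv_eq_zero_of_hasCompactSupport [Nontrivial E] {f : E → ℝ}
    (hf : Differentiable ℝ f) (hc : HasCompactSupport f) (hf' : ∀ x, fderiv ℝ f x = 0) (x : E) :
    f x = 0 := by
  obtain ⟨y, hy⟩ : ∃ y, y ∉ tsupport f := by
    by_contra! h
    exact hc.ne_univ (eq_univ_of_forall h)
  rw [is_const_of_fderiv_eq_zero hf hf' x y, image_eq_zero_of_notMem_tsupport hy]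

theorem contDiff_indicator_comp (hΩo : IsOpen Ω) (hu : ContDiffOn ℝ 1 u Ω) (hθ : ContDiff ℝ 1 θ)
    (hsupp : tsupport (Ω.indicator fun x => θ (u x)) ⊆ Ω) :
    ContDiff ℝ 1 (Ω.indicator fun x => θ (u x)) :=
  contDiff_of_tsupport_subset hΩo
    ((hθ.comp_contDiffOn hu).congr fun _ hx => indicator_of_mem hx _) hsupp

variable [FiniteDimensional ℝ E] {A : E → StrongDual ℝ E →L[ℝ] E} {M : ℝ}

theorem divergence_eq_zero_of_nonneg {F : E → E} (hF : ContDiff ℝ 1 F) (hc : HasCompactSupport F)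
    (h0 : 0 ≤ divergence F) (x : E) : divergence F x = 0 := by
  borelize E
  by_contra hx
  exact ((continuous_divergence hF).integral_pos_of_hasCompactSupport_nonneg_nonzero
    (μ := Measure.addHaar) (hasCompactSupport_divergence hc) h0 hx).ne'
    (integral_divergence_eq_zero _ hF hc)

/-- Testing the equation against `θ ∘ u` bounds the integral of `θ' (u) ⟨A ∇u, ∇u⟩` by zero. -/
theorem deriv_mul_energy_eq_zero (hΩo : IsOpen Ω) (hΩb : Bornology.IsBounded Ω)
    (hA : ContDiffOn ℝ 1 A Ω) (hpos : ∀ x ∈ Ω, IsPosForm (A x)) (hu : ContDiffOn ℝ 2 u Ω)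
    (hPu : ∀ x ∈ Ω, 0 ≤ divForm A u x) (hθ : ContDiff ℝ 1 θ) (hθm : Monotone θ) (hθ0 : 0 ≤ θ)
    (hsupp : tsupport (Ω.indicator fun x => θ (u x)) ⊆ Ω) {x : E} (hx : x ∈ Ω) :
    deriv θ (u x) * energy A u x = 0 := by
  set T := Ω.indicator fun y => θ (u y)
  have hAx {y : E} (hy : y ∈ Ω) : ContDiffAt ℝ 1 A y := hA.contDiffAt (hΩo.mem_nhds hy)
  have hux {y : E} (hy : y ∈ Ω) : ContDiffAt ℝ 2 u y := hu.contDiffAt (hΩo.mem_nhds hy)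
  have hθx (s : ℝ) : DifferentiableAt ℝ θ s := hθ.differentiable one_ne_zero s
  have hTu {y : E} (hy : y ∈ Ω) : T =ᶠ[𝓝 y] fun z => θ (u z) := by
    filter_upwards [hΩo.mem_nhds hy] with z hz using indicator_of_mem hz _
  have hTc : HasCompactSupport T :=
    hΩb.isCompact_closure.of_isClosed_subset (isClosed_tsupport T) (hsupp.trans subset_closure)
  have hF : ContDiff ℝ 1 fun y => T y • flux A u y :=
    contDiff_smul_of_tsupport_subset hΩo
      (contDiff_indicator_comp hΩo (hu.of_le one_le_two) hθ hsupp) hsupp fun y hy =>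
        (contDiffAt_flux (hAx hy) (hux hy) one_add_one_eq_two.le).contDiffWithinAt
  have hdiv {y : E} (hy : y ∈ Ω) : divergence (fun z => T z • flux A u z) y =
      θ (u y) * divForm A u y + deriv θ (u y) * energy A u y := by
    rw [← divergence_comp_smul_flux (hθx _) (hAx hy) (hux hy)]
    exact divergence_congr ((hTu hy).smul EventuallyEq.rfl)
  have hmass {y : E} (hy : y ∈ Ω) : 0 ≤ θ (u y) * divForm A u y := mul_nonneg (hθ0 _) (hPu y hy)
  have henergy {y : E} (hy : y ∈ Ω) : 0 ≤ deriv θ (u y) * energy A u y :=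
    mul_nonneg hθm.deriv_nonneg (energy_nonneg (hpos y hy))
  have hdiv0 := divergence_eq_zero_of_nonneg hF hTc.smul_right fun y => by
    by_cases hy : y ∈ Ω
    · exact (add_nonneg (hmass hy) (henergy hy)).trans_eq (hdiv hy).symm
    · exact (divergence_eq_zero_of_notMem_tsupport fun h =>
        hy (hsupp (tsupport_smul_subset_left T _ h))).ge
  exact ((add_eq_zero_iff_of_nonneg (hmass hx) (henergy hx)).1
    ((hdiv hx).symm.trans (hdiv0 x))).2

theorem fderiv_indicator_comp_eq_zero (hΩo : IsOpen Ω) (hΩb : Bornology.IsBounded Ω)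
    (hA : ContDiffOn ℝ 1 A Ω) (hpos : ∀ x ∈ Ω, IsPosForm (A x)) (hu : ContDiffOn ℝ 2 u Ω)
    (hPu : ∀ x ∈ Ω, 0 ≤ divForm A u x) (hθ : ContDiff ℝ 1 θ) (hθm : Monotone θ) (hθ0 : 0 ≤ θ)
    (hsupp : tsupport (Ω.indicator fun x => θ (u x)) ⊆ Ω) (x : E) :
    fderiv ℝ (Ω.indicator fun y => θ (u y)) x = 0 := by
  by_cases hx : x ∈ Ω
  · have hTu : (Ω.indicator fun y => θ (u y)) =ᶠ[𝓝 x] fun y => θ (u y) := by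
      filter_upwards [hΩo.mem_nhds hx] with y hy using indicator_of_mem hy _
    have hux : DifferentiableAt ℝ u x :=
      (hu.contDiffAt (hΩo.mem_nhds hx)).differentiableAt two_ne_zero
    have hdT : fderiv ℝ (Ω.indicator fun y => θ (u y)) x = deriv θ (u x) • fderiv ℝ u x :=
      hTu.fderiv_eq.trans ((hθ.differentiable one_ne_zero _).hasDerivAt.comp_hasFDerivAt x
        hux.hasFDerivAt).fderiv
    have hzero : deriv θ (u x) * energy A u x = 0 :=
      deriv_mul_energy_eq_zero hΩo hΩb hA hpos hu hPu hθ hθm hθ0 hsupp hx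
    rw [hdT, smul_eq_zero]
    exact (mul_eq_zero.1 hzero).imp_right (fderiv_eq_zero_of_energy_eq_zero (hpos x hx))
  · exact fderiv_of_notMem_tsupport ℝ fun h => hx (hsupp h)

theorem le_of_divForm_nonneg [Nontrivial E] (hΩo : IsOpen Ω) (hΩb : Bornology.IsBounded Ω)
    (hA : ContDiffOn ℝ 1 A Ω) (hpos : ∀ x ∈ Ω, IsPosForm (A x)) (hu : ContDiffOn ℝ 2 u Ω)
    (huc : ContinuousOn u (closure Ω)) (hPu : ∀ x ∈ Ω, 0 ≤ divForm A u x)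
    (hM : ∀ x ∈ frontier Ω, u x ≤ M) {x : E} (hx : x ∈ Ω) : u x ≤ M := by
  refine le_of_forall_gt_imp_ge_of_dense fun M' hMM' => ?_
  set θ : ℝ → ℝ := fun s => Real.smoothTransition (s - M')
  have hθ : ContDiff ℝ 1 θ := Real.smoothTransition.contDiff.comp (contDiff_id.sub contDiff_const)
  have hθm : Monotone θ := fun s t h => Real.smoothTransition.monotone (sub_le_sub_right h M')
  have hsupp : tsupport (Ω.indicator fun x => θ (u x)) ⊆ Ω :=
    tsupport_indicator_comp_subset hΩo huc hM hMM' fun s hs =>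
      Real.smoothTransition.zero_of_nonpos (sub_nonpos.2 hs)
  have hT : ContDiff ℝ 1 (Ω.indicator fun x => θ (u x)) :=
    contDiff_indicator_comp hΩo (hu.of_le one_le_two) hθ hsupp
  have hTx : θ (u x) = 0 := by
    rw [← indicator_of_mem hx fun y => θ (u y)]
    exact eq_zero_of_fderiv_eq_zero_of_hasCompactSupport (hT.differentiable one_ne_zero)
      (hΩb.isCompact_closure.of_isClosed_subset (isClosed_tsupport _) (hsupp.trans subset_closure))
      (fderiv_indicator_comp_eq_zero hΩo hΩb hA hpos hu hPu hθ hθm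
        (fun s => Real.smoothTransition.nonneg _) hsupp) x
  exact sub_nonpos.1 (Real.smoothTransition.zero_iff_nonpos.1 hTx)

theorem eqOn_zero_of_divForm_eq_zero [Nontrivial E] (hΩo : IsOpen Ω) (hΩb : Bornology.IsBounded Ω)
    (hA : ContDiffOn ℝ 1 A Ω) (hpos : ∀ x ∈ Ω, IsPosForm (A x)) (hu : ContDiffOn ℝ 2 u Ω)
    (huc : ContinuousOn u (closure Ω)) (hPu : ∀ x ∈ Ω, divForm A u x = 0)
    (hu0 : ∀ x ∈ frontier Ω, u x = 0) : EqOn u 0 Ω := by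
  intro x hx
  refine le_antisymm (le_of_divForm_nonneg hΩo hΩb hA hpos hu huc (fun y hy => (hPu y hy).ge)
    (fun y hy => (hu0 y hy).le) hx) ?_
  have hneg : (-1) * u x ≤ 0 := by
    refine le_of_divForm_nonneg (u := fun y => (-1) * u y) hΩo hΩb hA hpos
      (contDiffOn_const.mul hu) (continuousOn_const.mul huc) (fun y hy => ?_) (fun y hy => ?_) hx
    · rw [divForm_const_mul, hPu y hy, mul_zero]
    · rw [hu0 y hy, mul_zero]
  simpa using hneg

end MaximumPrinciple

section Coordinates

variable {E ι : Type*} [NormedAddCommGroup E] [NormedSpace ℝ E] [Fintype ι]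
  {a : ι → ι → E → ℝ} {v : E → ℝ} {x : E}

/-- The field of operators from covectors to vectors with coefficient matrix `a` in the basis `b`
and its dual basis. -/
noncomputable def coeffOperator (b : Module.Basis ι ℝ E) (a : ι → ι → E → ℝ) (x : E) :
    StrongDual ℝ E →L[ℝ] E :=
  ∑ i, ∑ j, (ContinuousLinearMap.apply ℝ ℝ (b i)).smulRight (a i j x • b j)

variable (b : Module.Basis ι ℝ E)

theorem coeffOperator_apply (α : StrongDual ℝ E) :
    coeffOperator b a x α = ∑ i, ∑ j, (a i j x * α (b i)) • b j := by
  simp [coeffOperator, smul_smul, mul_comm]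

theorem apply_coeffOperator (α β : StrongDual ℝ E) :
    β (coeffOperator b a x α) = ∑ i, ∑ j, a i j x * α (b i) * β (b j) := by
  simp [coeffOperator_apply]

theorem isSymmForm_coeffOperator (h : ∀ i j, a i j x = a j i x) :
    IsSymmForm (coeffOperator b a x) := by
  intro α β
  rw [apply_coeffOperator, apply_coeffOperator, Finset.sum_comm]
  refine Finset.sum_congr rfl fun i _ => Finset.sum_congr rfl fun j _ => ?_
  rw [h j i]
  ring

theorem isPosForm_coeffOperator (h : ∀ ξ : ι → ℝ, ξ ≠ 0 → 0 < ∑ i, ∑ j, a i j x * ξ i * ξ j) :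
    IsPosForm (coeffOperator b a x) := by
  intro α hα
  rw [apply_coeffOperator]
  refine h (fun i => α (b i)) fun h0 => hα ?_
  exact ContinuousLinearMap.coe_injective (b.ext fun i => congrFun h0 i)

theorem contDiffAt_coeffOperator {m : WithTop ℕ∞} (h : ∀ i j, ContDiffAt ℝ m (a i j) x) :
    ContDiffAt ℝ m (coeffOperator b a) x :=
  ContDiffAt.sum fun i _ => ContDiffAt.sum fun j _ =>
    contDiffAt_const.smulRight ((h i j).smul contDiffAt_const)

theorem contDiffOn_coeffOperator {m : WithTop ℕ∞} {s : Set E}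
    (h : ∀ i j, ContDiffOn ℝ m (a i j) s) :
    ContDiffOn ℝ m (coeffOperator b a) s :=
  ContDiffOn.sum fun i _ => ContDiffOn.sum fun j _ =>
    contDiffOn_const.smulRight ((h i j).smul contDiffOn_const)

theorem coord_flux_coeffOperator (j : ι) :
    b.coord j (flux (coeffOperator b a) v x) = ∑ i, a i j x * fderiv ℝ v x (b i) := by
  classical
  simp [flux, coeffOperator_apply, Finsupp.single_apply]

theorem divForm_coeffOperator [FiniteDimensional ℝ E] (ha : ∀ i j, ContDiffAt ℝ 1 (a i j) x)
    (hv : ContDiffAt ℝ 2 v x) :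
    divForm (coeffOperator b a) v x =
      ∑ j, fderiv ℝ (fun y => ∑ i, a i j y * fderiv ℝ v y (b i)) x (b j) := by
  have hflux : ContDiffAt ℝ 1 (flux (coeffOperator b a) v) x :=
    contDiffAt_flux (contDiffAt_coeffOperator b ha) hv one_add_one_eq_two.le
  simp_rw [divForm, divergence_eq_sum_basis b (hflux.differentiableAt one_ne_zero),
    coord_flux_coeffOperator]

end Coordinates

section Complex

variable {n : ℕ} {a : Fin n → Fin n → EuclideanSpace ℝ (Fin n) → ℝ}
  {u : EuclideanSpace ℝ (Fin n) → ℂ} {x : EuclideanSpace ℝ (Fin n)}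

theorem map_pd (L : StrongDual ℝ ℂ) (hu : DifferentiableAt ℝ u x) (i : Fin n) :
    L (pd n i u x) = fderiv ℝ (fun y => L (u y)) x (EuclideanSpace.single i 1) :=
  congrArg (· (EuclideanSpace.single i 1)) (L.hasFDerivAt.comp x hu.hasFDerivAt).fderiv.symm

theorem map_lapA_eq_divForm (L : StrongDual ℝ ℂ) (ha : ∀ i j, ContDiffAt ℝ 1 (a i j) x)
    (hu : ContDiffAt ℝ 2 u x) :
    L (lapA n a u x) = divForm (coeffOperator (EuclideanSpace.basisFun (Fin n) ℝ).toBasis a)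
      (fun y => L (u y)) x := by
  have hpd (i) : DifferentiableAt ℝ (pd n i u) x :=
    ((hu.fderiv_right (m := 1) one_add_one_eq_two.le).differentiableAt one_ne_zero).clm_apply
      (differentiableAt_const _)
  have hflux (j) : DifferentiableAt ℝ (fun y => ∑ i, (a i j y : ℂ) * pd n i u y) x :=
    DifferentiableAt.fun_sum fun i _ => (Complex.ofRealCLM.differentiableAt.comp x
      ((ha i j).differentiableAt one_ne_zero)).mul (hpd i)
  have hcoord (j) : (fun y => L (∑ i, (a i j y : ℂ) * pd n i u y)) =ᶠ[𝓝 x]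
      fun y => ∑ i, a i j y * fderiv ℝ (fun z => L (u z)) y (EuclideanSpace.single i 1) := by
    filter_upwards [hu.eventually (by simp)] with y hy
    simp_rw [← Complex.real_smul, map_sum, map_smul, smul_eq_mul,
      map_pd L (hy.differentiableAt two_ne_zero)]
  have hLu : ContDiffAt ℝ 2 (fun y => L (u y)) x := L.contDiff.contDiffAt.comp x hu
  rw [divForm_coeffOperator _ ha hLu, lapA, map_sum]
  refine Finset.sum_congr rfl fun j _ => ?_
  rw [map_pd L (hflux j), (hcoord j).fderiv_eq]
  simp_rw [OrthonormalBasis.coe_toBasis, EuclideanSpace.basisFun_apply]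

end Complex

section Elliptic

variable {n : ℕ} {Ω : Set (EuclideanSpace ℝ (Fin n))}
  {a : Fin n → Fin n → EuclideanSpace ℝ (Fin n) → ℝ} {u : EuclideanSpace ℝ (Fin n) → ℂ}

theorem eqOn_zero_of_lapA_eq_zero (hn : 1 ≤ n) (hΩo : IsOpen Ω) (hΩb : Bornology.IsBounded Ω)
    (ha : ∀ i j, ContDiffOn ℝ 1 (a i j) Ω)
    (hpos : ∀ x ∈ Ω, ∀ ξ : Fin n → ℝ, ξ ≠ 0 → 0 < ∑ i, ∑ j, a i j x * ξ i * ξ j)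
    (hu : ContDiffOn ℝ 2 u Ω) (huc : ContinuousOn u (closure Ω))
    (hpde : ∀ x ∈ Ω, lapA n a u x = 0) (hdir : ∀ x ∈ frontier Ω, u x = 0) : EqOn u 0 Ω := by
  have : Nonempty (Fin n) := Fin.pos_iff_nonempty.1 hn
  have hpart (L : StrongDual ℝ ℂ) : EqOn (fun x => L (u x)) 0 Ω := by
    refine eqOn_zero_of_divForm_eq_zero hΩo hΩb
      (contDiffOn_coeffOperator (EuclideanSpace.basisFun (Fin n) ℝ).toBasis ha)
      (fun x hx => isPosForm_coeffOperator _ (hpos x hx)) (L.contDiff.comp_contDiffOn hu)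
      (L.continuous.comp_continuousOn huc) (fun x hx => ?_) fun x hx => ?_
    · rw [← map_lapA_eq_divForm L (fun i j => (ha i j).contDiffAt (hΩo.mem_nhds hx))
        (hu.contDiffAt (hΩo.mem_nhds hx)), hpde x hx, map_zero]
    · rw [hdir x hx, map_zero]
  exact fun x hx => Complex.ext (hpart Complex.reCLM hx) (hpart Complex.imCLM hx)

theorem eqOn_zero_of_lapA_eq_mul (hΩo : IsOpen Ω) (hΩc : IsPreconnected Ω)
    (ha : ∀ i j, ContDiffOn ℝ 2 (a i j) Ω) (hsymm : ∀ x ∈ Ω, ∀ i j, a i j x = a j i x)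
    (hpos : ∀ x ∈ Ω, ∀ ξ : Fin n → ℝ, ξ ≠ 0 → 0 < ∑ i, ∑ j, a i j x * ξ i * ξ j)
    (hu : ContDiffOn ℝ 2 u Ω) {κ : ℂ} (hpde : ∀ x ∈ Ω, lapA n a u x = κ * u x)
    {x₀ : EuclideanSpace ℝ (Fin n)} (hx₀ : x₀ ∈ Ω) (hu0 : u =ᶠ[𝓝 x₀] 0) : EqOn u 0 Ω := by
  let L : Fin 2 → StrongDual ℝ ℂ := ![Complex.reCLM, Complex.imCLM]
  have hnorm (z : ℂ) : ∑ k, L k z ^ 2 = ‖z‖ ^ 2 := by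
    rw [Fin.sum_univ_two, Complex.sq_norm, Complex.normSq_apply, ← sq, ← sq]
    rfl
  have hpart (k) : EqOn (fun x => L k (u x)) 0 Ω := by
    refine eqOn_zero_of_sum_sq_divForm_le (u := fun k x => L k (u x)) hΩo hΩc
      (contDiffOn_coeffOperator (EuclideanSpace.basisFun (Fin n) ℝ).toBasis ha)
      (fun x hx => isSymmForm_coeffOperator _ (hsymm x hx))
      (fun x hx => isPosForm_coeffOperator _ (hpos x hx))
      (fun k => (L k).contDiff.comp_contDiffOn hu) (sq_nonneg ‖κ‖)
      (fun x hx => le_of_eq ?_) hx₀ (fun k => ?_) k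
    · simp_rw [← map_lapA_eq_divForm _ (fun i j =>
        ((ha i j).contDiffAt (hΩo.mem_nhds hx)).of_le one_le_two)
        (hu.contDiffAt (hΩo.mem_nhds hx)), hpde x hx, hnorm, norm_mul, mul_pow]
    · filter_upwards [hu0] with x hx
      rw [hx, Pi.zero_apply, map_zero, Pi.zero_apply]
  exact fun x hx => Complex.ext (hpart 0 hx) (hpart 1 hx)

end Elliptic

theorem elliptic_unique_continuation_general {n : ℕ} (hn : 1 ≤ n)
    {Ω ω : Set (EuclideanSpace ℝ (Fin n))}
    (hΩo : IsOpen Ω) (hΩb : Bornology.IsBounded Ω) (hΩc : IsPreconnected Ω)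
    (hωne : ω.Nonempty) (hωo : IsOpen ω) (hωΩ : ω ⊆ Ω)
    {a : Fin n → Fin n → EuclideanSpace ℝ (Fin n) → ℝ} (ha : ∀ i j, ContDiffOn ℝ 2 (a i j) Ω)
    (hsymm : ∀ x ∈ Ω, ∀ i j, a i j x = a j i x)
    (hpos : ∀ x ∈ Ω, ∀ ξ : Fin n → ℝ, ξ ≠ 0 → 0 < ∑ i, ∑ j, a i j x * ξ i * ξ j)
    {lam : ℂ} {u : EuclideanSpace ℝ (Fin n) → ℂ}
    (hu : ContDiffOn ℝ 2 u Ω) (huc : ContinuousOn u (closure Ω))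
    (hpde : ∀ x ∈ Ω, lapA n a u x = lam ^ 2 * u x) (hdir : ∀ x ∈ frontier Ω, u x = 0)
    (hvan : ∀ x ∈ ω, lam * u x = 0) :
    EqOn u 0 Ω := by
  rcases eq_or_ne lam 0 with hlam | hlam
  · refine eqOn_zero_of_lapA_eq_zero hn hΩo hΩb (fun i j => (ha i j).of_le one_le_two) hpos hu huc
      (fun x hx => ?_) hdir
    rw [hpde x hx, hlam, zero_pow two_ne_zero, zero_mul]
  · obtain ⟨x₀, hx₀⟩ := hωne
    have hu0 : u =ᶠ[𝓝 x₀] 0 := by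
      filter_upwards [hωo.mem_nhds hx₀] with x hx
      exact (mul_eq_zero.1 (hvan x hx)).resolve_left hlam
    exact eqOn_zero_of_lapA_eq_mul hΩo hΩc ha hsymm hpos hu hpde (hωΩ hx₀) hu0

theorem elliptic_unique_continuation (n : ℕ) (hn : 1 ≤ n)
    (Ω ω : Set (EuclideanSpace ℝ (Fin n)))
    (hΩo : IsOpen Ω) (hΩb : Bornology.IsBounded Ω) (hΩc : IsConnected Ω)
    (hΩs : SmoothBoundary Ω)
    (hωne : ω.Nonempty) (hωo : IsOpen ω) (hωΩ : ω ⊆ Ω)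
    (a : Fin n → Fin n → EuclideanSpace ℝ (Fin n) → ℝ)
    (ha_smooth : ∀ i j, ContDiff ℝ (⊤ : ℕ∞) (a i j))
    (ha_symm : ∀ i j x, a i j x = a j i x)
    -- uniform positive definiteness on a neighborhood of closure(Ω)
    (ha_pos : ∃ V : Set (EuclideanSpace ℝ (Fin n)), IsOpen V ∧ closure Ω ⊆ V ∧
      ∃ c : ℝ, 0 < c ∧ ∀ x ∈ V, ∀ ξ : Fin n → ℝ,
        c * ∑ i, (ξ i) ^ 2 ≤ ∑ i, ∑ j, a i j x * ξ i * ξ j)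
    (lam : ℂ) (u : EuclideanSpace ℝ (Fin n) → ℂ)
    -- u is smooth on a neighborhood of closure(Ω)
    (hu : ∃ V : Set (EuclideanSpace ℝ (Fin n)), IsOpen V ∧ closure Ω ⊆ V ∧
      ContDiffOn ℝ (⊤ : ℕ∞) u V)
    -- Δ_A u = λ² u on Ω
    (hpde : ∀ x ∈ Ω, lapA n a u x = lam ^ 2 * u x)
    -- u = 0 on ∂Ω
    (hdir : ∀ x ∈ frontier Ω, u x = 0)
    -- λ·u = 0 on ω
    (hvan : ∀ x ∈ ω, lam * u x = 0) :
    ∀ x ∈ Ω, u x = 0 := by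
  obtain ⟨V, -, hΩV, c, hc, hpos⟩ := ha_pos
  obtain ⟨W, -, hΩW, hu⟩ := hu
  have htwo : (2 : WithTop ℕ∞) ≤ (⊤ : ℕ∞) := WithTop.coe_le_coe.2 le_top
  have hpos' (x) (hx : x ∈ Ω) (ξ : Fin n → ℝ) (hξ : ξ ≠ 0) :
      0 < ∑ i, ∑ j, a i j x * ξ i * ξ j := by
    obtain ⟨i, hi⟩ := Function.ne_iff.1 hξ
    have hsum : 0 < ∑ i, ξ i ^ 2 :=
      Finset.sum_pos' (fun i _ => sq_nonneg _) ⟨i, Finset.mem_univ i, sq_pos_of_ne_zero hi⟩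
    exact (mul_pos hc hsum).trans_le (hpos x (hΩV (subset_closure hx)) ξ)
  exact elliptic_unique_continuation_general hn hΩo hΩb hΩc.isPreconnected hωne hωo hωΩ
    (fun i j => ((ha_smooth i j).of_le htwo).contDiffOn) (fun x _ i j => ha_symm i j x)
    hpos' ((hu.of_le htwo).mono (subset_closure.trans hΩW)) (hu.continuousOn.mono hΩW)
    hpde hdir hvan
end
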